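/- Let K be a field containing ℚ(√−7), and let G be an unsolvable transitive subgroup of S_8 with G ≠ A_8, G ≠ S_8, and G not isomorphic to PGL(2,7). Then the fixed field K(x_1,…,x_8)^G is K-rational. -/

import Mathlib

noncomputable section

/-- The rational function field `K(x_i : i ∈ I)` over `K`, realized as the fraction field
of the multivariate polynomial ring. -/
abbrev RFF (K : Type) [Field K] (I : Type) := FractionRing (MvPolynomial I K)

/-- The image of the variable `x_i` in the rational function field `K(x_i : i ∈ I)`. -/
noncomputable def Xvar (K : Type) [Field K] (I : Type) (i : I) : RFF K I :=
  algebraMap (MvPolynomial I K) (RFF K I) (MvPolynomial.X i)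

/-- Permutations of the variables as `K`-algebra automorphisms of the polynomial ring. -/
def renameHom (K : Type) [Field K] (I : Type) :
    Equiv.Perm I →* (MvPolynomial I K ≃ₐ[K] MvPolynomial I K) where
  toFun σ := MvPolynomial.renameEquiv K σ
  map_one' := MvPolynomial.renameEquiv_refl K
  map_mul' σ τ := (MvPolynomial.renameEquiv_trans K τ σ).symm

/-- The action of permutations of the variables on `K(x_i : i ∈ I)` by `K`-automorphisms,
determined by `σ(x_i) = x_{σ(i)}`. -/
noncomputable def permHom (K : Type) [Field K] (I : Type) :
    Equiv.Perm I →* (RFF K I ≃ₐ[K] RFF K I) :=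
  (IsFractionRing.fieldEquivOfAlgEquivHom K (RFF K I)).comp (renameHom K I)

/-- The fixed field `K(x_i : i ∈ I)^G` of a group `G` of permutations of the variables. -/
noncomputable def fixedSub (K : Type) [Field K] (I : Type) (G : Subgroup (Equiv.Perm I)) :
    IntermediateField K (RFF K I) :=
  IntermediateField.fixedField (G.map (permHom K I))

/-- An extension `L/K` is `K`-rational if it is purely transcendental over `K`, i.e. generated
by finitely many algebraically independent elements. -/
def IsRatExt (K : Type) [Field K] (L : Type*) [Field L] [Algebra K L] : Prop :=
  ∃ (n : ℕ) (t : Fin n → L), AlgebraicIndependent K t ∧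
    IntermediateField.adjoin K (Set.range t) = ⊤

/-- The projective general linear group `PGL(2,7)`, the quotient of `GL(2,𝔽₇)` by its center. -/
abbrev PGL27 : Type :=
  Matrix.GeneralLinearGroup (Fin 2) (ZMod 7) ⧸
    Subgroup.center (Matrix.GeneralLinearGroup (Fin 2) (ZMod 7))


set_option linter.style.haveILetI false

section fieldGeneral
variable {K L : Type} [Field K] [Field L] [Algebra K L]

open Classical in
/-- Dual families for a finite group acting faithfully on an invariant subfield. -/
theorem exists_dual_family {Γ : Type} [Group Γ] [Finite Γ] (φ : Γ →* (L ≃ₐ[K] L))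
    (F : IntermediateField K L) (hst : ∀ g, ∀ x ∈ F, φ g x ∈ F)
    (hf : ∀ g, (∀ x ∈ F, φ g x = x) → g = 1) :
    ∃ (n : ℕ) (l m : Fin n → L), (∀ i, l i ∈ F) ∧ (∀ i, m i ∈ F) ∧
      ∀ g, ∑ i, m i * φ g (l i) = if g = 1 then 1 else 0 := by
  classical
  haveI := Fintype.ofFinite Γ
  let ψ : Γ → (F →* F) := fun g =>
    { toFun := fun x => ⟨φ g x, hst g x x.2⟩
      map_one' := by ext; simp
      map_mul' := by intro x y; ext; simp }
  have hinj : Function.Injective ψ := by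
    intro g h hgh
    have h2 : g⁻¹ * h = 1 := by
      apply hf
      intro x hx
      have := DFunLike.congr_fun hgh ⟨x, hx⟩
      have h3 : φ g x = φ h x := congrArg Subtype.val this
      rw [map_mul, AlgEquiv.mul_apply, ← h3, ← AlgEquiv.mul_apply, ← map_mul]
      simp
    exact (inv_mul_eq_one.mp h2)
  have hli : LinearIndependent F (fun g : Γ => (fun x : F => ψ g x)) :=
    (linearIndependent_monoidHom F F).comp ψ hinj
  -- span of evaluation vectors
  let S : Submodule F (Γ → F) := Submodule.span F (Set.range fun x : F => (fun g : Γ => ψ g x))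
  have hS : S = ⊤ := by
    by_contra hne
    obtain ⟨f, hf0, hfS⟩ := Submodule.exists_le_ker_of_lt_top S (lt_top_iff_ne_top.mpr hne)
    apply hf0
    have h1 : ∀ v, f v = ∑ g, f (Pi.single g 1) * v g := by
      intro v
      conv_lhs => rw [← Finset.univ_sum_single v]
      rw [map_sum]
      refine Finset.sum_congr rfl fun g _ => ?_
      have : (Pi.single g (v g) : Γ → F) = v g • Pi.single g 1 := by
        rw [← Pi.single_smul]; simp
      rw [this, map_smul, smul_eq_mul, mul_comm]
    have h2 : ∑ g, f (Pi.single g 1) • (fun x : F => ψ g x) = 0 := by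
      ext1 x
      have := hfS (Submodule.subset_span ⟨x, rfl⟩)
      rw [LinearMap.mem_ker, h1] at this
      simpa [Finset.sum_apply] using this
    have h3 := Fintype.linearIndependent_iff.mp hli _ h2
    ext g
    simp [h3]
  have hmem : (Pi.single 1 1 : Γ → F) ∈ S := by rw [hS]; trivial
  obtain ⟨n, c, v, hv⟩ := (Submodule.mem_span_set' ).mp hmem
  refine ⟨n, fun i => ((v i).2.choose : F), fun i => (c i : F), fun i => SetLike.coe_mem _,
    fun i => SetLike.coe_mem _, fun g => ?_⟩
  have h1 := congrArg (fun w => ((w g : F) : L)) hv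
  have h2 : ∀ i, ((v i : Γ → F) g : L) = φ g ((v i).2.choose : F) := by
    intro i
    have := congrFun (v i).2.choose_spec g
    rw [← this]; rfl
  simp only [Finset.sum_apply, Pi.smul_apply, smul_eq_mul] at h1
  push_cast at h1
  simp only [h2] at h1
  rw [h1, Pi.single_apply]
  split_ifs <;> simp

/-- Bounding degrees through one generator. -/
theorem deg_step (F F' : IntermediateField K L) (t : L) (p : Polynomial F) (d n : ℕ)
    (hp : p ≠ 0) (hd : p.natDegree ≤ d) (ht : Polynomial.aeval t p = 0)
    (hF' : F' ≤ F ⊔ IntermediateField.adjoin K {t})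
    (h : FiniteDimensional F' L ∧ Module.finrank F' L ≤ n) :
    FiniteDimensional F L ∧ Module.finrank F L ≤ d * n := by
  obtain ⟨hfin, hn⟩ := h
  have hIntegral : IsIntegral F t := by
    have : IsAlgebraic F t := ⟨p, hp, ht⟩
    exact this.isIntegral
  let E : IntermediateField F L := IntermediateField.adjoin F {t}
  have hFE : ∀ x ∈ F', x ∈ E := by
    intro x hx
    have h1 : F ⊔ IntermediateField.adjoin K {t} ≤ E.restrictScalars K := by
      refine sup_le ?_ ?_
      · intro y hy; exact E.algebraMap_mem ⟨y, hy⟩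
      · rw [IntermediateField.adjoin_le_iff]
        rintro y rfl
        exact IntermediateField.mem_adjoin_simple_self F y
    exact h1 (hF' hx)
  letI : Algebra F' E := (RingHom.codRestrict (algebraMap F' L) E.toSubfield
    (fun x => hFE x x.2)).toAlgebra
  haveI : IsScalarTower F' E L := IsScalarTower.of_algebraMap_eq (fun x => rfl)
  haveI hEL : FiniteDimensional E L := FiniteDimensional.right F' E L
  haveI hFEf : FiniteDimensional F E := IntermediateField.adjoin.finiteDimensional hIntegral
  haveI : Module.Free E L := Module.Free.of_divisionRing E L
  haveI : Module.Free F E := Module.Free.of_divisionRing F E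
  haveI : Module.Free F' E := Module.Free.of_divisionRing F' E
  have e1 : Module.finrank E L ≤ n := by
    refine le_trans ?_ hn
    have h5 := Module.finrank_mul_finrank F' E L
    haveI : FiniteDimensional F' E := FiniteDimensional.left F' E L
    rw [← h5]
    exact Nat.le_mul_of_pos_left _ Module.finrank_pos
  have e2 : Module.finrank F E ≤ d := by
    rw [IntermediateField.adjoin.finrank hIntegral]
    exact (Polynomial.natDegree_le_of_dvd (minpoly.dvd F t ht) hp).trans hd
  refine ⟨FiniteDimensional.trans F E L, ?_⟩
  rw [← Module.finrank_mul_finrank F E L]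
  exact Nat.mul_le_mul e2 e1

theorem deg_top (F : IntermediateField K L) (h : F = ⊤) :
    FiniteDimensional F L ∧ Module.finrank F L ≤ 1 := by
  subst h
  constructor
  · exact Module.finite_of_finrank_pos (by rw [IntermediateField.finrank_top]; norm_num)
  · rw [IntermediateField.finrank_top]

end fieldGeneral

set_option linter.style.haveILetI false

open scoped IntermediateField.algebraAdjoinAdjoin in
theorem algInd_of_isAlgebraic {K L : Type} [Field K] [Field L] [Algebra K L] {n : ℕ}
    (x : Fin n → L)
    (halg : Algebra.IsAlgebraic (IntermediateField.adjoin K (Set.range x)) L)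
    (hn : (n : Cardinal) ≤ Algebra.trdeg K L) : AlgebraicIndependent K x := by
  set S := Set.range x with hS
  haveI : Algebra.IsAlgebraic (Algebra.adjoin K S) L :=
    Algebra.IsAlgebraic.trans (Algebra.adjoin K S) (IntermediateField.adjoin K S) L
  have h := Algebra.IsAlgebraic.isTranscendenceBasis_of_le_trdeg_of_finite K x (by simpa using hn)
  exact h.1

theorem trdeg_RFF (K : Type) [Field K] (n : ℕ) :
    Algebra.trdeg K (RFF K (Fin n)) = n := by
  have h1 := IsTranscendenceBasis.mvPolynomial (Fin n) K
  haveI : Algebra.IsAlgebraic (MvPolynomial (Fin n) K) (RFF K (Fin n)) :=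
    IsLocalization.isAlgebraic _ (nonZeroDivisors (MvPolynomial (Fin n) K))
  have h2 := h1.algebraMap_comp (A := RFF K (Fin n))
  rw [← h2.cardinalMk_eq_trdeg]; simp

theorem permHom_X (K : Type) [Field K] (I : Type) (σ : Equiv.Perm I) (i : I) :
    permHom K I σ (Xvar K I i) = Xvar K I (σ i) := by
  simp [permHom, Xvar, renameHom]

theorem Xvar_injective (K : Type) [Field K] (I : Type) : Function.Injective (Xvar K I) := by
  intro i j h
  have h2 := (IsFractionRing.injective (MvPolynomial I K) (RFF K I)) h
  exact MvPolynomial.X_injective h2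

theorem permHom_injective (K : Type) [Field K] (I : Type) :
    Function.Injective (permHom K I) := by
  intro σ τ h
  ext i
  apply Xvar_injective K I
  rw [← permHom_X, ← permHom_X, h]

theorem mem_fixedSub {K : Type} [Field K] {I : Type} (G : Subgroup (Equiv.Perm I)) (x : RFF K I) :
    x ∈ fixedSub K I G ↔ ∀ g ∈ G, permHom K I g x = x := by
  simp [fixedSub]

theorem finrank_fixedSub (K : Type) [Field K] (I : Type) [Finite I]
    (G : Subgroup (Equiv.Perm I)) :
    Module.finrank (fixedSub K I G) (RFF K I) = Nat.card G := by
  have e : G ≃ (G.map (permHom K I)) := (G.equivMapOfInjective _ (permHom_injective K I)).toEquiv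
  haveI : Finite (G.map (permHom K I)) := Finite.of_equiv _ e
  haveI := Fintype.ofFinite (G.map (permHom K I))
  rw [Nat.card_congr e, Nat.card_eq_fintype_card]
  exact FixedPoints.finrank_eq_card (G.map (permHom K I)) (RFF K I)

theorem ratExt_of_generators (K : Type) [Field K] (G : Subgroup (Equiv.Perm (Fin 8)))
    (t : Fin 8 → RFF K (Fin 8)) (ht : ∀ i, t i ∈ fixedSub K (Fin 8) G)
    (h : FiniteDimensional (IntermediateField.adjoin K (Set.range t)) (RFF K (Fin 8)) ∧
      Module.finrank (IntermediateField.adjoin K (Set.range t)) (RFF K (Fin 8)) ≤ Nat.card G) :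
    IsRatExt K ↥(fixedSub K (Fin 8) G) := by
  obtain ⟨hfin, hle⟩ := h
  have hAI : AlgebraicIndependent K t :=
    algInd_of_isAlgebraic t inferInstance (by rw [trdeg_RFF])
  have hle2 : IntermediateField.adjoin K (Set.range t) ≤ fixedSub K (Fin 8) G := by
    rw [IntermediateField.adjoin_le_iff]
    rintro _ ⟨i, rfl⟩
    exact ht i
  have heq : IntermediateField.adjoin K (Set.range t) = fixedSub K (Fin 8) G := by
    apply IntermediateField.eq_of_le_of_finrank_le' hle2
    rw [finrank_fixedSub]; exact hle
  refine ⟨8, fun i => ⟨t i, ht i⟩, ?_, ?_⟩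
  · have : (fun i => t i) = (fixedSub K (Fin 8) G).val ∘ (fun i => (⟨t i, ht i⟩ : fixedSub K (Fin 8) G)) := rfl
    exact AlgebraicIndependent.of_comp (fixedSub K (Fin 8) G).val hAI
  · apply IntermediateField.map_injective (fixedSub K (Fin 8) G).val
    rw [IntermediateField.adjoin_map, ← Set.range_comp]
    have : ((fixedSub K (Fin 8) G).val ∘ (fun i => (⟨t i, ht i⟩ : fixedSub K (Fin 8) G))) = t := rfl
    rw [this, heq, ← AlgHom.fieldRange_eq_map, IntermediateField.fieldRange_val]

/-- Conjugation invariance of rationality. -/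
theorem ratExt_conj (K : Type) [Field K] (G G' : Subgroup (Equiv.Perm (Fin 8)))
    (τ : Equiv.Perm (Fin 8)) (hG : ∀ g, g ∈ G' ↔ τ * g * τ⁻¹ ∈ G)
    (h : IsRatExt K ↥(fixedSub K (Fin 8) G)) : IsRatExt K ↥(fixedSub K (Fin 8) G') := by
  obtain ⟨n, t, hAI, htop⟩ := h
  have hmap : (fixedSub K (Fin 8) G).map (permHom K (Fin 8) τ⁻¹ : RFF K (Fin 8) →ₐ[K] RFF K (Fin 8))
      = fixedSub K (Fin 8) G' := by
    ext x
    rw [IntermediateField.mem_map, mem_fixedSub]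
    constructor
    · rintro ⟨y, hy, rfl⟩ g hg
      rw [mem_fixedSub] at hy
      have h1 := hy _ ((hG g).mp hg)
      rw [map_mul, map_mul] at h1
      simp only [AlgEquiv.mul_apply] at h1
      change permHom K (Fin 8) g (permHom K (Fin 8) τ⁻¹ y) = permHom K (Fin 8) τ⁻¹ y
      conv_rhs => rw [← h1]
      rw [← AlgEquiv.mul_apply (permHom K (Fin 8) τ⁻¹), ← map_mul]; simp
    · intro hx
      refine ⟨permHom K (Fin 8) τ x, ?_, ?_⟩
      · rw [mem_fixedSub]
        intro g hg
        have h1 := hx (τ⁻¹ * g * τ) ((hG _).mpr (by simpa [mul_assoc] using hg))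
        conv_rhs => rw [← h1]
        rw [← AlgEquiv.mul_apply, ← AlgEquiv.mul_apply, ← map_mul, ← map_mul]
        simp [mul_assoc]
      · change permHom K (Fin 8) τ⁻¹ (permHom K (Fin 8) τ x) = x
        rw [← AlgEquiv.mul_apply, ← map_mul]; simp
  let e := (fixedSub K (Fin 8) G).equivMap (permHom K (Fin 8) τ⁻¹ : RFF K (Fin 8) →ₐ[K] RFF K (Fin 8))
  rw [← hmap]
  refine ⟨n, fun i => e (t i), ?_, ?_⟩
  · have := hAI.map' (f := e.toAlgHom) e.injective
    exact this
  · have h2 : (Set.range fun i => e (t i)) = e.toAlgHom '' Set.range t := by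
      rw [← Set.range_comp]; rfl
    rw [h2, ← IntermediateField.adjoin_map, htop, ← AlgHom.fieldRange_eq_map]
    exact AlgEquiv.fieldRange_eq_top e

set_option linter.style.haveILetI false

section invariantBases
variable {K L : Type} [Field K] [Field L] [Algebra K L]

theorem exists_invariant_span {Γ : Type} [Group Γ] [Finite Γ] (φ : Γ →* (L ≃ₐ[K] L))
    (F : IntermediateField K L) (hst : ∀ g, ∀ x ∈ F, φ g x ∈ F)
    (hf : ∀ g, (∀ x ∈ F, φ g x = x) → g = 1) (n : ℕ) (y : Fin n → L)
    (hy : ∀ g k, φ g (y k) ∈ Submodule.span F (Set.range y)) :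
    ∃ w : Fin n → L, (∀ j g, φ g (w j) = w j) ∧
      Submodule.span F (Set.range w) = Submodule.span F (Set.range y) := by
  classical
  haveI := Fintype.ofFinite Γ
  obtain ⟨N, l, m, hl, hm, hlm⟩ := exists_dual_family φ F hst hf
  let T : Fin N × Fin n → L := fun p => ∑ g : Γ, φ g (l p.1 * y p.2)
  have hTinv : ∀ p g, φ g (T p) = T p := by
    intro p g
    simp only [T, map_sum]
    exact Fintype.sum_equiv (Equiv.mulLeft g) _ _ (fun h => by simp)
  have hT1 : ∀ p, T p ∈ Submodule.span F (Set.range y) := by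
    intro p
    refine Submodule.sum_mem _ fun g _ => ?_
    rw [map_mul]
    exact Submodule.smul_mem _ (⟨φ g (l p.1), hst g _ (hl _)⟩ : F) (hy g p.2)
  have hT2 : ∀ k, y k ∈ Submodule.span F (Set.range T) := by
    intro k
    have : y k = ∑ i, m i * T (i, k) := by
      simp only [T, Finset.mul_sum, map_mul]
      rw [Finset.sum_comm]
      have h1 : ∀ g : Γ, ∑ i, m i * (φ g (l i) * φ g (y k)) = if g = 1 then y k else 0 := by
        intro g
        simp only [← mul_assoc]
        rw [← Finset.sum_mul, hlm]
        split_ifs with h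
        · simp [h]
        · simp
      simp [h1]
    rw [this]
    refine Submodule.sum_mem _ fun i _ => ?_
    exact Submodule.smul_mem _ (⟨m i, hm i⟩ : F) (Submodule.subset_span ⟨_, rfl⟩)
  have hspan : Submodule.span F (Set.range T) = Submodule.span F (Set.range y) := by
    apply le_antisymm
    · rw [Submodule.span_le]; rintro _ ⟨p, rfl⟩; exact hT1 p
    · rw [Submodule.span_le]; rintro _ ⟨p, rfl⟩; exact hT2 p
  obtain ⟨b, hb, hbs, hbl⟩ := exists_linearIndependent F (Set.range T)
  have hbf : b.Finite := (Set.finite_range T).subset hb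
  haveI := hbf.fintype
  have hcard : Fintype.card b ≤ n := by
    have h1 := finrank_span_eq_card hbl
    have h2 := finrank_range_le_card (R := F) y
    rw [Subtype.range_coe, hbs, hspan] at h1
    rw [Set.finrank] at h2
    simpa [h1] using h2
  obtain ⟨f⟩ : Nonempty (b ↪ Fin n) := Function.Embedding.nonempty_of_card_le (by simpa using hcard)
  let w : Fin n → L := Function.extend f (fun x => (x : L)) 0
  have hw : ∀ j, w j ∈ b ∨ w j = 0 := by
    intro j
    by_cases h : ∃ x, f x = j
    · obtain ⟨x, rfl⟩ := h
      left
      simp only [w]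
      rw [f.injective.extend_apply]
      exact x.2
    · right
      simp only [w]
      rw [Function.extend_apply' _ _ _ h]; rfl
  refine ⟨w, ?_, ?_⟩
  · intro j g
    rcases hw j with h | h
    · obtain ⟨p, hp⟩ := hb h
      rw [← hp, hTinv]
    · simp [h]
  · rw [← hspan, ← hbs]
    apply le_antisymm
    · rw [Submodule.span_le]
      rintro _ ⟨j, rfl⟩
      rcases hw j with h | h
      · exact Submodule.subset_span h
      · simp [h]
    · rw [Submodule.span_le]
      intro x hx
      apply Submodule.subset_span
      exact ⟨f ⟨x, hx⟩, f.injective.extend_apply _ _ _⟩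

theorem exists_equivariant_vector {Γ : Type} [Group Γ] [Finite Γ] (φ : Γ →* (L ≃ₐ[K] L))
    (F : IntermediateField K L) (hst : ∀ g, ∀ x ∈ F, φ g x ∈ F)
    (hf : ∀ g, (∀ x ∈ F, φ g x = x) → g = 1)
    (ρ : Γ → Matrix (Fin 3) (Fin 3) K) (hρ1 : ρ 1 = 1) (hρ : ∀ g h, ρ (g * h) = ρ g * ρ h)
    (τ : Fin 3 → L) (hτ : ∀ g j, φ g (τ j) = τ j) :
    ∃ v : Fin 3 → L, (∀ g j, φ g (v j) = ∑ k, algebraMap K L (ρ g⁻¹ j k) * v k) ∧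
      ∀ j, τ j ∈ Submodule.span F (Set.range v) := by
  classical
  haveI := Fintype.ofFinite Γ
  obtain ⟨N, l, m, hl, hm, hlm⟩ := exists_dual_family φ F hst hf
  let T : Fin N × Fin 3 → Fin 3 → L := fun p j => ∑ h : Γ, φ h (l p.1) * algebraMap K L (ρ h j p.2)
  have hTF : ∀ p j, T p j ∈ F := by
    intro p j
    refine sum_mem fun g _ => mul_mem (hst _ _ (hl _)) (F.algebraMap_mem _)
  let T' : Fin N × Fin 3 → Fin 3 → F := fun p j => ⟨T p j, hTF p j⟩
  have hTinv : ∀ p g j, φ g (T p j) = ∑ k, algebraMap K L (ρ g⁻¹ j k) * T p k := by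
    intro p g j
    simp only [T, map_sum, map_mul, AlgEquiv.commutes, Finset.mul_sum]
    rw [Finset.sum_comm]
    refine Fintype.sum_equiv (Equiv.mulLeft g) _ _ (fun h => ?_)
    simp only [Equiv.coe_mulLeft]
    have h1 : ρ h = ρ g⁻¹ * ρ (g * h) := by rw [← hρ]; simp
    rw [h1, Matrix.mul_apply, map_sum, Finset.mul_sum]
    refine Finset.sum_congr rfl fun k _ => ?_
    rw [map_mul, map_mul, AlgEquiv.mul_apply]; ring
  have hspan : ⊤ ≤ Submodule.span F (Set.range T') := by
    have h1 : ∀ k : Fin 3, (Pi.single k 1 : Fin 3 → F) ∈ Submodule.span F (Set.range T') := by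
      intro k
      have : (Pi.single k 1 : Fin 3 → F) = ∑ i, (⟨m i, hm i⟩ : F) • T' (i, k) := by
        ext j
        simp only [Finset.sum_apply, Pi.smul_apply, smul_eq_mul]
        push_cast
        simp only [T', T, Finset.mul_sum]
        rw [Finset.sum_comm]
        have h1 : ∀ g : Γ, ∑ i, m i * (φ g (l i) * algebraMap K L (ρ g j k)) =
            if g = 1 then algebraMap K L (ρ 1 j k) else 0 := by
          intro g
          simp only [← mul_assoc]
          rw [← Finset.sum_mul, hlm]
          split_ifs with h
          · simp [h]
          · simp
        simp only [h1, hρ1]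
        simp [Pi.single_apply, Matrix.one_apply]
        split_ifs <;> simp
      rw [this]
      refine Submodule.sum_mem _ fun i _ => Submodule.smul_mem _ _ (Submodule.subset_span ⟨_, rfl⟩)
    intro v _
    have : v = ∑ k, v k • (Pi.single k 1 : Fin 3 → F) := by
      ext j; simp [Pi.single_apply]
    rw [this]
    exact Submodule.sum_mem _ fun i _ => Submodule.smul_mem _ _ (h1 i)
  let B := Module.Basis.ofSpan hspan
  haveI : Finite ((linearIndepOn_empty F id).extend (Set.empty_subset (Set.range T'))) :=
    Module.Finite.finite_basis B
  haveI := Fintype.ofFinite ((linearIndepOn_empty F id).extend (Set.empty_subset (Set.range T')))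
  have hc : Fintype.card ((linearIndepOn_empty F id).extend (Set.empty_subset (Set.range T'))) = 3 := by
    rw [← Module.finrank_eq_card_basis B]; simp
  let e := Fintype.equivFinOfCardEq hc
  let C : Module.Basis (Fin 3) F (Fin 3 → F) := B.reindex e
  have hC : ∀ i, ∃ p, C i = T' p := by
    intro i
    have : C i ∈ Set.range T' := by
      apply Module.Basis.ofSpan_subset hspan
      exact ⟨e.symm i, by simp only [C, Module.Basis.reindex_apply]; rfl⟩
    obtain ⟨p, hp⟩ := this
    exact ⟨p, hp.symm⟩
  choose p hp using hC
  refine ⟨fun j => ∑ i, T (p i) j * τ i, ?_, ?_⟩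
  · intro g j
    simp only [map_sum, map_mul, hTinv, hτ, Finset.sum_mul, Finset.mul_sum]
    rw [Finset.sum_comm]
    simp [mul_assoc]
  · intro j
    -- coordinates
    let Mx : Matrix (Fin 3) (Fin 3) F := Matrix.of fun i k => C i k
    have hunit : ∃ P : Matrix (Fin 3) (Fin 3) F, Mx * P = 1 := by
      refine ⟨Matrix.of fun k i => C.repr (Pi.single k 1) i, ?_⟩
      have : (Matrix.of fun k i => C.repr (Pi.single k 1) i) * Mx = 1 := by
        ext k i
        rw [Matrix.mul_apply]
        have h1 := congrFun (C.sum_repr (Pi.single k 1)) i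
        simp only [Finset.sum_apply, Pi.smul_apply, smul_eq_mul] at h1
        simp only [Matrix.of_apply, Mx]
        rw [h1]
        simp [Pi.single_apply, Matrix.one_apply, eq_comm]
      exact mul_eq_one_comm.mp this
    obtain ⟨P, hP⟩ := hunit
    have hτv : τ j = ∑ k, (P k j : L) * ∑ i, T (p i) k * τ i := by
      simp only [Finset.mul_sum]
      rw [Finset.sum_comm]
      have h1 : ∀ i, ∑ k, (P k j : L) * (T (p i) k * τ i) = if i = j then τ j else 0 := by
        intro i
        have h2 := congrFun (congrFun hP i) j
        rw [Matrix.mul_apply] at h2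
        have h3 := congrArg (fun z : F => (z : L)) h2
        push_cast at h3
        have h4 : ∀ k, ((Mx i k : F) : L) = T (p i) k := by
          intro k; simp only [Mx, Matrix.of_apply, hp]; rfl
        simp only [h4] at h3
        have : ∑ k, (P k j : L) * (T (p i) k * τ i) = (∑ k, T (p i) k * (P k j : L)) * τ i := by
          rw [Finset.sum_mul]; refine Finset.sum_congr rfl fun k _ => by ring
        rw [this, h3, Matrix.one_apply]
        split_ifs with h <;> simp [h]
      simp [h1]
    rw [hτv]
    refine Submodule.sum_mem _ fun k _ => Submodule.smul_mem _ (P k j) (Submodule.subset_span ⟨k, rfl⟩)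

end invariantBases

set_option linter.style.haveILetI false

section invariants
variable {L : Type} [Field L]
def is1 (x y z : L) : L := x^2+y^2+z^2
def is2 (x y z : L) : L := x^2*y^2+y^2*z^2+z^2*x^2
def is3 (x y z : L) : L := x^2*y^2*z^2
def iF4 (α x y z : L) : L := is1 x y z ^2 + (-2-3*α)*is2 x y z
def iF6 (α x y z : L) : L := 2*is1 x y z ^3 + (-6+5*α)*is1 x y z * is2 x y z + (-14-35*α)*is3 x y z
def pF14 (α s F4 F6 : L) : L := 4096*s^7 - 3584*α*F4*s^5 + (-1792+896*α)*F6*s^4 + (-2016+1232*α)*F4^2*s^3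
   + (560+504*α)*F4*F6*s^2+((42-119*α)*F6^2+(280+28*α)*F4^3)*s

theorem iF4_inv (α x y z : L) (h : α^2=α-2) :
  iF4 α (-x+y+(1-α)*z) (x-y+(1-α)*z) (α*x+α*y) = 16 * iF4 α x y z := by
  simp only [iF4, is1, is2]; grind
theorem iF6_inv (α x y z : L) (h : α^2=α-2) :
  iF6 α (-x+y+(1-α)*z) (x-y+(1-α)*z) (α*x+α*y) = 64 * iF6 α x y z := by
  simp only [iF6, is1, is2,is3]; grind
set_option maxRecDepth 100000 in
theorem iF14_aux (α P Q Z : L) (h : α^2=α-2) (s1 F4 F6 s' : L) (e1 : s' = 8*Q-2*(1+α)*Z+4*(α-2)*P)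
  (e2 : s1 = 2*(P+Q)+Z) (e4 : F4 = s1^2 + (-2-3*α)*((P-Q)^2+2*Z*(P+Q)))
  (e6 : F6 = 2*s1^3+(-6+5*α)*s1*((P-Q)^2+2*Z*(P+Q))+ (-14-35*α)*((P-Q)^2*Z)) :
  pF14 α s' (16 * F4) (64 * F6) = 16384 * pF14 α s1 F4 F6 := by
  simp only [pF14]
  subst e1 e2 e4 e6
  grind

theorem iF14_inv [CharZero L] (α x y z : L) (h : α^2=α-2) :
    pF14 α (is1 (-x+y+(1-α)*z) (x-y+(1-α)*z) (α*x+α*y)) (16 * iF4 α x y z) (64 * iF6 α x y z) =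
      16384 * pF14 α (is1 x y z) (iF4 α x y z) (iF6 α x y z) := by
  have h2 : (2 : L) ≠ 0 := two_ne_zero
  obtain ⟨p, q, rfl, rfl⟩ : ∃ p q, x = p + q ∧ y = p - q :=
    ⟨(x+y)/2, (x-y)/2, by ring, by ring⟩
  apply iF14_aux α (p^2) (q^2) (z^2) h
  · simp only [is1]; grind
  · simp only [is1]; ring
  · simp only [iF4, is2]; ring
  · simp only [iF6, is2, is3]; ring

end invariants

section degrees
variable {K L : Type} [Field K] [Field L] [Algebra K L]

theorem deg_step' (F : IntermediateField K L) (t : L) (d n : ℕ) (c : Fin (d+1) → L)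
    (hc : ∀ i, c i ∈ F) (hd : c (Fin.last d) ≠ 0) (ht : ∑ i, c i * t ^ (i : ℕ) = 0)
    (h : FiniteDimensional ↥(F ⊔ IntermediateField.adjoin K {t}) L ∧
      Module.finrank ↥(F ⊔ IntermediateField.adjoin K {t}) L ≤ n) :
    FiniteDimensional F L ∧ Module.finrank F L ≤ d * n := by
  let p : Polynomial F := ∑ i : Fin (d+1), Polynomial.C (⟨c i, hc i⟩ : F) * Polynomial.X ^ (i : ℕ)
  have hcoeff : p.coeff d = ⟨c (Fin.last d), hc _⟩ := by
    simp only [p, Polynomial.finsetSum_coeff, Polynomial.coeff_C_mul, Polynomial.coeff_X_pow]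
    rw [Finset.sum_eq_single (Fin.last d)]
    · simp
    · intro b _ hb
      have : d ≠ (b : ℕ) := fun h => hb (Fin.ext (by simp [← h]))
      simp [this]
    · simp
  refine deg_step F _ t p d n ?_ ?_ ?_ le_rfl h
  · intro h0
    rw [h0] at hcoeff
    apply hd
    have := congrArg (fun z : F => (z : L)) hcoeff
    simpa using this.symm
  · refine Polynomial.natDegree_sum_le_of_forall_le _ _ fun i _ => ?_
    refine (Polynomial.natDegree_C_mul_X_pow_le _ _).trans ?_
    omega
  · simp only [p, map_sum, map_mul, Polynomial.aeval_C, map_pow, Polynomial.aeval_X]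
    exact ht

theorem deg_sqrt (F : IntermediateField K L) (t : L) (n : ℕ) (ht : t ^ 2 ∈ F)
    (h : FiniteDimensional ↥(F ⊔ IntermediateField.adjoin K {t}) L ∧
      Module.finrank ↥(F ⊔ IntermediateField.adjoin K {t}) L ≤ n) :
    FiniteDimensional F L ∧ Module.finrank F L ≤ 2 * n := by
  refine deg_step' F t 2 n ![-t^2, 0, 1] ?_ (by simp) (by simp [Fin.sum_univ_succ]) h
  intro i
  fin_cases i
  · simpa using ht
  · simp
  · simp

theorem deg168 [CharZero L] (α : K) (hα : α ^ 2 = α - 2) (x y z : L) (hz : z ≠ 0)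
    (h1 : is1 x y z ≠ 0) (h4 : iF4 (algebraMap K L α) x y z ≠ 0)
    (h6 : iF6 (algebraMap K L α) x y z ≠ 0)
    (B : IntermediateField K L)
    (ha : iF6 (algebraMap K L α) x y z ^ 2 / iF4 (algebraMap K L α) x y z ^ 3 ∈ B)
    (hb : pF14 (algebraMap K L α) (is1 x y z) (iF4 (algebraMap K L α) x y z)
      (iF6 (algebraMap K L α) x y z) /
      (iF4 (algebraMap K L α) x y z ^ 2 * iF6 (algebraMap K L α) x y z) ∈ B) (n : ℕ)
    (hn : ∀ B' : IntermediateField K L, B ≤ B' → x / z ∈ B' → y / z ∈ B' →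
      FiniteDimensional B' L ∧ Module.finrank B' L ≤ n) :
    FiniteDimensional B L ∧ Module.finrank B L ≤ 168 * n := by
  obtain ⟨A, hA⟩ : ∃ A, A = algebraMap K L α := ⟨_, rfl⟩
  have hA2 : A ^ 2 = A - 2 := by
    rw [hA, ← map_pow, hα, map_sub, map_ofNat]
  have hAm : ∀ B' : IntermediateField K L, A ∈ B' := fun B' => hA ▸ B'.algebraMap_mem α
  rw [← hA] at h4 h6 ha hb
  have hF4 : iF4 A x y z = is1 x y z ^ 2 + (-2-3*A) * is2 x y z := rfl
  have hF6 : iF6 A x y z = 2 * is1 x y z ^ 3 + (-6+5*A)*is1 x y z * is2 x y z +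
    (-14-35*A)*is3 x y z := rfl
  have hk1 : (-2-3*A) ≠ 0 := by
    intro h
    have : (28 : L) = 0 := by linear_combination (-5+3*A)*h + 9*hA2
    norm_num at this
  have hk2 : (-14-35*A) ≠ 0 := by
    intro h
    have : (3136 : L) = 0 := by linear_combination (-49+35*A)*h + 1225*hA2
    norm_num at this
  generalize hf4 : iF4 A x y z = f4 at *
  generalize hf6 : iF6 A x y z = f6 at *
  have es1 : is1 x y z = x^2+y^2+z^2 := rfl
  have es2 : is2 x y z = x^2*y^2+y^2*z^2+z^2*x^2 := rfl
  have es3 : is3 x y z = x^2*y^2*z^2 := rfl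
  generalize is1 x y z = s1 at *
  generalize is2 x y z = s2 at *
  generalize is3 x y z = s3 at *
  set a := f6 ^ 2 / f4 ^ 3 with hadef
  set b := pF14 A s1 f4 f6 / (f4 ^ 2 * f6) with hbdef
  set u := s1 * f4 / f6 with hu
  have ha0 : a ≠ 0 := div_ne_zero (pow_ne_zero _ h6) (pow_ne_zero _ h4)
  have hu0 : u ≠ 0 := div_ne_zero (mul_ne_zero h1 h4) h6
  have hs1 : s1 ^ 2 = a * u ^ 2 * f4 := by rw [hadef, hu]; field_simp
  have hs2 : s1 ^ 3 = a * u ^ 3 * f6 := by rw [hadef, hu]; field_simp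
  have hbu : b = 4096 * a^3*u^7 - 3584*A*a^2*u^5 + (-1792+896*A)*a^2*u^4 + (-2016+1232*A)*a*u^3
      + (560+504*A)*a*u^2 + ((42-119*A)*a+(280+28*A))*u := by
    rw [hbdef, hadef, hu, pF14]; field_simp
  have adj : ∀ (F : IntermediateField K L) (t : L), t ∈ F ⊔ IntermediateField.adjoin K {t} :=
    fun F t => (le_sup_right : _ ≤ F ⊔ IntermediateField.adjoin K {t})
      (IntermediateField.mem_adjoin_simple_self K t)
  have hnat : ∀ (F : IntermediateField K L) (m : ℕ) [m.AtLeastTwo], (ofNat(m) : L) ∈ F :=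
    fun F m _ => by simp
  have e168 : 168 * n = 7 * (3 * (2 * (2 * (2 * n)))) := by ring
  rw [e168]
  refine deg_step' B u 7 _ ![-b, (42-119*A)*a+(280+28*A), (560+504*A)*a, (-2016+1232*A)*a,
    (-1792+896*A)*a^2, -3584*A*a^2, 0, 4096*a^3] ?_ ?_ ?_ ?_
  · have hAB := hAm B
    have := hnat B
    intro i
    fin_cases i
    · exact neg_mem hb
    · exact add_mem (mul_mem (sub_mem (this 42) (mul_mem (this 119) hAB)) ha)
        (add_mem (this 280) (mul_mem (this 28) hAB))
    · exact mul_mem (add_mem (this 560) (mul_mem (this 504) hAB)) ha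
    · exact mul_mem (add_mem (neg_mem (this 2016)) (mul_mem (this 1232) hAB)) ha
    · exact mul_mem (add_mem (neg_mem (this 1792)) (mul_mem (this 896) hAB)) (pow_mem ha 2)
    · exact mul_mem (mul_mem (neg_mem (this 3584)) hAB) (pow_mem ha 2)
    · exact zero_mem _
    · exact mul_mem (this 4096) (pow_mem ha 3)
  · simpa using ha0
  · rw [Fin.sum_univ_eight]
    simp
    linear_combination -hbu
  obtain ⟨B1, hB1⟩ : ∃ B1, B1 = B ⊔ IntermediateField.adjoin K {u} := ⟨_, rfl⟩
  have hBB1 : B ≤ B1 := hB1 ▸ le_sup_left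
  have huB1 : u ∈ B1 := hB1 ▸ adj B u
  rw [← hB1]
  have haB1 := hBB1 ha
  have hp : s2 / s1 ^ 2 ∈ B1 := by
    have : s2 / s1 ^ 2 = (1 / (a * u^2) - 1) / (-2-3*A) := by
      rw [eq_div_iff hk1, hadef, hu]; field_simp
      linear_combination -hF4
    rw [this]
    exact div_mem (sub_mem (div_mem (one_mem _) (mul_mem haB1 (pow_mem huB1 2))) (one_mem _))
      (sub_mem (neg_mem (hnat B1 2)) (mul_mem (hnat B1 3) (hAm B1)))
  have hq : s3 / s1 ^ 3 ∈ B1 := by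
    have : s3 / s1 ^ 3 = (1 / (a * u^3) - 2 - (-6+5*A) * (s2 / s1 ^ 2)) / (-14-35*A) := by
      rw [eq_div_iff hk2, hadef, hu]; field_simp
      linear_combination -hF6
    rw [this]
    exact div_mem (sub_mem (sub_mem (div_mem (one_mem _) (mul_mem haB1 (pow_mem huB1 3)))
      (hnat B1 2)) (mul_mem (add_mem (neg_mem (hnat B1 6)) (mul_mem (hnat B1 5) (hAm B1))) hp))
      (sub_mem (neg_mem (hnat B1 14)) (mul_mem (hnat B1 35) (hAm B1)))
  refine deg_step' B1 (x ^ 2 / s1) 3 _ ![-(s3 / s1 ^ 3), s2 / s1 ^ 2, -1, 1] ?_ ?_ ?_ ?_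
  · intro i
    fin_cases i
    · exact neg_mem hq
    · exact hp
    · exact neg_mem (one_mem _)
    · exact one_mem _
  · simp
  · rw [Fin.sum_univ_four]
    simp
    field_simp
    rw [es2, es3, es1]; ring
  obtain ⟨B2, hB2⟩ : ∃ B2, B2 = B1 ⊔ IntermediateField.adjoin K {x ^ 2 / s1} := ⟨_, rfl⟩
  have hBB2 : B1 ≤ B2 := hB2 ▸ le_sup_left
  have hX1 : x ^ 2 / s1 ∈ B2 := hB2 ▸ adj B1 _
  rw [← hB2]
  refine deg_step' B2 (y ^ 2 / s1) 2 _ ![(x^2/s1)^2 - x^2/s1 + s2/s1^2, x^2/s1 - 1, 1] ?_ ?_ ?_ ?_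
  · intro i
    fin_cases i
    · exact add_mem (sub_mem (pow_mem hX1 2) hX1) (hBB2 hp)
    · exact sub_mem hX1 (one_mem _)
    · exact one_mem _
  · simp
  · rw [Fin.sum_univ_three]
    simp
    field_simp
    rw [es2, es1]; ring
  obtain ⟨B3, hB3⟩ : ∃ B3, B3 = B2 ⊔ IntermediateField.adjoin K {y ^ 2 / s1} := ⟨_, rfl⟩
  have hBB3 : B2 ≤ B3 := hB3 ▸ le_sup_left
  have hX2 : y ^ 2 / s1 ∈ B3 := hB3 ▸ adj B2 _
  rw [← hB3]
  have hX3 : z ^ 2 / s1 ∈ B3 := by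
    have : z ^ 2 / s1 = 1 - x^2 / s1 - y^2/s1 := by field_simp; rw [es1]; ring
    rw [this]
    exact sub_mem (sub_mem (one_mem _) (hBB3 hX1)) hX2
  refine deg_sqrt B3 (x / z) _ ?_ ?_
  · have : (x / z) ^ 2 = (x^2 / s1) / (z^2 / s1) := by field_simp
    rw [this]; exact div_mem (hBB3 hX1) hX3
  refine deg_sqrt _ (y / z) _ ?_ ?_
  · have : (y / z) ^ 2 = (y^2 / s1) / (z^2 / s1) := by field_simp
    rw [this]
    exact (le_sup_left : B3 ≤ _) (div_mem hX2 hX3)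
  apply hn
  · exact hBB1.trans (hBB2.trans (hBB3.trans (le_sup_left.trans le_sup_left)))
  · exact (le_sup_left : B3 ⊔ IntermediateField.adjoin K {x / z} ≤ _) (adj _ _)
  · exact adj _ _

end degrees

set_option linter.style.haveILetI false

section setup
variable (K : Type) [Field K]

/-- The field generated by ratios of differences of the variables. -/
noncomputable def F0 : IntermediateField K (RFF K (Fin 8)) :=
  IntermediateField.adjoin K {t | ∃ i j k l : Fin 8,
    t = (Xvar K (Fin 8) i - Xvar K (Fin 8) j) / (Xvar K (Fin 8) k - Xvar K (Fin 8) l)}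

noncomputable def dv (k : Fin 7) : RFF K (Fin 8) := Xvar K (Fin 8) k.succ - Xvar K (Fin 8) 0

theorem F0_ratio (i j k l : Fin 8) :
    (Xvar K (Fin 8) i - Xvar K (Fin 8) j) / (Xvar K (Fin 8) k - Xvar K (Fin 8) l) ∈ F0 K :=
  IntermediateField.subset_adjoin _ _ ⟨i, j, k, l, rfl⟩

theorem stable_of_gens {K L : Type} [Field K] [Field L] [Algebra K L] (S : Set L)
    (F : IntermediateField K L) (f : L ≃ₐ[K] L) (h : ∀ s ∈ S, f s ∈ F) :
    ∀ x ∈ IntermediateField.adjoin K S, f x ∈ F := by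
  have : IntermediateField.adjoin K S ≤ F.comap f.toAlgHom := by
    rw [IntermediateField.adjoin_le_iff]
    intro s hs
    exact h s hs
  intro x hx
  exact this hx

theorem F0_stable (g : Equiv.Perm (Fin 8)) : ∀ x ∈ F0 K, permHom K (Fin 8) g x ∈ F0 K := by
  apply stable_of_gens
  rintro _ ⟨i, j, k, l, rfl⟩
  rw [map_div₀, map_sub, map_sub, permHom_X, permHom_X, permHom_X, permHom_X]
  exact F0_ratio K _ _ _ _

theorem Xvar_sub_ne {i j : Fin 8} (h : i ≠ j) : Xvar K (Fin 8) i - Xvar K (Fin 8) j ≠ 0 :=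
  sub_ne_zero.mpr fun h2 => h (Xvar_injective K _ h2)

theorem F0_faithful_aux [CharZero K] (g : Equiv.Perm (Fin 8))
    (hg : ∀ x ∈ F0 K, permHom K (Fin 8) g x = x) (i j l : Fin 8) (hij : i ≠ j) (hil : l ≠ i)
    (hjl : l ≠ j) : g i = i ∨ g i = j := by
  have h1 := hg _ (F0_ratio K i j i l)
  rw [map_div₀, map_sub, map_sub, permHom_X, permHom_X, permHom_X,
    div_eq_div_iff (Xvar_sub_ne K (fun h => hil (g.injective h).symm)) (Xvar_sub_ne K hil.symm)] at h1
  simp only [Xvar, ← map_sub, ← map_mul] at h1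
  have h2 := IsFractionRing.injective (MvPolynomial (Fin 8) K) (RFF K (Fin 8)) h1
  have h3 := congrArg (MvPolynomial.eval fun a : Fin 8 => if a = j then ((i : ℕ) : K) else ((a : ℕ) : K)) h2
  simp only [map_mul, map_sub, MvPolynomial.eval_X, hij, hjl, if_false, if_true, sub_self, zero_mul,
    mul_eq_zero] at h3
  rcases h3 with h3 | h3
  · rw [sub_eq_zero] at h3
    have hne : g i ≠ g j := fun h => hij (g.injective h)
    by_cases h4 : g i = j
    · exact Or.inr h4
    · left
      rw [if_neg h4] at h3
      by_cases h5 : g j = j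
      · rw [if_pos h5] at h3
        exact Fin.ext (by exact_mod_cast h3)
      · rw [if_neg h5] at h3
        exact absurd (Fin.ext (by exact_mod_cast h3)) hne
  · exfalso
    rw [sub_eq_zero] at h3
    exact hil (Fin.ext (by exact_mod_cast h3.symm))

theorem F0_faithful [CharZero K] (g : Equiv.Perm (Fin 8))
    (hg : ∀ x ∈ F0 K, permHom K (Fin 8) g x = x) : g = 1 := by
  ext1 i
  have h : ∃ j l : Fin 8, i ≠ j ∧ l ≠ i ∧ l ≠ j := by
    revert i; decide
  obtain ⟨j, l, h1, h2, h3⟩ := h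
  rcases F0_faithful_aux K g hg i j l h1 h2 h3 with h | h
  · simpa using h
  · rcases F0_faithful_aux K g hg i l j h2.symm h1.symm h3.symm with h' | h'
    · simpa using h'
    · exact absurd (h'.symm.trans h) h3

theorem adjoin_Xvar : IntermediateField.adjoin K (Set.range (Xvar K (Fin 8))) = ⊤ := by
  rw [eq_top_iff]
  intro x _
  have hp : ∀ p : MvPolynomial (Fin 8) K, algebraMap _ (RFF K (Fin 8)) p ∈
      IntermediateField.adjoin K (Set.range (Xvar K (Fin 8))) := by
    intro p
    induction p using MvPolynomial.induction_on with
    | C a =>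
      have : algebraMap (MvPolynomial (Fin 8) K) (RFF K (Fin 8)) (MvPolynomial.C a) =
        algebraMap K _ a := by
          rw [IsScalarTower.algebraMap_apply K (MvPolynomial (Fin 8) K) (RFF K (Fin 8))]; rfl
      rw [this]
      exact IntermediateField.algebraMap_mem _ _
    | add p q hp hq => rw [map_add]; exact add_mem hp hq
    | mul_X p i hp =>
      rw [map_mul]
      exact mul_mem hp (IntermediateField.subset_adjoin _ _ ⟨i, rfl⟩)
  obtain ⟨a, b, _, rfl⟩ := IsFractionRing.div_surjective (A := MvPolynomial (Fin 8) K) x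
  exact div_mem (hp a) (hp b)

theorem sub_mem_span (F : IntermediateField K (RFF K (Fin 8))) (i j : Fin 8) :
    Xvar K (Fin 8) i - Xvar K (Fin 8) j ∈ Submodule.span F (Set.range (dv K)) := by
  have h : ∀ i : Fin 8, Xvar K (Fin 8) i - Xvar K (Fin 8) 0 ∈ Submodule.span F (Set.range (dv K)) := by
    intro i
    refine Fin.cases ?_ (fun k => ?_) i
    · simp
    · exact Submodule.subset_span ⟨k, rfl⟩
  have := Submodule.sub_mem _ (h i) (h j)
  simpa using this

theorem span_div_mem {K L : Type} [Field K] [Field L] [Algebra K L] {F B : IntermediateField K L}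
    (hFB : F ≤ B) {n : ℕ} (v : Fin n → L) (c : L) (hv : ∀ k, v k / c ∈ B) (s : L)
    (hs : s ∈ Submodule.span F (Set.range v)) : s / c ∈ B := by
  induction hs using Submodule.span_induction with
  | mem x hx => obtain ⟨k, rfl⟩ := hx; exact hv k
  | zero => simp
  | add x y _ _ hx hy => rw [add_div]; exact add_mem hx hy
  | smul a x _ hx =>
    have : (a • x) / c = a * (x / c) := by
      change ((a : L) * x) / c = _; ring
    rw [this]; exact mul_mem (hFB a.2) hx

theorem dv_ne (k : Fin 7) : dv K k ≠ 0 := Xvar_sub_ne K (Fin.succ_ne_zero k)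

/-- Steps 1 and 2. -/
theorem exists_v [CharZero K] (G : Subgroup (Equiv.Perm (Fin 8)))
    (ρ : G → Matrix (Fin 3) (Fin 3) K) (hρ1 : ρ 1 = 1) (hρ : ∀ g h, ρ (g * h) = ρ g * ρ h) :
    ∃ v : Fin 3 → RFF K (Fin 8), (∀ g : G, ∀ j, permHom K (Fin 8) g (v j) =
      ∑ k, algebraMap K (RFF K (Fin 8)) (ρ g⁻¹ j k) * v k) ∧ (∃ j, v j ≠ 0) ∧
      (v 2 ≠ 0 → ∀ B : IntermediateField K (RFF K (Fin 8)), F0 K ≤ B → v 0 / v 2 ∈ B →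
        v 1 / v 2 ∈ B → B = ⊤) := by
  have hst : ∀ g : G, ∀ x ∈ F0 K, ((permHom K (Fin 8)).comp G.subtype) g x ∈ F0 K :=
    fun g => F0_stable K g
  have hf : ∀ g : G, (∀ x ∈ F0 K, ((permHom K (Fin 8)).comp G.subtype) g x = x) → g = 1 :=
    fun g hg => Subtype.ext (F0_faithful K g hg)
  obtain ⟨w, hw, hws⟩ := exists_invariant_span ((permHom K (Fin 8)).comp G.subtype) (F0 K) hst hf 7
    (dv K) (by
      intro g k
      change permHom K (Fin 8) g (dv K k) ∈ _
      rw [dv, map_sub, permHom_X, permHom_X]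
      exact sub_mem_span K _ _ _)
  obtain ⟨j, hj⟩ : ∃ j, w j ≠ 0 := by
    by_contra hcon
    push Not at hcon
    have h1 : dv K 0 ∈ Submodule.span (F0 K) (Set.range w) := by
      rw [hws]; exact Submodule.subset_span ⟨0, rfl⟩
    have h2 : Submodule.span (F0 K) (Set.range w) ≤ ⊥ := by
      rw [Submodule.span_le]; rintro _ ⟨i, rfl⟩; simp [hcon i]
    exact dv_ne K 0 (by simpa using h2 h1)
  have hdd : ∀ k, dv K k / dv K 0 ∈ F0 K := fun k => F0_ratio K _ _ _ _
  have hwj : w j / dv K 0 ∈ F0 K := by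
    apply span_div_mem (le_refl (F0 K)) (dv K) (dv K 0) hdd
    rw [← hws]; exact Submodule.subset_span ⟨j, rfl⟩
  obtain ⟨v, hv, hτ⟩ := exists_equivariant_vector ((permHom K (Fin 8)).comp G.subtype) (F0 K) hst hf
    ρ hρ1 hρ ![1, ∑ i, Xvar K (Fin 8) i, w j] (by
      intro g i
      fin_cases i
      · simp
      · change permHom K (Fin 8) g (∑ i, Xvar K (Fin 8) i) = ∑ i, Xvar K (Fin 8) i
        rw [map_sum]
        exact Fintype.sum_equiv (g : Equiv.Perm (Fin 8)) _ _ (fun i => permHom_X K _ _ _)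
      · exact hw j g)
  refine ⟨v, hv, ?_, ?_⟩
  · by_contra hcon
    push Not at hcon
    have h1 := hτ 0
    have h2 : Submodule.span (F0 K) (Set.range v) ≤ ⊥ := by
      rw [Submodule.span_le]; rintro _ ⟨i, rfl⟩; simp [hcon i]
    have h3 := h2 h1
    simp at h3
  · intro hv2 B hB hx hy
    have hvk : ∀ k, v k / v 2 ∈ B := by
      intro k
      fin_cases k
      · exact hx
      · exact hy
      · change v 2 / v 2 ∈ B
        rw [div_self hv2]; exact one_mem _
    have hτB := fun i => span_div_mem hB v (v 2) hvk _ (hτ i)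
    have h2 : v 2 ∈ B := by
      have := hτB 0
      simpa using this
    have hτB' : ∀ i, (![1, ∑ i, Xvar K (Fin 8) i, w j] : Fin 3 → RFF K (Fin 8)) i ∈ B := by
      intro i
      have := mul_mem (hτB i) h2
      rwa [div_mul_cancel₀ _ hv2] at this
    have h1' : ∑ i, Xvar K (Fin 8) i ∈ B := hτB' 1
    have h2' : w j ∈ B := hτB' 2
    have hd0 : dv K 0 ∈ B := by
      have := div_mem h2' (hB hwj)
      rwa [div_div_cancel₀ hj] at this
    have hd : ∀ k, dv K k ∈ B := by
      intro k
      have := mul_mem (hB (hdd k)) hd0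
      rwa [div_mul_cancel₀ _ (dv_ne K 0)] at this
    have hx0 : Xvar K (Fin 8) 0 ∈ B := by
      have h8 : Xvar K (Fin 8) 0 = (∑ i, Xvar K (Fin 8) i - ∑ k, dv K k) / 8 := by
        rw [eq_div_iff (by norm_num), Fin.sum_univ_succ]
        simp only [dv, Finset.sum_sub_distrib]
        simp
        ring
      rw [h8]
      exact div_mem (sub_mem h1' (sum_mem fun k _ => hd k)) (by simp)
    rw [eq_top_iff, ← adjoin_Xvar K, IntermediateField.adjoin_le_iff]
    rintro _ ⟨i, rfl⟩
    refine Fin.cases hx0 (fun k => ?_) i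
    have := add_mem (hd k) hx0
    simpa [dv] using this

end setup

set_option linter.style.haveILetI false

section main
variable (K : Type) [Field K]

theorem F0_le (B : IntermediateField K (RFF K (Fin 8))) (h : ∀ k, dv K k / dv K 6 ∈ B) :
    F0 K ≤ B := by
  rw [F0, IntermediateField.adjoin_le_iff]
  rintro _ ⟨i, j, k, l, rfl⟩
  have h1 : ∀ i j, (Xvar K (Fin 8) i - Xvar K (Fin 8) j) / dv K 6 ∈ B := fun i j =>
    span_div_mem (le_refl B) (dv K) (dv K 6) h _ (sub_mem_span K B i j)
  have h2 := div_mem (h1 i j) (h1 k l)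
  rwa [div_div_div_cancel_right₀ (dv_ne K 6)] at h2

theorem eval_of_algInd {K L : Type} [Field K] [Field L] [Algebra K L] {ξ η : L}
    (hAI : AlgebraicIndependent K ![ξ, η]) (P : MvPolynomial (Fin 2) K)
    (hP : MvPolynomial.aeval ![ξ, η] P = 0) (a b : K) : MvPolynomial.eval ![a, b] P = 0 := by
  rw [algebraicIndependent_iff] at hAI
  rw [hAI P hP]; simp

theorem mem_fixedSub_closure (gens : Set (Equiv.Perm (Fin 8))) (x : RFF K (Fin 8))
    (h : ∀ γ ∈ gens, permHom K (Fin 8) γ x = x) : x ∈ fixedSub K (Fin 8) (Subgroup.closure gens) := by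
  rw [mem_fixedSub]
  intro g hg
  induction hg using Subgroup.closure_induction with
  | mem γ hγ => exact h γ hγ
  | one => simp
  | mul a b _ _ ha hb => rw [map_mul, AlgEquiv.mul_apply, hb, ha]
  | inv a _ ha =>
    conv_lhs => rw [← ha]
    rw [← AlgEquiv.mul_apply, ← map_mul]; simp

/-- The action of the generators on the vector `v`. -/
inductive GenAct {L : Type} [Field L] (A : L) (f : L → L) (v : Fin 3 → L) : Prop
  | triv : f (v 0) = v 0 → f (v 1) = v 1 → f (v 2) = v 2 → GenAct A f v
  | cyc : f (v 0) = v 2 → f (v 1) = v 0 → f (v 2) = v 1 → GenAct A f v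
  | neg : f (v 0) = v 0 → f (v 1) = - v 2 → f (v 2) = v 1 → GenAct A f v
  | inv : f (v 0) = (- v 0 + v 1 + (1 - A) * v 2) / 2 → f (v 1) = (v 0 - v 1 + (1 - A) * v 2) / 2 →
      f (v 2) = (A * v 0 + A * v 1) / 2 → GenAct A f v

section
variable {L : Type} [Field L]
theorem is1_half (x y z : L) [CharZero L] : is1 (x / 2) (y / 2) (z / 2) = is1 x y z / 4 := by
  simp only [is1]; ring
theorem iF4_half (A x y z : L) [CharZero L] : iF4 A (x / 2) (y / 2) (z / 2) = iF4 A x y z / 16 := by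
  simp only [iF4, is1, is2]; ring
theorem iF6_half (A x y z : L) [CharZero L] : iF6 A (x / 2) (y / 2) (z / 2) = iF6 A x y z / 64 := by
  simp only [iF6, is1, is2, is3]; ring
theorem pF14_scale (A s p q : L) [CharZero L] :
    pF14 A (s / 4) p q = pF14 A s (16 * p) (64 * q) / 16384 := by
  simp only [pF14]; ring
end

theorem genAct_inv {K L : Type} [Field K] [Field L] [Algebra K L] [CharZero L]
    (α : K) (hα : α ^ 2 = α - 2) (f : L ≃ₐ[K] L)
    (v : Fin 3 → L) (h : GenAct (algebraMap K L α) f v) :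
    f (iF4 (algebraMap K L α) (v 0) (v 1) (v 2)) = iF4 (algebraMap K L α) (v 0) (v 1) (v 2) ∧
    f (iF6 (algebraMap K L α) (v 0) (v 1) (v 2)) = iF6 (algebraMap K L α) (v 0) (v 1) (v 2) ∧
    f (pF14 (algebraMap K L α) (is1 (v 0) (v 1) (v 2)) (iF4 (algebraMap K L α) (v 0) (v 1) (v 2))
        (iF6 (algebraMap K L α) (v 0) (v 1) (v 2))) =
      pF14 (algebraMap K L α) (is1 (v 0) (v 1) (v 2)) (iF4 (algebraMap K L α) (v 0) (v 1) (v 2))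
        (iF6 (algebraMap K L α) (v 0) (v 1) (v 2)) := by
  obtain ⟨A, hA⟩ : ∃ A, A = algebraMap K L α := ⟨_, rfl⟩
  have hA2 : A ^ 2 = A - 2 := by
    rw [hA, ← map_pow, hα, map_sub, map_ofNat]
  rw [← hA] at h ⊢
  have hfA : f A = A := by rw [hA]; exact f.commutes α
  have e1 : ∀ x y z, f (is1 x y z) = is1 (f x) (f y) (f z) := by intros; simp [is1]
  have e4 : ∀ x y z, f (iF4 A x y z) = iF4 A (f x) (f y) (f z) := by
    intros; simp [iF4, is1, is2, hfA, map_ofNat f]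
  have e6 : ∀ x y z, f (iF6 A x y z) = iF6 A (f x) (f y) (f z) := by
    intros; simp [iF6, is1, is2, is3, hfA, map_ofNat f]
  have e14 : ∀ x y z, f (pF14 A x y z) = pF14 A (f x) (f y) (f z) := by
    intros; simp [pF14, hfA, map_ofNat f]
  have key : is1 (f (v 0)) (f (v 1)) (f (v 2)) = is1 (v 0) (v 1) (v 2) →
      iF4 A (f (v 0)) (f (v 1)) (f (v 2)) = iF4 A (v 0) (v 1) (v 2) →
      iF6 A (f (v 0)) (f (v 1)) (f (v 2)) = iF6 A (v 0) (v 1) (v 2) →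
      f (iF4 A (v 0) (v 1) (v 2)) = iF4 A (v 0) (v 1) (v 2) ∧
      f (iF6 A (v 0) (v 1) (v 2)) = iF6 A (v 0) (v 1) (v 2) ∧
      f (pF14 A (is1 (v 0) (v 1) (v 2)) (iF4 A (v 0) (v 1) (v 2)) (iF6 A (v 0) (v 1) (v 2))) =
      pF14 A (is1 (v 0) (v 1) (v 2)) (iF4 A (v 0) (v 1) (v 2)) (iF6 A (v 0) (v 1) (v 2)) := by
    intro h1 h4 h6
    refine ⟨by rw [e4, h4], by rw [e6, h6], by rw [e14, e4, e6, e1, h1, h4, h6]⟩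
  cases h with
  | triv h0 h1 h2 => apply key <;> rw [h0, h1, h2]
  | cyc h0 h1 h2 =>
    apply key <;> rw [h0, h1, h2] <;> simp only [is1, iF4, iF6, is2, is3] <;> ring
  | neg h0 h1 h2 =>
    apply key <;> rw [h0, h1, h2] <;> simp only [is1, iF4, iF6, is2, is3] <;> ring
  | inv h0 h1 h2 =>
    have h4 : iF4 A (f (v 0)) (f (v 1)) (f (v 2)) = iF4 A (v 0) (v 1) (v 2) := by
      rw [h0, h1, h2, iF4_half, iF4_inv A _ _ _ hA2]
      field_simp
    have h6 : iF6 A (f (v 0)) (f (v 1)) (f (v 2)) = iF6 A (v 0) (v 1) (v 2) := by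
      rw [h0, h1, h2, iF6_half, iF6_inv A _ _ _ hA2]
      field_simp
    refine ⟨by rw [e4, h4], by rw [e6, h6], ?_⟩
    rw [e14, e4, e6, h4, h6, e1, h0, h1, h2, is1_half, pF14_scale, iF14_inv A _ _ _ hA2]
    field_simp

theorem nonvanish {K L : Type} [Field K] [Field L] [Algebra K L] [CharZero K]
    (α : K) (x y z : L) (hz : z ≠ 0) (hAI : AlgebraicIndependent K ![x / z, y / z]) :
    is1 x y z ≠ 0 ∧ iF4 (algebraMap K L α) x y z ≠ 0 ∧ iF6 (algebraMap K L α) x y z ≠ 0 := by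
  have hP := fun P h => eval_of_algInd hAI P h 0 0
  refine ⟨fun h => ?_, fun h => ?_, fun h => ?_⟩
  · have := hP (MvPolynomial.X 0 ^ 2 + MvPolynomial.X 1 ^ 2 + 1) (by
      have : is1 x y z / z ^ 2 = 0 := by rw [h]; simp
      rw [← this, is1]; simp; field_simp)
    simp at this
  · have := hP ((MvPolynomial.X 0 ^ 2 + MvPolynomial.X 1 ^ 2 + 1) ^ 2 +
        (-2 - 3 * MvPolynomial.C α) * (MvPolynomial.X 0 ^ 2 * MvPolynomial.X 1 ^ 2 +
          MvPolynomial.X 1 ^ 2 + MvPolynomial.X 0 ^ 2)) (by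
      have : iF4 (algebraMap K L α) x y z / z ^ 4 = 0 := by rw [h]; simp
      rw [← this, iF4, is1, is2]; simp; field_simp)
    simp at this
  · have := hP (2 * (MvPolynomial.X 0 ^ 2 + MvPolynomial.X 1 ^ 2 + 1) ^ 3 +
        (-6 + 5 * MvPolynomial.C α) * (MvPolynomial.X 0 ^ 2 + MvPolynomial.X 1 ^ 2 + 1) *
          (MvPolynomial.X 0 ^ 2 * MvPolynomial.X 1 ^ 2 +
          MvPolynomial.X 1 ^ 2 + MvPolynomial.X 0 ^ 2) +
          (-14 - 35 * MvPolynomial.C α) * (MvPolynomial.X 0 ^ 2 * MvPolynomial.X 1 ^ 2)) (by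
      have : iF6 (algebraMap K L α) x y z / z ^ 6 = 0 := by rw [h]; simp
      rw [← this, iF6, is1, is2, is3]; simp; field_simp)
    simp at this

theorem scalar_of_fix {K L : Type} [Field K] [Field L] [Algebra K L] [CharZero K]
    (v : Fin 3 → L) (hz : v 2 ≠ 0) (hAI : AlgebraicIndependent K ![v 0 / v 2, v 1 / v 2])
    (R : Matrix (Fin 3) (Fin 3) K)
    (h : ∀ i, (∑ k, algebraMap K L (R i k) * v k) * v 2 = v i * ∑ k, algebraMap K L (R 2 k) * v k) :
    R = R 2 2 • 1 := by
  have hP : ∀ i : Fin 3, ∀ a b : K, R i 0 * a + R i 1 * b + R i 2 =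
      ![a, b, 1] i * (R 2 0 * a + R 2 1 * b + R 2 2) := by
    intro i a b
    have := eval_of_algInd hAI (MvPolynomial.C (R i 0) * MvPolynomial.X 0 +
      MvPolynomial.C (R i 1) * MvPolynomial.X 1 + MvPolynomial.C (R i 2) -
      ![MvPolynomial.X 0, MvPolynomial.X 1, 1] i * (MvPolynomial.C (R 2 0) * MvPolynomial.X 0 +
      MvPolynomial.C (R 2 1) * MvPolynomial.X 1 + MvPolynomial.C (R 2 2))) (by
        have h2 := h i
        rw [Fin.sum_univ_three, Fin.sum_univ_three] at h2
        have h3 : MvPolynomial.aeval ![v 0 / v 2, v 1 / v 2]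
          ((![MvPolynomial.X 0, MvPolynomial.X 1, 1] : Fin 3 → MvPolynomial (Fin 2) K) i)
            = v i / v 2 := by
          fin_cases i
          · simp
          · simp
          · simp [div_self hz]
        simp only [map_sub, map_add, map_mul, h3, MvPolynomial.aeval_X]
        simp
        field_simp
        linear_combination h2) a b
    have h3 : MvPolynomial.eval ![a, b]
          ((![MvPolynomial.X 0, MvPolynomial.X 1, 1] : Fin 3 → MvPolynomial (Fin 2) K) i)
            = ![a, b, 1] i := by
          fin_cases i <;> simp
    simp only [map_sub, map_add, map_mul, h3] at this
    simp at this
    linear_combination this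
  have h00 := hP 0 0 0
  have h01 := hP 0 1 0
  have h02 := hP 0 (-1) 0
  have h03 := hP 0 0 1
  have h04 := hP 0 1 1
  have h10 := hP 1 0 0
  have h11 := hP 1 0 1
  have h12 := hP 1 0 (-1)
  have h13 := hP 1 1 0
  have h14 := hP 1 1 1
  simp at h00 h01 h02 h03 h04 h10 h11 h12 h13 h14
  have a20 : R 2 0 = 0 := by
    have : 2 * R 2 0 = 0 := by linear_combination 2 * h00 - h01 - h02
    simpa using this
  have a21 : R 2 1 = 0 := by
    have : 2 * R 2 1 = 0 := by linear_combination 2 * h10 - h11 - h12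
    simpa using this
  have a01 : R 0 1 = 0 := by linear_combination h03 - h00
  have a10 : R 1 0 = 0 := by linear_combination h13 - h10
  have a00 : R 0 0 = R 2 2 := by linear_combination h01 - h00 + a20
  have a11 : R 1 1 = R 2 2 := by linear_combination h11 - h10 + a21
  ext i j
  fin_cases i <;> fin_cases j <;> simp <;> assumption

end main

set_option linter.style.haveILetI false

/-- `ρ(p₁)` -/
def MM1 (K : Type) [Field K] : Matrix (Fin 3) (Fin 3) K := !![0, 0, 1; 1, 0, 0; 0, 1, 0]
/-- `ρ(p₂)` -/
def MM2 (K : Type) [Field K] : Matrix (Fin 3) (Fin 3) K := !![1, 0, 0; 0, 0, -1; 0, 1, 0]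
/-- `ρ(p₃)` -/
noncomputable def MM3 (K : Type) [Field K] (α : K) : Matrix (Fin 3) (Fin 3) K :=
  !![-1/2, 1/2, (1-α)/2; 1/2, -1/2, (1-α)/2; α/2, α/2, 0]

theorem genAct_of_matrix {K L : Type} [Field K] [Field L] [Algebra K L] [CharZero L]
    (α : K) (f : L → L) (v : Fin 3 → L) (R : Matrix (Fin 3) (Fin 3) K)
    (hR : R = 1 ∨ R = MM1 K ∨ R = MM2 K ∨ R = MM3 K α)
    (h : ∀ j, f (v j) = ∑ k, algebraMap K L (R j k) * v k) : GenAct (algebraMap K L α) f v := by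
  have h0 := h 0
  have h1 := h 1
  have h2 := h 2
  rw [Fin.sum_univ_three] at h0 h1 h2
  rcases hR with rfl | rfl | rfl | rfl
  · refine GenAct.triv ?_ ?_ ?_
    · simpa [Matrix.one_apply] using h0
    · simpa [Matrix.one_apply] using h1
    · simpa [Matrix.one_apply] using h2
  · refine GenAct.cyc ?_ ?_ ?_
    · simpa [MM1] using h0
    · simpa [MM1] using h1
    · simpa [MM1] using h2
  · refine GenAct.neg ?_ ?_ ?_
    · simpa [MM2] using h0
    · simpa [MM2] using h1
    · simpa [MM2] using h2
  · refine GenAct.inv ?_ ?_ ?_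
    · rw [h0]; simp [MM3, map_ofNat]; ring
    · rw [h1]; simp [MM3, map_ofNat]; ring
    · rw [h2]; simp [MM3, map_ofNat]; ring

theorem field_main (K : Type) [Field K] [CharZero K] (α : K) (hα : α ^ 2 = α - 2)
    (G : Subgroup (Equiv.Perm (Fin 8))) (gens : Set (Equiv.Perm (Fin 8)))
    (hG : G = Subgroup.closure gens)
    (ρ : G → Matrix (Fin 3) (Fin 3) K) (hρ1 : ρ 1 = 1) (hρ : ∀ g h, ρ (g * h) = ρ g * ρ h)
    (hgens : ∀ γ (hγ : γ ∈ G), γ ∈ gens →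
      (ρ ⟨γ, hγ⟩ = 1 ∨ ρ ⟨γ, hγ⟩ = MM1 K ∨ ρ ⟨γ, hγ⟩ = MM2 K ∨ ρ ⟨γ, hγ⟩ = MM3 K α))
    (hp1 : ∃ g : G, ρ g = MM1 K)
    (H : Subgroup (Equiv.Perm (Fin 8))) (hHG : H ≤ G)
    (hscal : ∀ h (hh : h ∈ H), (∃ c : K, ρ ⟨h, hHG hh⟩ = c • (1 : Matrix (Fin 3) (Fin 3) K)) → h = 1)
    (y : Fin 7 → RFF K (Fin 8)) (hy0 : ∀ k, y k ≠ 0)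
    (hyH : ∀ h ∈ H, ∀ k, ∀ F : IntermediateField K (RFF K (Fin 8)),
      permHom K (Fin 8) h (y k) ∈ Submodule.span F (Set.range y))
    (hyG : ∀ γ (hγ : γ ∈ G), γ ∈ gens → (γ ∈ H ∨ (ρ ⟨γ, hγ⟩ = 1 ∧ ∀ k, permHom K (Fin 8) γ (y k) = y k)))
    (n : ℕ)
    (hn : ∀ B : IntermediateField K (RFF K (Fin 8)), (∀ i j, y i / y j ∈ B) →
      (∀ B' : IntermediateField K (RFF K (Fin 8)), B ≤ B' → F0 K ≤ B' → B' = ⊤) →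
      FiniteDimensional B (RFF K (Fin 8)) ∧ Module.finrank B (RFF K (Fin 8)) ≤ n)
    (hcard : 168 * n ≤ Nat.card G) : IsRatExt K ↥(fixedSub K (Fin 8) G) := by
  haveI : CharZero (RFF K (Fin 8)) := charZero_of_injective_algebraMap
    (algebraMap K (RFF K (Fin 8))).injective
  obtain ⟨v, hv, ⟨j, hj⟩, htop⟩ := exists_v K G ρ hρ1 hρ
  -- v 2 ≠ 0
  have hinv : ∀ (g : G) (j : Fin 3), permHom K (Fin 8) ((g : Equiv.Perm (Fin 8))⁻¹) (v j) =
      ∑ k, algebraMap K (RFF K (Fin 8)) (ρ g j k) * v k := by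
    intro g j
    have := hv g⁻¹ j
    rwa [inv_inv] at this
  have hz : v 2 ≠ 0 := by
    intro h2
    obtain ⟨g, hg⟩ := hp1
    have e0 := hinv g 0
    have e1 := hinv g 1
    rw [Fin.sum_univ_three, hg] at e0 e1
    simp [MM1, h2] at e0
    simp [MM1, e0] at e1
    fin_cases j
    · exact hj e0
    · exact hj e1
    · exact hj h2
  have htop' := htop hz
  -- algebraic independence
  have hAI8 : AlgebraicIndependent K (Fin.cons (v 0 / v 2) (Fin.cons (v 1 / v 2)
      (fun i : Fin 6 => dv K i.castSucc / dv K 6)) : Fin 8 → RFF K (Fin 8)) := by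
    apply algInd_of_isAlgebraic
    · set B := IntermediateField.adjoin K (Set.range (Fin.cons (v 0 / v 2) (Fin.cons (v 1 / v 2)
        (fun i : Fin 6 => dv K i.castSucc / dv K 6)) : Fin 8 → RFF K (Fin 8))) with hB
      have hm : ∀ i, (Fin.cons (v 0 / v 2) (Fin.cons (v 1 / v 2)
        (fun i : Fin 6 => dv K i.castSucc / dv K 6)) : Fin 8 → RFF K (Fin 8)) i ∈ B := fun i =>
          IntermediateField.subset_adjoin _ _ ⟨i, rfl⟩
      have : B = ⊤ := by
        apply htop' B
        · apply F0_le
          intro k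
          induction k using Fin.lastCases with
          | last =>
            have : dv K (Fin.last 6) / dv K 6 = 1 := div_self (dv_ne K 6)
            rw [this]; exact one_mem B
          | cast i => exact hm i.succ.succ
        · exact hm 0
        · exact hm 1
      have h2 := (deg_top B this).1
      exact Algebra.IsAlgebraic.of_finite _ _
    · rw [trdeg_RFF]
  have hAI : AlgebraicIndependent K ![v 0 / v 2, v 1 / v 2] := by
    have h2 := hAI8.comp (fun i : Fin 2 => Fin.castLE (by norm_num : 2 ≤ 8) i)
      (Fin.castLE_injective (by norm_num : 2 ≤ 8))
    convert h2 using 1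
    ext i
    fin_cases i <;> rfl
  obtain ⟨hs1, hF4, hF6⟩ := nonvanish α (v 0) (v 1) (v 2) hz hAI
  -- invariance of basic forms
  have hinvF : ∀ γ ∈ gens,
      permHom K (Fin 8) γ (iF4 (algebraMap K _ α) (v 0) (v 1) (v 2)) =
        iF4 (algebraMap K _ α) (v 0) (v 1) (v 2) ∧
      permHom K (Fin 8) γ (iF6 (algebraMap K _ α) (v 0) (v 1) (v 2)) =
        iF6 (algebraMap K _ α) (v 0) (v 1) (v 2) ∧
      permHom K (Fin 8) γ (pF14 (algebraMap K _ α) (is1 (v 0) (v 1) (v 2))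
        (iF4 (algebraMap K _ α) (v 0) (v 1) (v 2)) (iF6 (algebraMap K _ α) (v 0) (v 1) (v 2))) =
        pF14 (algebraMap K _ α) (is1 (v 0) (v 1) (v 2))
        (iF4 (algebraMap K _ α) (v 0) (v 1) (v 2)) (iF6 (algebraMap K _ α) (v 0) (v 1) (v 2)) := by
    intro γ hγ
    have hγG : γ ∈ G := hG ▸ Subgroup.subset_closure hγ
    have h1 := genAct_inv α hα (permHom K (Fin 8) γ⁻¹) v
      (genAct_of_matrix α _ v _ (hgens γ hγG hγ) (hinv ⟨γ, hγG⟩))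
    have key : ∀ x, permHom K (Fin 8) γ⁻¹ x = x → permHom K (Fin 8) γ x = x := by
      intro x hx
      conv_lhs => rw [← hx]
      rw [← AlgEquiv.mul_apply, ← map_mul]; simp
    exact ⟨key _ h1.1, key _ h1.2.1, key _ h1.2.2⟩
  -- the field E0
  set E0 : IntermediateField K (RFF K (Fin 8)) :=
    IntermediateField.adjoin K {v 0 / v 2, v 1 / v 2} with hE0
  have hξ : ∀ i, v i / v 2 ∈ E0 := by
    intro i
    fin_cases i
    · exact IntermediateField.subset_adjoin _ _ (by simp)
    · exact IntermediateField.subset_adjoin _ _ (by simp)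
    · simp only [Fin.reduceFinMk, div_self hz]; exact one_mem E0
  have hst : ∀ g ∈ G, ∀ x ∈ E0, permHom K (Fin 8) g x ∈ E0 := by
    intro g hg
    apply stable_of_gens
    have hlin : ∀ j, permHom K (Fin 8) g (v j) / v 2 ∈ E0 := by
      intro j
      rw [hv ⟨g, hg⟩ j, Finset.sum_div]
      refine sum_mem fun k _ => ?_
      rw [mul_div_assoc]
      exact mul_mem (E0.algebraMap_mem _) (hξ k)
    have hd : ∀ i, permHom K (Fin 8) g (v i / v 2) ∈ E0 := by
      intro i
      rw [map_div₀]
      have := div_mem (hlin i) (hlin 2)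
      rwa [div_div_div_cancel_right₀ hz] at this
    rintro s (rfl | rfl)
    · exact hd 0
    · exact hd 1
  have hfaith : ∀ h ∈ H, (∀ x ∈ E0, permHom K (Fin 8) h x = x) → h = 1 := by
    intro h hh hx
    have h1 : h⁻¹ = 1 := by
      apply hscal h⁻¹ (H.inv_mem hh)
      refine ⟨_, scalar_of_fix v hz hAI (ρ ⟨h⁻¹, hHG (H.inv_mem hh)⟩) ?_⟩
      intro i
      have e1 := hx _ (hξ i)
      have e2 := hv ⟨h, hHG hh⟩
      have e3 : (⟨h, hHG hh⟩ : G)⁻¹ = ⟨h⁻¹, hHG (H.inv_mem hh)⟩ := rfl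
      rw [e3] at e2
      rw [← e2, ← e2]
      rw [map_div₀, div_eq_div_iff (by simpa using hz) hz] at e1
      exact e1
    simpa using h1
  obtain ⟨w, hw1, hw2⟩ := exists_invariant_span ((permHom K (Fin 8)).comp H.subtype) E0
    (fun g x hx => hst g (hHG g.2) x hx)
    (fun g hx => Subtype.ext (hfaith g g.2 hx)) 7 y (fun g k => hyH g g.2 k E0)
  have hwj : ∃ j, w j ≠ 0 := by
    by_contra hcon
    push Not at hcon
    have h3 : Submodule.span E0 (Set.range w) = ⊥ := by
      rw [Submodule.span_eq_bot]
      rintro _ ⟨i, rfl⟩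
      exact hcon i
    rw [hw2, Submodule.span_eq_bot] at h3
    exact hy0 0 (h3 _ ⟨0, rfl⟩)
  obtain ⟨j0, hj0⟩ := hwj
  -- w invariant under generators
  have hwG : ∀ γ ∈ gens, ∀ k, permHom K (Fin 8) γ (w k) = w k := by
    intro γ hγ k
    have hγG : γ ∈ G := hG ▸ Subgroup.subset_closure hγ
    rcases hyG γ hγG hγ with h | ⟨h1, h2⟩
    · exact hw1 k ⟨γ, h⟩
    · have hρi : ρ (⟨γ, hγG⟩ : G)⁻¹ = 1 := by
        have := hρ (⟨γ, hγG⟩ : G)⁻¹ ⟨γ, hγG⟩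
        rw [inv_mul_cancel, hρ1, h1, mul_one] at this
        exact this.symm
      have hvf : ∀ j, permHom K (Fin 8) γ (v j) = v j := by
        intro j
        rw [hv ⟨γ, hγG⟩ j, hρi]
        simp [Matrix.one_apply]
      have hEf : ∀ x ∈ E0, permHom K (Fin 8) γ x = x := by
        have : E0 ≤ IntermediateField.fixedField (Subgroup.zpowers (permHom K (Fin 8) γ)) := by
          rw [hE0, IntermediateField.adjoin_le_iff]
          rintro s hs
          rw [SetLike.mem_coe, IntermediateField.mem_fixedField_iff]
          have hs1 : permHom K (Fin 8) γ s = s := by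
            rcases hs with rfl | rfl
            · rw [map_div₀, hvf, hvf]
            · rw [map_div₀, hvf, hvf]
          intro f hf
          have : Subgroup.zpowers (permHom K (Fin 8) γ) ≤
              MulAction.stabilizer (RFF K (Fin 8) ≃ₐ[K] RFF K (Fin 8)) s := by
            rw [Subgroup.zpowers_le]
            exact hs1
          exact this hf
        intro x hx
        exact (IntermediateField.mem_fixedField_iff _ _).mp (this hx) _ (Subgroup.mem_zpowers _)
      have hwk : w k ∈ Submodule.span E0 (Set.range y) := by
        rw [← hw2]; exact Submodule.subset_span ⟨k, rfl⟩
      generalize w k = wk at hwk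
      induction hwk using Submodule.span_induction with
      | mem x hx => obtain ⟨i, rfl⟩ := hx; exact h2 i
      | zero => simp
      | add a b _ _ ha hb => rw [map_add, ha, hb]
      | smul c a _ ha =>
        rw [IntermediateField.smul_def, smul_eq_mul, map_mul, ha, hEf _ c.2]
  -- generators
  set a := iF6 (algebraMap K (RFF K (Fin 8)) α) (v 0) (v 1) (v 2) ^ 2 /
    iF4 (algebraMap K (RFF K (Fin 8)) α) (v 0) (v 1) (v 2) ^ 3 with ha
  set b := pF14 (algebraMap K (RFF K (Fin 8)) α) (is1 (v 0) (v 1) (v 2))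
        (iF4 (algebraMap K _ α) (v 0) (v 1) (v 2)) (iF6 (algebraMap K _ α) (v 0) (v 1) (v 2)) /
        (iF4 (algebraMap K (RFF K (Fin 8)) α) (v 0) (v 1) (v 2) ^ 2 *
          iF6 (algebraMap K (RFF K (Fin 8)) α) (v 0) (v 1) (v 2)) with hb
  set t : Fin 8 → RFF K (Fin 8) := Fin.cons a (Fin.cons b
    (fun i : Fin 6 => w (j0.succAbove i) / w j0)) with ht
  set B := IntermediateField.adjoin K (Set.range t) with hB
  have hm : ∀ i, t i ∈ B := fun i => IntermediateField.subset_adjoin _ _ ⟨i, rfl⟩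
  have hwB : ∀ k, w k / w j0 ∈ B := by
    intro k
    rcases eq_or_ne k j0 with rfl | hk
    · rw [div_self hj0]; exact one_mem B
    · obtain ⟨i, rfl⟩ := Fin.exists_succAbove_eq hk
      exact hm i.succ.succ
  apply ratExt_of_generators K G t
  · intro i
    rw [hG]
    apply mem_fixedSub_closure
    intro γ hγ
    obtain ⟨h4, h6, h14⟩ := hinvF γ hγ
    induction i using Fin.cases with
    | zero =>
      change permHom K (Fin 8) γ a = a
      rw [ha, map_div₀, map_pow, map_pow, h4, h6]
    | succ i =>
      induction i using Fin.cases with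
      | zero =>
        change permHom K (Fin 8) γ b = b
        rw [hb, map_div₀, map_mul, map_pow, h4, h6, h14]
      | succ i =>
        change permHom K (Fin 8) γ (w (j0.succAbove i) / w j0) = w (j0.succAbove i) / w j0
        rw [map_div₀, hwG γ hγ, hwG γ hγ]
  · have h168 := deg168 α hα (v 0) (v 1) (v 2) hz hs1 hF4 hF6 B (hm 0) (hm 1) n (by
      intro B' hBB' hx hy
      have hEB : E0 ≤ B' := by
        rw [hE0, IntermediateField.adjoin_le_iff]
        rintro s (rfl | rfl)
        · exact hx
        · exact hy
      apply hn B'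
      · intro i j
        have h1 : ∀ i, y i / w j0 ∈ B' := fun i =>
          span_div_mem hEB w (w j0) (fun k => hBB' (hwB k)) _
            (by rw [hw2]; exact Submodule.subset_span ⟨i, rfl⟩)
        have := div_mem (h1 i) (h1 j)
        rwa [div_div_div_cancel_right₀ hj0] at this
      · intro B'' h1 h2
        exact htop' B'' h2 (h1 hx) (h1 hy))
    exact ⟨h168.1, h168.2.trans hcard⟩

set_option linter.style.haveILetI false

def gp1 : Equiv.Perm (Fin 8) where
  toFun := ![0, 1, 4, 5, 6, 7, 2, 3]
  invFun := ![0, 1, 6, 7, 2, 3, 4, 5]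
  left_inv := by decide
  right_inv := by decide

def gp2 : Equiv.Perm (Fin 8) where
  toFun := ![2, 3, 7, 6, 0, 1, 5, 4]
  invFun := ![4, 5, 0, 1, 7, 6, 3, 2]
  left_inv := by decide
  right_inv := by decide

def gp3 : Equiv.Perm (Fin 8) where
  toFun := ![7, 2, 1, 4, 3, 6, 5, 0]
  invFun := ![7, 2, 1, 4, 3, 6, 5, 0]
  left_inv := by decide
  right_inv := by decide

def gt0 : Equiv.Perm (Fin 8) where
  toFun := ![1, 0, 3, 2, 5, 4, 7, 6]
  invFun := ![1, 0, 3, 2, 5, 4, 7, 6]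
  left_inv := by decide
  right_inv := by decide

def gc : Equiv.Perm (Fin 8) where
  toFun := ![0, 2, 4, 6, 3, 1, 7, 5]
  invFun := ![0, 5, 1, 4, 2, 7, 3, 6]
  left_inv := by decide
  right_inv := by decide

/-- Table of the three-dimensional representation: code of the linear part, image of zero,
digits of twice the matrix. -/
def TT : List (ℕ × ℕ × ℕ) := [
   (84, 0, 300030003), (102, 0, 3300030), (114, 0, 30003300), (159, 0, 182606172),
   (163, 0, 218660217), (188, 0, 821066721), (206, 0, 181605282), (247, 0, 811056822),
   (249, 0, 118560228), (286, 0, 721821066), (299, 0, 172182606), (309, 0, 217218660),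
   (330, 0, 282181605), (339, 0, 822811056), (345, 0, 228118560), (407, 0, 660217218),
   (426, 0, 66721821), (445, 0, 606172182), (460, 0, 605282181), (485, 0, 56822811),
   (489, 0, 560228118), (86, 1, 4040400), (98, 1, 400004040), (116, 1, 40400004),
   (204, 1, 171506272), (233, 1, 117650227), (229, 1, 711065722), (157, 1, 281505271),
   (174, 1, 812055712), (179, 1, 128550127), (334, 1, 272171506), (377, 1, 227117650),
   (375, 1, 722711065), (277, 1, 127128550), (303, 1, 271281505), (314, 1, 712812055),
   (458, 1, 506272171), (473, 1, 650227117), (467, 1, 65722711), (412, 1, 55712812),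
   (423, 1, 550127128), (443, 1, 505271281), (156, 2, 172505182), (187, 2, 217550218),
   (167, 2, 721055821), (205, 2, 282506181), (225, 2, 228650118), (236, 2, 822065811),
   (87, 2, 3040300), (125, 2, 30400003), (106, 2, 300004030), (403, 2, 56722822),
   (409, 2, 560227228), (394, 2, 605272282), (477, 2, 66712721), (499, 2, 606271172),
   (494, 2, 660127217), (271, 2, 181171605), (305, 2, 118117560), (318, 2, 811711056),
   (340, 2, 218128660), (370, 2, 821812066), (358, 2, 182281606), (207, 3, 272605171),
   (254, 3, 722056711), (241, 3, 227560117), (158, 3, 271606281), (181, 3, 712066812),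
   (171, 3, 127660128), (85, 3, 400030004), (122, 3, 40003400), (111, 3, 4300040),
   (470, 3, 550217127), (500, 3, 505172271), (482, 3, 55721712), (397, 3, 506282272),
   (428, 3, 65822722), (417, 3, 650228227), (351, 3, 812821055), (380, 3, 128218550),
   (355, 3, 281182505), (281, 3, 117118650), (275, 3, 711811065), (266, 3, 171181506),
   (302, 4, 182172505), (307, 4, 821721055), (285, 4, 218217550), (369, 4, 118228650),
   (382, 4, 811822065), (335, 4, 181282506), (395, 4, 605181171), (401, 4, 560118117),
   (410, 4, 56811711), (486, 4, 660218128), (498, 4, 606182281), (468, 4, 66821812),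
   (99, 4, 300003040), (124, 4, 30300004), (95, 4, 3030400), (165, 4, 822056722),
   (169, 4, 228560227), (140, 4, 282605272), (239, 4, 721066712), (250, 4, 217660127),
   (213, 4, 172606271), (331, 5, 171272605), (346, 5, 711722056), (337, 5, 117227560),
   (298, 5, 281271606), (317, 5, 128127660), (279, 5, 812712066), (491, 5, 55812821),
   (501, 5, 505281182), (478, 5, 550128218), (425, 5, 650117118), (421, 5, 65711811),
   (396, 5, 506171181), (103, 5, 4400030), (123, 5, 40004300), (92, 5, 400040003),
   (226, 5, 127550217), (244, 5, 712055721), (214, 5, 271505172), (190, 5, 722065822),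
   (177, 5, 227650228), (143, 5, 272506282), (442, 6, 505182172), (431, 6, 550218217),
   (405, 6, 55821721), (465, 6, 650118228), (474, 6, 65811822), (459, 6, 506181282),
   (311, 6, 722822056), (313, 6, 227228560), (270, 6, 272282605), (379, 6, 712721066),
   (359, 6, 271172606), (348, 6, 127217660), (161, 6, 117560118), (172, 6, 711056811),
   (141, 6, 171605181), (242, 6, 128660218), (230, 6, 812066821), (212, 6, 281606182),
   (117, 6, 40300003), (107, 6, 400003030), (94, 6, 4030300), (492, 7, 56711722),
   (481, 7, 560117227), (461, 7, 605171272), (444, 7, 606281271), (419, 7, 66812712),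
   (415, 7, 660128127), (372, 7, 217127550), (354, 7, 172271505), (342, 7, 721712055),
   (282, 7, 822722065), (273, 7, 228227650), (267, 7, 282272506), (253, 7, 821055812),
   (234, 7, 218550128), (215, 7, 182505281), (185, 7, 118650117), (183, 7, 811065711),
   (142, 7, 181506171), (115, 7, 30004400), (110, 7, 3400040), (93, 7, 300040004)]

def zdec : ℕ → ℤ × ℤ
  | 0 => (0, 0)
  | 1 => (1, 0)
  | 2 => (-1, 0)
  | 3 => (2, 0)
  | 4 => (-2, 0)
  | 5 => (0, 1)
  | 6 => (0, -1)
  | 7 => (1, -1)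
  | _ => (-1, 1)

def zmul (p q : ℤ × ℤ) : ℤ × ℤ := (p.1 * q.1 - 2 * p.2 * q.2, p.1 * q.2 + p.2 * q.1 + p.2 * q.2)

def mdig (m : ℕ) (i j : Fin 3) : ℤ × ℤ := zdec (m / 10 ^ (8 - (3 * i.val + j.val)) % 10)

def lin (γ : Equiv.Perm (Fin 8)) (v : Fin 8) : Fin 8 := γ v ^^^ γ 0

def fin8 (n : ℕ) : Fin 8 := ⟨n % 8, Nat.mod_lt _ (by norm_num)⟩

def stepc (γ : Equiv.Perm (Fin 8)) (n : ℕ) : ℕ :=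
  ((lin γ (fin8 (n / 64))).val * 8 + (lin γ (fin8 (n / 8))).val) * 8 + (lin γ (fin8 n)).val

def code (σ : Equiv.Perm (Fin 8)) : ℕ :=
  ((σ 1 ^^^ σ 0).val * 8 + (σ 2 ^^^ σ 0).val) * 8 + (σ 4 ^^^ σ 0).val

def isAff (γ : Equiv.Perm (Fin 8)) : Prop := ∀ a b c : Fin 8, γ (a ^^^ b ^^^ c) = γ a ^^^ γ b ^^^ γ c

instance (γ : Equiv.Perm (Fin 8)) : Decidable (isAff γ) := by unfold isAff; infer_instance

def matok (g m m' : ℕ) : Bool :=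
  (List.finRange 3).all fun i => (List.finRange 3).all fun j =>
    (zmul (mdig g i 0) (mdig m 0 j) + zmul (mdig g i 1) (mdig m 1 j) + zmul (mdig g i 2) (mdig m 2 j) ==
      (mdig m' i j + mdig m' i j))

def chkA (γ : Equiv.Perm (Fin 8)) (g : ℕ) : Bool :=
  TT.all fun e => TT.any fun e' => Nat.beq e'.1 (stepc γ e.1) && matok g e.2.2 e'.2.2

def chkH (γ : Equiv.Perm (Fin 8)) : Bool :=
  TT.all fun e => TT.any fun e' => Nat.beq e'.1 (stepc γ e.1) &&
    Nat.beq e'.2.1 (γ (fin8 e.2.1)).val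

def md1 : ℕ := 3300030
def md2 : ℕ := 300004030
def md3 : ℕ := 217127550
def md0 : ℕ := 300030003

set_option maxRecDepth 100000
theorem chkA1 : chkA gp1 md1 = true := by decide +kernel
theorem chkA2 : chkA gp2 md2 = true := by decide +kernel
theorem chkA3 : chkA gp3 md3 = true := by decide +kernel
theorem chkA0 : chkA gt0 md0 = true := by decide +kernel
theorem chkH1 : chkH gp1 = true := by decide +kernel
theorem chkH2 : chkH gp2 = true := by decide +kernel
theorem chkH3 : chkH gp3 = true := by decide +kernel
theorem TT_nodup : (TT.map Prod.fst).Nodup := by decide +kernel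

set_option linter.all false

section rep
variable {K : Type} [Field K] [CharZero K]

def zev (α : K) (p : ℤ × ℤ) : K := (p.1 : K) + (p.2 : K) * α

theorem zev_mul (α : K) (hα : α ^ 2 = α - 2) (p q : ℤ × ℤ) :
    zev α (zmul p q) = zev α p * zev α q := by
  simp only [zev, zmul]; push_cast
  linear_combination -(p.2 : K) * q.2 * hα

theorem zev_add (α : K) (p q : ℤ × ℤ) : zev α (p + q) = zev α p + zev α q := by
  simp only [zev, Prod.fst_add, Prod.snd_add]; push_cast; ring

def IsM (α : K) (m : ℕ) (M : Matrix (Fin 3) (Fin 3) K) : Prop :=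
  ∀ i j, 2 * M i j = zev α (mdig m i j)

theorem IsM_unique (α : K) (m : ℕ) (M M' : Matrix (Fin 3) (Fin 3) K) (h : IsM α m M)
    (h' : IsM α m M') : M = M' := by
  ext i j
  have := (h i j).trans (h' i j).symm
  exact mul_left_cancel₀ two_ne_zero this

theorem IsM_mul (α : K) (hα : α ^ 2 = α - 2) (g m m' : ℕ) (R M : Matrix (Fin 3) (Fin 3) K)
    (hg : IsM α g R) (hm : IsM α m M) (h : matok g m m' = true) : IsM α m' (R * M) := by
  intro i j
  simp only [matok, List.all_eq_true, beq_iff_eq] at h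
  have h1 := congrArg (zev α) (h i (List.mem_finRange i) j (List.mem_finRange j))
  simp only [zev_add, zev_mul α hα, ← hg i _, ← hm _ j] at h1
  rw [Matrix.mul_apply, Fin.sum_univ_three]
  have h2 : 2 * zev α (mdig m' i j) = 2 * (2 * (R i 0 * M 0 j + R i 1 * M 1 j + R i 2 * M 2 j)) := by
    linear_combination -h1
  exact (mul_left_cancel₀ two_ne_zero h2).symm

def RhoRel (α : K) (σ : Equiv.Perm (Fin 8)) (M : Matrix (Fin 3) (Fin 3) K) : Prop :=
  ∃ e ∈ TT, code σ = e.1 ∧ IsM α e.2.2 M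

theorem TT_inj {e e' : ℕ × ℕ × ℕ} (he : e ∈ TT) (he' : e' ∈ TT) (h : e.1 = e'.1) : e = e' :=
  List.inj_on_of_nodup_map TT_nodup he he' h

theorem Rel_unique (α : K) (σ : Equiv.Perm (Fin 8)) (M M' : Matrix (Fin 3) (Fin 3) K)
    (h : RhoRel α σ M) (h' : RhoRel α σ M') : M = M' := by
  obtain ⟨e, he, h1, h2⟩ := h
  obtain ⟨e', he', h1', h2'⟩ := h'
  have := TT_inj he he' (h1.symm.trans h1')
  subst this
  exact IsM_unique α _ _ _ h2 h2'

theorem code_step (γ σ : Equiv.Perm (Fin 8)) (hγ : ∀ a b, γ a ^^^ γ b = lin γ (a ^^^ b)) :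
    code (γ * σ) = stepc γ (code σ) := by
  have hf : ∀ a b c : Fin 8, fin8 (((a.val * 8 + b.val) * 8 + c.val) / 64) = a ∧
    fin8 (((a.val * 8 + b.val) * 8 + c.val) / 8) = b ∧
    fin8 (((a.val * 8 + b.val) * 8 + c.val)) = c := by
    intro a b c
    simp only [fin8, Fin.ext_iff]
    have := a.2; have := b.2; have := c.2
    omega
  simp only [stepc, code, Equiv.Perm.mul_apply, hγ, (hf _ _ _).1, (hf _ _ _).2.1, (hf _ _ _).2.2]

theorem Rel_step (α : K) (hα : α ^ 2 = α - 2) (γ : Equiv.Perm (Fin 8)) (g : ℕ)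
    (hγ : ∀ a b, γ a ^^^ γ b = lin γ (a ^^^ b)) (hc : chkA γ g = true)
    (R : Matrix (Fin 3) (Fin 3) K) (hR : IsM α g R) (σ : Equiv.Perm (Fin 8))
    (M : Matrix (Fin 3) (Fin 3) K) (h : RhoRel α σ M) : RhoRel α (γ * σ) (R * M) := by
  obtain ⟨e, he, h1, h2⟩ := h
  simp only [chkA, List.all_eq_true, List.any_eq_true, Bool.and_eq_true] at hc
  obtain ⟨e', he', h3, h4⟩ := hc e he
  exact ⟨e', he', by rw [code_step γ σ hγ, h1, Nat.eq_of_beq_eq_true h3], IsM_mul α hα _ _ _ _ _ hR h2 h4⟩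

def gA1 : Subgroup (Equiv.Perm (Fin 8)) := Subgroup.closure {gt0, gp1, gp2, gp3}
def gH : Subgroup (Equiv.Perm (Fin 8)) := Subgroup.closure {gp1, gp2, gp3}

theorem isM1 (α : K) : IsM α md1 (MM1 K) := by
  intro i j
  fin_cases i <;> fin_cases j <;> simp [MM1, mdig, md1, zdec, zev]
theorem isM2 (α : K) : IsM α md2 (MM2 K) := by
  intro i j
  fin_cases i <;> fin_cases j <;> simp [MM2, mdig, md2, zdec, zev]
theorem isM3 (α : K) : IsM α md3 (MM3 K α) := by
  intro i j
  fin_cases i <;> fin_cases j <;> simp [MM3, mdig, md3, zdec, zev] <;> field_simp <;> ring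
theorem isM0 (α : K) : IsM α md0 (1 : Matrix (Fin 3) (Fin 3) K) := by
  intro i j
  fin_cases i <;> fin_cases j <;> simp [mdig, md0, zdec, zev]

theorem Rel_one (α : K) : RhoRel α 1 1 :=
  ⟨(84, 0, md0), by decide +kernel, by decide +kernel, isM0 α⟩

def LMul (α : K) (σ : Equiv.Perm (Fin 8)) (R : Matrix (Fin 3) (Fin 3) K) : Prop :=
  ∀ τ M, RhoRel α τ M → RhoRel α (σ * τ) (R * M)

theorem LMul_gens (α : K) (hα : α ^ 2 = α - 2) :
    LMul α gt0 1 ∧ LMul α gp1 (MM1 K) ∧ LMul α gp2 (MM2 K) ∧ LMul α gp3 (MM3 K α) :=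
  ⟨fun τ M h => Rel_step α hα gt0 md0 (by decide) chkA0 1 (isM0 α) τ M h,
   fun τ M h => Rel_step α hα gp1 md1 (by decide) chkA1 _ (isM1 α) τ M h,
   fun τ M h => Rel_step α hα gp2 md2 (by decide) chkA2 _ (isM2 α) τ M h,
   fun τ M h => Rel_step α hα gp3 md3 (by decide) chkA3 _ (isM3 α) τ M h⟩

theorem LMul_exists (α : K) (hα : α ^ 2 = α - 2) (σ : Equiv.Perm (Fin 8)) (hσ : σ ∈ gA1) :
    ∃ R : Matrix (Fin 3) (Fin 3) K, LMul α σ R := by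
  obtain ⟨h0, h1, h2, h3⟩ := LMul_gens α hα
  have hmul : ∀ a b R S, LMul α a R → LMul α b S → LMul α (a * b) (R * S) := by
    intro a b R S ha hb τ M h
    rw [mul_assoc, mul_assoc]
    exact ha _ _ (hb _ _ h)
  have hone : LMul α 1 1 := by
    intro τ M h
    rwa [one_mul, one_mul]
  induction hσ using Subgroup.closure_induction with
  | mem γ hγ =>
    rcases hγ with rfl | rfl | rfl | rfl
    exacts [⟨_, h0⟩, ⟨_, h1⟩, ⟨_, h2⟩, ⟨_, h3⟩]
  | one => exact ⟨1, hone⟩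
  | mul a b _ _ ha hb =>
    obtain ⟨R, hR⟩ := ha
    obtain ⟨S, hS⟩ := hb
    exact ⟨R * S, hmul _ _ _ _ hR hS⟩
  | inv a _ ha =>
    obtain ⟨R, hR⟩ := ha
    have hp : ∀ n : ℕ, LMul α (a ^ n) (R ^ n) := by
      intro n
      induction n with
      | zero => simpa using hone
      | succ n ih => rw [pow_succ, pow_succ]; exact hmul _ _ _ _ ih hR
    refine ⟨R ^ (orderOf a - 1), ?_⟩
    have : a⁻¹ = a ^ (orderOf a - 1) := by
      rw [inv_eq_iff_mul_eq_one, ← pow_succ', Nat.sub_add_cancel (orderOf_pos a), pow_orderOf_eq_one]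
    rw [this]
    exact hp _

noncomputable def rho (α : K) (hα : α ^ 2 = α - 2) (g : gA1) : Matrix (Fin 3) (Fin 3) K :=
  (LMul_exists α hα g g.2).choose

theorem rho_LMul (α : K) (hα : α ^ 2 = α - 2) (g : gA1) : LMul α g (rho α hα g) :=
  (LMul_exists α hα g g.2).choose_spec

theorem LMul_rel (α : K) (g : Equiv.Perm (Fin 8)) (R : Matrix (Fin 3) (Fin 3) K)
    (h : LMul α g R) : RhoRel α g R := by
  simpa using h 1 1 (Rel_one α)

theorem rho_eq (α : K) (hα : α ^ 2 = α - 2) (g : gA1) (R : Matrix (Fin 3) (Fin 3) K)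
    (h : LMul α g R) : rho α hα g = R :=
  Rel_unique α _ _ _ (LMul_rel α _ _ (rho_LMul α hα g)) (LMul_rel α _ _ h)

theorem rho_one (α : K) (hα : α ^ 2 = α - 2) : rho α hα 1 = 1 := by
  apply rho_eq
  intro τ M h
  simpa using h

theorem rho_mul (α : K) (hα : α ^ 2 = α - 2) (g h : gA1) :
    rho α hα (g * h) = rho α hα g * rho α hα h := by
  apply rho_eq
  intro τ M hM
  rw [mul_assoc, Subgroup.coe_mul, mul_assoc]
  exact rho_LMul α hα g _ _ (rho_LMul α hα h _ _ hM)

theorem gH_le : gH ≤ gA1 := by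
  apply Subgroup.closure_mono
  intro x hx
  exact Or.inr hx

/-- Elements of `gH` together with the image of zero appear in the table. -/
theorem gH_tab (σ : Equiv.Perm (Fin 8)) (hσ : σ ∈ gH) :
    ∃ e ∈ TT, code σ = e.1 ∧ (σ 0).val = e.2.1 := by
  let Q : Equiv.Perm (Fin 8) → Prop := fun τ => ∃ e ∈ TT, code τ = e.1 ∧ (τ 0).val = e.2.1
  have step : ∀ γ : Equiv.Perm (Fin 8), (∀ a b, γ a ^^^ γ b = lin γ (a ^^^ b)) → chkH γ = true →
      ∀ τ, Q τ → Q (γ * τ) := by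
    intro γ hγ hc τ ⟨e, he, h1, h2⟩
    simp only [chkH, List.all_eq_true, List.any_eq_true, Bool.and_eq_true] at hc
    obtain ⟨e', he', h3, h4⟩ := hc e he
    refine ⟨e', he', by rw [code_step γ τ hγ, h1, Nat.eq_of_beq_eq_true h3], ?_⟩
    rw [Nat.eq_of_beq_eq_true h4, ← h2]
    simp [fin8, Nat.mod_eq_of_lt]
  have hall : ∀ τ, Q τ → Q (σ * τ) := by
    induction hσ using Subgroup.closure_induction with
    | mem γ hγ =>
      rcases hγ with rfl | rfl | rfl
      · exact step _ (by decide) chkH1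
      · exact step _ (by decide) chkH2
      · exact step _ (by decide) chkH3
    | one => intro τ h; simpa using h
    | mul a b _ _ ha hb =>
      intro τ h
      rw [mul_assoc]
      exact ha _ (hb _ h)
    | inv a _ ha =>
      have hp : ∀ n : ℕ, ∀ τ, Q τ → Q (a ^ n * τ) := by
        intro n
        induction n with
        | zero => intro τ h; simpa using h
        | succ n ih => intro τ h; rw [pow_succ, mul_assoc]; exact ih _ (ha _ h)
      have : a⁻¹ = a ^ (orderOf a - 1) := by
        rw [inv_eq_iff_mul_eq_one, ← pow_succ', Nat.sub_add_cancel (orderOf_pos a), pow_orderOf_eq_one]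
      rw [this]
      exact hp _
  have := hall 1 ⟨(84, 0, md0), by decide +kernel, by decide +kernel, by decide +kernel⟩
  simpa [Q] using this

theorem gA1_aff (σ : Equiv.Perm (Fin 8)) (hσ : σ ∈ gA1) : isAff σ := by
  induction hσ using Subgroup.closure_induction with
  | mem γ hγ =>
    rcases hγ with rfl | rfl | rfl | rfl <;> decide
  | one => intro a b c; rfl
  | mul a b _ _ ha hb =>
    intro x y z
    simp only [Equiv.Perm.mul_apply]
    rw [hb, ha]
  | inv a _ ha =>
    intro x y z
    apply a.injective
    rw [ha]
    simp

theorem gH_one_of_code (σ : Equiv.Perm (Fin 8)) (hσ : σ ∈ gH) (h : code σ = 84) : σ = 1 := by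
  obtain ⟨e, he, h1, h2⟩ := gH_tab σ hσ
  have h3 : e = (84, 0, md0) := TT_inj he (by decide +kernel) (by rw [← h1, h])
  subst h3
  have h0 : σ 0 = 0 := Fin.ext h2
  have hx : ∀ a : Fin 8, a ^^^ 0 = a := by decide
  simp only [code, h0, hx] at h
  have b1 := (σ 1).2
  have b2 := (σ 2).2
  have b4 := (σ 4).2
  have e1 : σ 1 = 1 := Fin.ext (by simp; omega)
  have e2 : σ 2 = 2 := Fin.ext (by simp; omega)
  have e4 : σ 4 = 4 := Fin.ext (by simp; omega)
  have haff := gA1_aff σ (gH_le hσ)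
  have e3 : σ 3 = 3 := by
    have := haff 1 2 0
    rw [e1, e2, h0] at this
    exact this
  have e5 : σ 5 = 5 := by
    have := haff 1 4 0
    rw [e1, e4, h0] at this
    exact this
  have e6 : σ 6 = 6 := by
    have := haff 2 4 0
    rw [e2, e4, h0] at this
    exact this
  have e7 : σ 7 = 7 := by
    have := haff 1 2 4
    rw [e1, e2, e4] at this
    exact this
  ext i
  fin_cases i <;> simp [h0, e1, e2, e3, e4, e5, e6, e7]

theorem TT_scalar : TT.all (fun e => Nat.beq e.1 84 ||
    !(mdig e.2.2 0 1 == (0, 0) && mdig e.2.2 0 2 == (0, 0) && mdig e.2.2 1 2 == (0, 0) &&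
      mdig e.2.2 0 0 == mdig e.2.2 1 1 && mdig e.2.2 0 0 == mdig e.2.2 2 2)) = true := by
  decide +kernel

theorem zev_eq_zero (α : K) (hα : α ^ 2 = α - 2) (p : ℤ × ℤ) (h : zev α p = 0) : p = (0, 0) := by
  obtain ⟨a, b⟩ := p
  simp only [zev] at h
  have h1 : ((a ^ 2 + a * b + 2 * b ^ 2 : ℤ) : K) = 0 := by
    push_cast
    linear_combination ((a : K) + b - b * α) * h + (b : K) ^ 2 * hα
  have h2 : a ^ 2 + a * b + 2 * b ^ 2 = 0 := by exact_mod_cast h1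
  have hb : b = 0 := by
    by_contra hb
    have : 0 < b ^ 2 := by positivity
    nlinarith [sq_nonneg (2 * a + b)]
  subst hb
  have ha : a = 0 := by
    simpa using h2
  rw [ha]

theorem zev_inj (α : K) (hα : α ^ 2 = α - 2) (p q : ℤ × ℤ) (h : zev α p = zev α q) : p = q := by
  have h1 : zev α (p - q) = 0 := by
    simp only [zev, Prod.fst_sub, Prod.snd_sub] at h ⊢
    push_cast
    linear_combination h
  have := zev_eq_zero α hα _ h1
  exact sub_eq_zero.mp this

theorem rho_scalar (α : K) (hα : α ^ 2 = α - 2) (σ : Equiv.Perm (Fin 8)) (hσ : σ ∈ gH)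
    (h : ∃ c : K, rho α hα ⟨σ, gH_le hσ⟩ = c • (1 : Matrix (Fin 3) (Fin 3) K)) : σ = 1 := by
  obtain ⟨c, hc⟩ := h
  apply gH_one_of_code σ hσ
  obtain ⟨e, he, h1, h2⟩ := LMul_rel α _ _ (rho_LMul α hα ⟨σ, gH_le hσ⟩)
  rw [hc] at h2
  have hall := TT_scalar
  rw [List.all_eq_true] at hall
  have h3 := hall e he
  have z : ∀ i j, i ≠ j → mdig e.2.2 i j = (0, 0) := by
    intro i j hij
    apply zev_eq_zero α hα
    rw [← h2 i j]
    simp [hij]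
  have dd : ∀ i j, mdig e.2.2 i i = mdig e.2.2 j j := by
    intro i j
    apply zev_inj α hα
    rw [← h2 i i, ← h2 j j]
    simp
  rw [z 0 1 (by decide), z 0 2 (by decide), z 1 2 (by decide), dd 1 0, dd 2 0] at h3
  simp at h3
  have h4 : e.1 = 84 := h3
  rw [← h4, ← h1]

end rep

set_option linter.all false

theorem deg8 {K L : Type} [Field K] [Field L] [Algebra K L] (B : IntermediateField K L)
    (y1 y2 y3 y4 y5 y6 y7 : L) (h1 : y1 ≠ 0) (h2 : y2 ≠ 0) (h3 : y3 ≠ 0) (h4 : y4 ≠ 0)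
    (h5 : y5 ≠ 0) (h6 : y6 ≠ 0) (h7 : y7 ≠ 0) (z : Fin 7 → L)
    (hz : z = ![y1 * y2 * y3, y1 * y4 * y5, y1 * y6 * y7, y2 * y4 * y6, y2 * y5 * y7,
      y3 * y4 * y7, y3 * y5 * y6]) (hr : ∀ i j, z i / z j ∈ B)
    (hn : ∀ B' : IntermediateField K L, B ≤ B' → y2 / y1 ∈ B' → y3 / y1 ∈ B' → y4 / y1 ∈ B' →
      y5 / y1 ∈ B' → y6 / y1 ∈ B' → y7 / y1 ∈ B' →
      FiniteDimensional B' L ∧ Module.finrank B' L ≤ 1) :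
    FiniteDimensional B L ∧ Module.finrank B L ≤ 8 := by
  have z0 : z 0 = y1 * y2 * y3 := by rw [hz]; rfl
  have z1 : z 1 = y1 * y4 * y5 := by rw [hz]; rfl
  have z2 : z 2 = y1 * y6 * y7 := by rw [hz]; rfl
  have z3 : z 3 = y2 * y4 * y6 := by rw [hz]; rfl
  have z4 : z 4 = y2 * y5 * y7 := by rw [hz]; rfl
  have z5 : z 5 = y3 * y4 * y7 := by rw [hz]; rfl
  have z6 : z 6 = y3 * y5 * y6 := by rw [hz]; rfl
  have s1 : (y2 / y3) ^ 2 ∈ B := by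
    have := mul_mem (hr 3 5) (hr 4 6)
    rw [z3, z4, z5, z6] at this
    convert this using 1
    field_simp
  have s2 : (y1 / y3) ^ 2 ∈ B := by
    have := mul_mem (hr 1 5) (hr 2 6)
    rw [z1, z2, z5, z6] at this
    convert this using 1
    field_simp
  have s3 : (y1 / y5) ^ 2 ∈ B := by
    have := mul_mem (hr 0 4) (hr 2 6)
    rw [z0, z2, z4, z6] at this
    convert this using 1
    field_simp
  refine deg_sqrt B (y2 / y3) 4 s1 ?_
  refine deg_sqrt (B ⊔ IntermediateField.adjoin K {y2 / y3}) (y1 / y3) 2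
    ((le_sup_left : B ≤ _) s2) ?_
  refine deg_sqrt (B ⊔ IntermediateField.adjoin K {y2 / y3} ⊔ IntermediateField.adjoin K {y1 / y3})
    (y1 / y5) 1 ((le_sup_left.trans le_sup_left : B ≤ _) s3) ?_
  set B' := B ⊔ IntermediateField.adjoin K {y2 / y3} ⊔ IntermediateField.adjoin K {y1 / y3} ⊔
    IntermediateField.adjoin K {y1 / y5} with hB'
  have hle : B ≤ B' := le_sup_left.trans (le_sup_left.trans le_sup_left)
  have t1 : y2 / y3 ∈ B' := ((le_sup_right.trans le_sup_left).trans le_sup_left :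
    IntermediateField.adjoin K {y2 / y3} ≤ B') (IntermediateField.mem_adjoin_simple_self K _)
  have t2 : y1 / y3 ∈ B' := (le_sup_right.trans le_sup_left :
    IntermediateField.adjoin K {y1 / y3} ≤ B') (IntermediateField.mem_adjoin_simple_self K _)
  have t3 : y1 / y5 ∈ B' := (le_sup_right :
    IntermediateField.adjoin K {y1 / y5} ≤ B') (IntermediateField.mem_adjoin_simple_self K _)
  have hr' : ∀ i j, z i / z j ∈ B' := fun i j => hle (hr i j)
  have r3 : y3 / y1 ∈ B' := by
    have := inv_mem t2
    rwa [inv_div] at this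
  have r5 : y5 / y1 ∈ B' := by
    have := inv_mem t3
    rwa [inv_div] at this
  have r2 : y2 / y1 ∈ B' := by
    have := mul_mem t1 r3
    convert this using 1
    field_simp
  have r35 : y3 / y5 ∈ B' := by
    have := div_mem r3 r5
    rwa [div_div_div_cancel_right₀ h1] at this
  have r25 : y2 / y5 ∈ B' := by
    have := div_mem r2 r5
    rwa [div_div_div_cancel_right₀ h1] at this
  apply hn B' hle r2 r3 ?_ r5 ?_ ?_
  · have := mul_mem (mul_mem (hr' 1 0) r25) r3
    rw [z1, z0] at this
    convert this using 1
    field_simp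
  · have := mul_mem (hr' 6 0) r25
    rw [z6, z0] at this
    convert this using 1
    field_simp
  · have := mul_mem (hr' 4 0) r35
    rw [z4, z0] at this
    convert this using 1
    field_simp

def hs (χ v : Fin 8) : ℤ := ![1, -1, -1, 1, -1, 1, 1, -1] (χ &&& v)

section
variable (K : Type) [Field K]
noncomputable def yc (χ : Fin 8) : RFF K (Fin 8) := ∑ v, (hs χ v : RFF K (Fin 8)) * Xvar K (Fin 8) v

theorem yc_act (γ : Equiv.Perm (Fin 8)) (χ χ' : Fin 8) (s : ℤ)
    (h : ∀ v, hs χ v = s * hs χ' (γ v)) :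
    permHom K (Fin 8) γ (yc K χ) = s * yc K χ' := by
  simp only [yc, map_sum, map_mul, map_intCast, permHom_X]
  rw [Finset.mul_sum, ← Equiv.sum_comp γ (fun i => (s : RFF K (Fin 8)) * ((hs χ' i : RFF K (Fin 8)) * Xvar K (Fin 8) i))]
  refine Finset.sum_congr rfl fun v _ => ?_
  rw [h v]; push_cast; ring

theorem yc_pos (γ : Equiv.Perm (Fin 8)) (χ χ' : Fin 8)
    (h : ∀ v, hs χ v = 1 * hs χ' (γ v)) :
    permHom K (Fin 8) γ (yc K χ) = yc K χ' := by
  rw [yc_act K γ χ χ' 1 h]; simp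

theorem yc_neg (γ : Equiv.Perm (Fin 8)) (χ χ' : Fin 8)
    (h : ∀ v, hs χ v = -1 * hs χ' (γ v)) :
    permHom K (Fin 8) γ (yc K χ) = -yc K χ' := by
  rw [yc_act K γ χ χ' (-1) h]; simp

theorem yc_ne [CharZero K] (χ : Fin 8) : yc K χ ≠ 0 := by
  intro h
  have h1 : yc K χ = algebraMap (MvPolynomial (Fin 8) K) (RFF K (Fin 8))
      (∑ v, (hs χ v : MvPolynomial (Fin 8) K) * MvPolynomial.X v) := by
    simp only [yc, Xvar, map_sum, map_mul, map_intCast]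
  rw [h1] at h
  have h2 := (map_eq_zero_iff _ (IsFractionRing.injective (MvPolynomial (Fin 8) K) (RFF K (Fin 8)))).mp h
  have h3 := congrArg (MvPolynomial.eval (Pi.single (0 : Fin 8) (1 : K))) h2
  simp only [map_sum, map_mul, map_intCast, MvPolynomial.eval_X, map_zero] at h3
  rw [Finset.sum_eq_single (0 : Fin 8)] at h3
  · have h4 : hs χ 0 = 1 := by clear h3 h2 h h1; revert χ; decide
    rw [h4] at h3
    simp at h3
  · intro b _ hb
    simp [hb]
  · simp

theorem dv_yc [CharZero K] (k : Fin 7) :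
    (8 : RFF K (Fin 8)) * dv K k = ∑ χ : Fin 7, ((hs χ.succ k.succ - 1 : ℤ) : RFF K (Fin 8)) * yc K χ.succ := by
  have h : ∀ a v : Fin 8, ∑ χ : Fin 7, (hs χ.succ a - 1) * hs χ.succ v =
      8 * ((if v = a then 1 else 0) - (if v = 0 then 1 else 0)) := by decide
  simp only [yc, Finset.mul_sum]
  rw [Finset.sum_comm]
  have h2 : ∀ v : Fin 8, ∑ χ : Fin 7, ((hs χ.succ k.succ - 1 : ℤ) : RFF K (Fin 8)) *
      ((hs χ.succ v : RFF K (Fin 8)) * Xvar K (Fin 8) v) =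
      ((8 * ((if v = k.succ then 1 else 0) - (if v = 0 then 1 else 0)) : ℤ) : RFF K (Fin 8)) * Xvar K (Fin 8) v := by
    intro v
    rw [← h, Int.cast_sum, Finset.sum_mul]
    refine Finset.sum_congr rfl fun χ _ => ?_
    push_cast; ring
  rw [Finset.sum_congr rfl fun v _ => h2 v]
  push_cast
  simp only [mul_sub, sub_mul, Finset.sum_sub_distrib, mul_ite, ite_mul, mul_one, mul_zero, zero_mul,
    Finset.sum_ite_eq', Finset.mem_univ, if_true, dv]

noncomputable def zl : Fin 7 → RFF K (Fin 8) :=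
  ![yc K 1 * yc K 2 * yc K 3, yc K 1 * yc K 4 * yc K 5, yc K 1 * yc K 6 * yc K 7,
    yc K 2 * yc K 4 * yc K 6, yc K 2 * yc K 5 * yc K 7, yc K 3 * yc K 4 * yc K 7,
    yc K 3 * yc K 5 * yc K 6]

theorem zl_t0 (k : Fin 7) : permHom K (Fin 8) gt0 (zl K k) = zl K k := by
  have h1 := yc_neg K gt0 1 1 (by decide)
  have h2 := yc_pos K gt0 2 2 (by decide)
  have h3 := yc_neg K gt0 3 3 (by decide)
  have h4 := yc_pos K gt0 4 4 (by decide)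
  have h5 := yc_neg K gt0 5 5 (by decide)
  have h6 := yc_pos K gt0 6 6 (by decide)
  have h7 := yc_neg K gt0 7 7 (by decide)
  fin_cases k <;> simp [zl, h1, h2, h3, h4, h5, h6, h7]

theorem zl_p1 (k : Fin 7) : ∃ l, permHom K (Fin 8) gp1 (zl K k) = zl K l := by
  have h1 := yc_pos K gp1 1 1 (by decide)
  have h2 := yc_pos K gp1 2 6 (by decide)
  have h3 := yc_pos K gp1 3 7 (by decide)
  have h4 := yc_pos K gp1 4 2 (by decide)
  have h5 := yc_pos K gp1 5 3 (by decide)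
  have h6 := yc_pos K gp1 6 4 (by decide)
  have h7 := yc_pos K gp1 7 5 (by decide)
  refine ⟨![2, 0, 1, 3, 6, 4, 5] k, ?_⟩
  fin_cases k <;> change permHom K (Fin 8) gp1 (yc K _ * yc K _ * yc K _) = yc K _ * yc K _ * yc K _ <;>
    rw [map_mul, map_mul] <;> simp only [h1, h2, h3, h4, h5, h6, h7] <;> ring

theorem zl_p2 (k : Fin 7) : ∃ l, permHom K (Fin 8) gp2 (zl K k) = zl K l := by
  have h1 := yc_pos K gp2 1 5 (by decide)
  have h2 := yc_pos K gp2 2 4 (by decide)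
  have h3 := yc_pos K gp2 3 1 (by decide)
  have h4 := yc_neg K gp2 4 2 (by decide)
  have h5 := yc_neg K gp2 5 7 (by decide)
  have h6 := yc_neg K gp2 6 6 (by decide)
  have h7 := yc_neg K gp2 7 3 (by decide)
  refine ⟨![1, 4, 6, 3, 5, 0, 2] k, ?_⟩
  fin_cases k <;> change permHom K (Fin 8) gp2 (yc K _ * yc K _ * yc K _) = yc K _ * yc K _ * yc K _ <;>
    rw [map_mul, map_mul] <;> simp only [h1, h2, h3, h4, h5, h6, h7] <;> ring

theorem zl_p3 (k : Fin 7) : ∃ l, permHom K (Fin 8) gp3 (zl K k) = zl K l := by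
  have h1 := yc_neg K gp3 1 1 (by decide)
  have h2 := yc_neg K gp3 2 2 (by decide)
  have h3 := yc_pos K gp3 3 3 (by decide)
  have h4 := yc_neg K gp3 4 7 (by decide)
  have h5 := yc_pos K gp3 5 6 (by decide)
  have h6 := yc_pos K gp3 6 5 (by decide)
  have h7 := yc_neg K gp3 7 4 (by decide)
  refine ⟨![0, 2, 1, 4, 3, 5, 6] k, ?_⟩
  fin_cases k <;> change permHom K (Fin 8) gp3 (yc K _ * yc K _ * yc K _) = yc K _ * yc K _ * yc K _ <;>
    rw [map_mul, map_mul] <;> simp only [h1, h2, h3, h4, h5, h6, h7] <;> ring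

theorem zl_H (h : Equiv.Perm (Fin 8)) (hh : h ∈ gH) : ∀ k, ∃ l, permHom K (Fin 8) h (zl K k) = zl K l := by
  induction hh using Subgroup.closure_induction with
  | mem γ hγ =>
    rcases hγ with rfl | rfl | rfl
    exacts [zl_p1 K, zl_p2 K, zl_p3 K]
  | one => intro k; exact ⟨k, by simp⟩
  | mul a b _ _ ha hb =>
    intro k
    obtain ⟨l, hl⟩ := hb k
    obtain ⟨m, hm⟩ := ha l
    exact ⟨m, by rw [map_mul, AlgEquiv.mul_apply, hl, hm]⟩
  | inv a _ ha =>
    have hp : ∀ n : ℕ, ∀ k, ∃ l, permHom K (Fin 8) (a ^ n) (zl K k) = zl K l := by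
      intro n
      induction n with
      | zero => intro k; exact ⟨k, by simp⟩
      | succ n ih =>
        intro k
        obtain ⟨l, hl⟩ := ha k
        obtain ⟨m, hm⟩ := ih l
        exact ⟨m, by rw [pow_succ, map_mul, AlgEquiv.mul_apply, hl, hm]⟩
    have : a⁻¹ = a ^ (orderOf a - 1) := by
      rw [inv_eq_iff_mul_eq_one, ← pow_succ', Nat.sub_add_cancel (orderOf_pos a), pow_orderOf_eq_one]
    rw [this]
    exact hp _

theorem zl_deg [CharZero K] (B : IntermediateField K (RFF K (Fin 8))) (hB : ∀ i j, zl K i / zl K j ∈ B)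
    (htop : ∀ B' : IntermediateField K (RFF K (Fin 8)), B ≤ B' → F0 K ≤ B' → B' = ⊤) :
    FiniteDimensional B (RFF K (Fin 8)) ∧ Module.finrank B (RFF K (Fin 8)) ≤ 8 := by
  haveI : CharZero (RFF K (Fin 8)) := charZero_of_injective_algebraMap
    (algebraMap K (RFF K (Fin 8))).injective
  apply deg8 B (yc K 1) (yc K 2) (yc K 3) (yc K 4) (yc K 5) (yc K 6) (yc K 7) (yc_ne K 1) (yc_ne K 2)
    (yc_ne K 3) (yc_ne K 4) (yc_ne K 5) (yc_ne K 6) (yc_ne K 7) (zl K) rfl hB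
  intro B' hle r2 r3 r4 r5 r6 r7
  apply deg_top
  apply htop B' hle
  apply F0_le
  have hy : ∀ χ : Fin 7, yc K χ.succ / yc K 1 ∈ B' := by
    intro χ
    fin_cases χ
    · have : yc K 1 / yc K 1 = 1 := div_self (yc_ne K 1)
      exact this ▸ one_mem B'
    exacts [r2, r3, r4, r5, r6, r7]
  have hd : ∀ k, dv K k / yc K 1 ∈ B' := by
    intro k
    have h8 : (8 : RFF K (Fin 8)) ≠ 0 := by norm_num
    have : dv K k / yc K 1 = (8 : RFF K (Fin 8))⁻¹ *
        ∑ χ : Fin 7, ((hs χ.succ k.succ - 1 : ℤ) : RFF K (Fin 8)) * (yc K χ.succ / yc K 1) := by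
      rw [Finset.sum_congr rfl fun χ _ => (mul_div_assoc _ _ _).symm, ← Finset.sum_div, ← dv_yc]
      field_simp
    rw [this]
    refine mul_mem (inv_mem (ofNat_mem B' 8)) (sum_mem fun χ _ => mul_mem (intCast_mem B' _) (hy χ))
  intro k
  have := div_mem (hd k) (hd 6)
  rwa [div_div_div_cancel_right₀ (yc_ne K 1)] at this
end

set_option linter.all false

theorem gc_trans : ∀ a j : Fin 8, a ≠ 0 → j ≠ 0 → ∃ n : Fin 7, (gc ^ n.val) a = j := by decide +kernel

theorem trans_of_gc (G : Subgroup (Equiv.Perm (Fin 8))) (hc : gc ∈ G) (σ : Equiv.Perm (Fin 8))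
    (hσ : σ ∈ G) (h0 : σ 0 ≠ 0) (j : Fin 8) : ∃ τ ∈ G, τ 0 = j := by
  rcases eq_or_ne j 0 with rfl | hj
  · exact ⟨1, G.one_mem, rfl⟩
  · obtain ⟨n, hn⟩ := gc_trans (σ 0) j h0 hj
    exact ⟨gc ^ n.val * σ, G.mul_mem (G.pow_mem hc _) hσ, hn⟩

theorem eight_dvd (G : Subgroup (Equiv.Perm (Fin 8))) (h : ∀ j : Fin 8, ∃ τ ∈ G, τ 0 = j) :
    8 ∣ Nat.card G := by
  have h1 := Subgroup.index_dvd_card (MulAction.stabilizer G (0 : Fin 8))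
  rw [MulAction.index_stabilizer] at h1
  have h2 : MulAction.orbit G (0 : Fin 8) = Set.univ := by
    ext j
    simp only [Set.mem_univ, iff_true]
    obtain ⟨τ, hτ, hj⟩ := h j
    exact ⟨⟨τ, hτ⟩, hj⟩
  rw [h2, Set.ncard_univ] at h1
  simpa using h1

theorem gc_mem_gH : gc ∈ gH := by
  have h1 : gp1 ∈ gH := Subgroup.subset_closure (by simp)
  have h2 : gp2 ∈ gH := Subgroup.subset_closure (by simp)
  have h3 : gp3 ∈ gH := Subgroup.subset_closure (by simp)
  have : gc = gp1 * gp1 * gp2 * gp2 * gp3 := by decide +kernel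
  rw [this]
  exact gH.mul_mem (gH.mul_mem (gH.mul_mem (gH.mul_mem h1 h1) h2) h2) h3

theorem card_gH : 168 ≤ Nat.card gH := by
  have h8 : 8 ∣ Nat.card gH := eight_dvd gH fun j => trans_of_gc gH gc_mem_gH gp2
    (Subgroup.subset_closure (by simp)) (by decide) j
  have h7 : 7 ∣ Nat.card gH := by
    haveI : Fact (Nat.Prime 7) := ⟨by norm_num⟩
    have h1 : orderOf gc = 7 := orderOf_eq_prime (by decide +kernel) (by decide +kernel)
    rw [← h1]
    exact Subgroup.orderOf_dvd_natCard gH gc_mem_gH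
  have h3 : 3 ∣ Nat.card gH := by
    have h1 : orderOf gp1 = 3 := orderOf_eq_prime (by decide +kernel) (by decide +kernel)
    rw [← h1]
    exact Subgroup.orderOf_dvd_natCard gH (Subgroup.subset_closure (by simp))
  have hpos : 0 < Nat.card gH := Nat.card_pos
  have : 168 ∣ Nat.card gH := by omega
  exact Nat.le_of_dvd hpos this

def tr (t : Fin 8) : Equiv.Perm (Fin 8) where
  toFun v := v ^^^ t
  invFun v := v ^^^ t
  left_inv := by revert t; decide
  right_inv := by revert t; decide

theorem tr_mem (t : Fin 8) : tr t ∈ gA1 := by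
  have h1 : ∀ t : Fin 8, t = 0 ∨ ∃ n : Fin 7, tr t = gc ^ n.val * gt0 * (gc ^ n.val)⁻¹ := by
    decide +kernel
  have hc : gc ∈ gA1 := gH_le gc_mem_gH
  have ht : gt0 ∈ gA1 := Subgroup.subset_closure (by simp)
  rcases h1 t with rfl | ⟨n, hn⟩
  · have : tr 0 = 1 := by decide
    rw [this]; exact gA1.one_mem
  · rw [hn]
    exact gA1.mul_mem (gA1.mul_mem (gA1.pow_mem hc _) ht) (gA1.inv_mem (gA1.pow_mem hc _))

theorem card_gA1 : 168 * 8 ≤ Nat.card gA1 := by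
  have hinj : Function.Injective (fun p : gH × Fin 8 => (⟨tr p.2 * p.1, gA1.mul_mem (tr_mem p.2)
      (gH_le p.1.2)⟩ : gA1)) := by
    rintro ⟨⟨h, hh⟩, t⟩ ⟨⟨h', hh'⟩, t'⟩ heq
    have h1 : tr t * h = tr t' * h' := congrArg Subtype.val heq
    have h2 : h * h'⁻¹ = (tr t)⁻¹ * tr t' := by
      rw [mul_inv_eq_iff_eq_mul, mul_assoc, ← h1]; group
    have h3 : ∀ t t' : Fin 8, code ((tr t)⁻¹ * tr t') = 84 := by decide +kernel
    have h4 := gH_one_of_code (h * h'⁻¹) (gH.mul_mem hh (gH.inv_mem hh')) (by rw [h2, h3])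
    have h5 : h = h' := mul_inv_eq_one.mp h4
    subst h5
    have h6 : tr t = tr t' := mul_right_cancel h1
    have h7 : t = t' := by
      have := congrArg (fun σ : Equiv.Perm (Fin 8) => σ 0) h6
      have hx : ∀ t : Fin 8, tr t 0 = t := by decide
      simpa [hx] using this
    rw [h7]
  have := Nat.card_le_card_of_injective _ hinj
  rw [Nat.card_prod, Nat.card_fin] at this
  have := card_gH
  omega

section
variable (K : Type) [Field K] [CharZero K]

theorem rat_gH (α : K) (hα : α ^ 2 = α - 2) : IsRatExt K ↥(fixedSub K (Fin 8) gH) := by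
  obtain ⟨h0, h1, h2, h3⟩ := LMul_gens α hα
  refine field_main K α hα gH {gp1, gp2, gp3} rfl (fun g => rho α hα ⟨g, gH_le g.2⟩)
    (rho_one α hα) (fun g h => rho_mul α hα ⟨g, gH_le g.2⟩ ⟨h, gH_le h.2⟩) ?_
    ⟨⟨gp1, Subgroup.subset_closure (by simp)⟩, rho_eq α hα _ _ h1⟩ gH le_rfl
    (fun h hh hs => rho_scalar α hα h hh hs) (dv K) (dv_ne K) ?_ ?_ 1 ?_ (by simpa using card_gH)
  · rintro γ hγ (rfl | rfl | rfl)
    · exact Or.inr (Or.inl (rho_eq α hα _ _ h1))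
    · exact Or.inr (Or.inr (Or.inl (rho_eq α hα _ _ h2)))
    · exact Or.inr (Or.inr (Or.inr (rho_eq α hα _ _ h3)))
  · intro h hh k F
    rw [dv, map_sub, permHom_X, permHom_X]
    exact sub_mem_span K F _ _
  · intro γ hγ _
    exact Or.inl hγ
  · intro B hB htop
    exact deg_top B (htop B le_rfl (F0_le K B fun k => hB k 6))

theorem rat_gA1 (α : K) (hα : α ^ 2 = α - 2) : IsRatExt K ↥(fixedSub K (Fin 8) gA1) := by
  obtain ⟨h0, h1, h2, h3⟩ := LMul_gens α hα
  refine field_main K α hα gA1 {gt0, gp1, gp2, gp3} rfl (rho α hα)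
    (rho_one α hα) (rho_mul α hα) ?_
    ⟨⟨gp1, Subgroup.subset_closure (by simp)⟩, rho_eq α hα _ _ h1⟩ gH gH_le
    (fun h hh hs => rho_scalar α hα h hh hs) (zl K) ?_ ?_ ?_ 8 (fun B hB htop => zl_deg K B hB htop)
    card_gA1
  · rintro γ hγ (rfl | rfl | rfl | rfl)
    · exact Or.inl (rho_eq α hα _ _ h0)
    · exact Or.inr (Or.inl (rho_eq α hα _ _ h1))
    · exact Or.inr (Or.inr (Or.inl (rho_eq α hα _ _ h2)))
    · exact Or.inr (Or.inr (Or.inr (rho_eq α hα _ _ h3)))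
  · intro k
    fin_cases k <;> exact mul_ne_zero (mul_ne_zero (yc_ne K _) (yc_ne K _)) (yc_ne K _)
  · intro h hh k F
    obtain ⟨l, hl⟩ := zl_H K h hh k
    rw [hl]
    exact Submodule.subset_span ⟨l, rfl⟩
  · rintro γ hγ (rfl | hg)
    · exact Or.inr ⟨rho_eq α hα _ _ h0, zl_t0 K⟩
    · exact Or.inl (Subgroup.subset_closure hg)
end

set_option linter.all false

theorem solv_of_card (G : Type*) [Group G] [Finite G] (k : ℕ) (h : Nat.card G ∣ 2 ^ k * 3) :
    Group.IsSolvable G := by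
  haveI : Fact (Nat.Prime 2) := ⟨Nat.prime_two⟩
  obtain ⟨P⟩ : Nonempty (Sylow 2 G) := inferInstance
  have hi : (P : Subgroup G).index ∣ 3 := by
    have h1 : (P : Subgroup G).index ∣ 2 ^ k * 3 := (Subgroup.index_dvd_card _).trans h
    have h2 : ¬ 2 ∣ (P : Subgroup G).index := P.not_dvd_index
    exact Nat.Coprime.dvd_of_dvd_mul_left
      (Nat.Coprime.pow_right k ((Nat.coprime_comm).1 ((Nat.Prime.coprime_iff_not_dvd Nat.prime_two).2 h2))) h1
  haveI : Finite (G ⧸ (P : Subgroup G)) := inferInstance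
  have hcard : Nat.card (Equiv.Perm (G ⧸ (P : Subgroup G))) ∣ 6 := by
    rw [Nat.card_perm, ← Subgroup.index_eq_card]
    rcases (Nat.dvd_prime Nat.prime_three).1 hi with h | h <;> rw [h] <;> decide
  haveI : IsZGroup (Equiv.Perm (G ⧸ (P : Subgroup G))) :=
    IsZGroup.of_squarefree (Squarefree.squarefree_of_dvd hcard (by decide +kernel))
  haveI : Group.IsSolvable (Equiv.Perm (G ⧸ (P : Subgroup G))) := inferInstance
  haveI : Group.IsNilpotent (P : Subgroup G) := P.isPGroup'.isNilpotent
  refine Group.isSolvable_of_ker_le_range (P : Subgroup G).subtype (MulAction.toPermHom G (G ⧸ (P : Subgroup G))) ?_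
  rw [← Subgroup.normalCore_eq_ker, Subgroup.range_subtype]
  exact Subgroup.normalCore_le _

theorem solv_perm (α : Type*) [Finite α] (h : Nat.card α ≤ 4) : Group.IsSolvable (Equiv.Perm α) := by
  apply solv_of_card _ 3
  rw [Nat.card_perm]
  generalize Nat.card α = n at h
  interval_cases n <;> decide

theorem solv_pi {ι : Type} [Finite ι] (H : ι → Type) [∀ i, Group (H i)] (h : ∀ i, Group.IsSolvable (H i)) :
    Group.IsSolvable (∀ i, H i) := by
  choose n hn using fun i => (h i).solvable
  haveI := Fintype.ofFinite ι
  refine ⟨⟨Finset.univ.sup n, ?_⟩⟩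
  rw [eq_bot_iff]
  intro x hx
  rw [Subgroup.mem_bot]
  ext i
  have h1 := map_derivedSeries_le_derivedSeries (Pi.evalMonoidHom H i) (Finset.univ.sup n)
  have h2 := h1 (Subgroup.mem_map_of_mem _ hx)
  have h3 := derivedSeries_antitone (H i) (Finset.le_sup (f := n) (Finset.mem_univ i)) h2
  rw [hn i] at h3
  simpa using h3

/-- solvability of imprimitive groups, given an invariant map -/
theorem solv_of_fibers (G : Subgroup (Equiv.Perm (Fin 8))) (Q : Type) [Finite Q] [MulAction G Q]
    (π : Fin 8 → Q) (hπ : ∀ (g : G) (x : Fin 8), π (g.1 x) = g • π x) (hQ : Nat.card Q ≤ 4)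
    (hf : ∀ q, Nat.card {x // π x = q} ≤ 4) : Group.IsSolvable G := by
  haveI := solv_perm Q hQ
  let N := (MulAction.toPermHom G Q).ker
  have hN : ∀ (g : N) (q : Q), g.1 • q = q := by
    intro g q
    have := g.2
    rw [MonoidHom.mem_ker] at this
    exact congrArg (fun f => f q) this
  let f : N →* ∀ q, Equiv.Perm {x // π x = q} :=
    { toFun := fun g q => 
        { toFun := fun x => ⟨g.1.1 x.1, by rw [hπ, x.2, hN]⟩
          invFun := fun x => ⟨(g⁻¹).1.1 x.1, by rw [hπ, x.2, hN]⟩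
          left_inv := fun x => by simp
          right_inv := fun x => by simp }
      map_one' := by ext; simp
      map_mul' := by intros; ext; simp }
  haveI : Group.IsSolvable (∀ q, Equiv.Perm {x // π x = q}) := solv_pi _ (fun q => solv_perm _ (hf q))
  have hinj : Function.Injective f := by
    intro a b hab
    ext x : 3
    have := congrArg (fun F => ((F (π x)) ⟨x, rfl⟩).1) hab
    exact this
  haveI : Group.IsSolvable N := Group.isSolvable_of_isSolvable_injective hinj
  exact Group.isSolvable_of_ker_le_range N.subtype (MulAction.toPermHom G Q) (by rw [Subgroup.range_subtype])

open scoped Pointwise in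
theorem solv_of_not_prim (G : Subgroup (Equiv.Perm (Fin 8)))
    (htr : MulAction.IsPretransitive G (Fin 8)) (hprim : ¬ MulAction.IsPreprimitive G (Fin 8)) :
    Group.IsSolvable G := by
  have h1 : ∃ B : Set (Fin 8), MulAction.IsBlock G B ∧ ¬ MulAction.IsTrivialBlock B := by
    by_contra! h
    exact hprim { isTrivialBlock_of_isBlock := fun {B} hB => h B hB }
  obtain ⟨B, hB, hnt⟩ := h1
  have hns : ¬ B.Subsingleton := fun h => hnt (Or.inl h)
  have hnu : B ≠ Set.univ := fun h => hnt (Or.inr h)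
  have hne : B.Nonempty := (Set.not_subsingleton_iff.1 hns).nonempty
  have hmul := hB.ncard_block_mul_ncard_orbit_eq hne
  have h8 : Nat.card (Fin 8) = 8 := by simp
  rw [h8] at hmul
  have hB1 : 1 < B.ncard := by
    rw [Set.one_lt_ncard]
    obtain ⟨a, ha, b, hb, hab⟩ := Set.not_subsingleton_iff.1 hns
    exact ⟨a, ha, b, hb, hab⟩
  have hB8 : B.ncard < 8 := by
    have := Set.ncard_lt_ncard (Set.ssubset_univ_iff.2 hnu)
    rwa [Set.ncard_univ, h8] at this
  have hBO : B.ncard ≤ 4 ∧ (MulAction.orbit G B).ncard ≤ 4 := by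
    generalize B.ncard = b at *
    generalize (MulAction.orbit G B).ncard = o at *
    constructor
    · have : o ≠ 0 := by rintro rfl; simp at hmul
      have : o ≠ 1 := by rintro rfl; omega
      nlinarith [show 2 ≤ o by omega]
    · nlinarith
  have hcov : ∀ x : Fin 8, ∃ q : MulAction.orbit G B, x ∈ q.1 := by
    intro x
    obtain ⟨b, hb⟩ := hne
    obtain ⟨g, hg⟩ := MulAction.exists_smul_eq G b x
    exact ⟨⟨g • B, g, rfl⟩, by rw [← hg]; exact Set.smul_mem_smul_set hb⟩
  have huniq : ∀ (x : Fin 8) (q r : MulAction.orbit G B), x ∈ q.1 → x ∈ r.1 → q = r := by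
    rintro x ⟨_, g, rfl⟩ ⟨_, h, rfl⟩ hq hr
    by_contra hqr
    have := hB (g₁ := g) (g₂ := h) (fun h' => hqr (Subtype.ext h'))
    exact Set.disjoint_left.1 this hq hr
  choose π hπ using hcov
  refine solv_of_fibers G (MulAction.orbit G B) π ?_ hBO.2 ?_
  · intro g x
    apply huniq (g.1 x) _ _ (hπ _)
    exact Set.smul_mem_smul_set (hπ x)
  · rintro q
    have : {x | π x = q} = q.1 := by
      ext x
      constructor
      · rintro rfl; exact hπ x
      · intro h; exact huniq x _ _ (hπ x) h
    have h2 : Nat.card {x // π x = q} = q.1.ncard := by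
      rw [← this]; rfl
    rw [h2]
    obtain ⟨_, g, rfl⟩ := q
    have : (g • B).ncard = B.ncard := Set.ncard_smul_set g B
    exact this.le.trans hBO.1

set_option linter.all false

open Equiv.Perm in
theorem three_cycle_of_nine (G : Subgroup (Equiv.Perm (Fin 8))) (h9 : 9 ∣ Nat.card G) :
    ∃ g ∈ G, IsThreeCycle g := by
  haveI : Fact (Nat.Prime 3) := ⟨Nat.prime_three⟩
  obtain ⟨K, hK⟩ := Sylow.exists_subgroup_card_pow_prime (G := G) 3 (n := 2) (by simpa using h9)
  let L := K.map G.subtype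
  have hL : Nat.card L = 9 := by
    rw [Subgroup.card_map_of_injective G.subtype_injective, hK]; norm_num
  have hLi : ¬ 3 ∣ L.index := by
    have := L.card_mul_index
    rw [hL, Nat.card_perm, Nat.card_fin, show Nat.factorial 8 = 40320 from rfl] at this
    omega
  have hLp : IsPGroup 3 L := IsPGroup.of_card (n := 2) (by rw [hL]; norm_num)
  let P : Sylow 3 (Equiv.Perm (Fin 8)) := hLp.toSylow hLi
  let σ : Equiv.Perm (Fin 8) := Equiv.swap 0 1 * Equiv.swap 0 2
  have hσ : IsThreeCycle σ := isThreeCycle_swap_mul_swap_same (by decide) (by decide) (by decide)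
  have hz : IsPGroup 3 (Subgroup.zpowers σ) := IsPGroup.of_card (n := 1) (by
    rw [Nat.card_zpowers, hσ.orderOf]; norm_num)
  obtain ⟨Q, hQ⟩ := hz.exists_le_sylow
  obtain ⟨τ, hτ⟩ := MulAction.exists_smul_eq (Equiv.Perm (Fin 8)) Q P
  have hmem : τ * σ * τ⁻¹ ∈ P := by
    rw [← hτ]
    have h1 : σ ∈ Q := hQ (Subgroup.mem_zpowers σ)
    exact Subgroup.smul_mem_pointwise_smul σ (MulAut.conj τ) _ h1
  have hmem' : τ * σ * τ⁻¹ ∈ L := hmem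
  refine ⟨τ * σ * τ⁻¹, ?_, ?_⟩
  · obtain ⟨k, hk, hk'⟩ := hmem'
    rw [← hk']; exact k.2
  · rw [IsThreeCycle, cycleType_conj]; exact hσ

open Equiv.Perm in
theorem seven_dvd (G : Subgroup (Equiv.Perm (Fin 8))) (hs : ¬ Group.IsSolvable G)
    (htr : MulAction.IsPretransitive G (Fin 8)) (hA : ¬ alternatingGroup (Fin 8) ≤ G) :
    7 ∣ Nat.card G := by
  have hprim : MulAction.IsPreprimitive G (Fin 8) := by
    by_contra h; exact hs (solv_of_not_prim G htr h)
  have h9 : ¬ 9 ∣ Nat.card G := by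
    intro h
    obtain ⟨g, hg, h3⟩ := three_cycle_of_nine G h
    exact hA (alternatingGroup_le_of_isPreprimitive_of_isThreeCycle_mem hprim h3 hg)
  by_cases h5 : 5 ∣ Nat.card G
  · haveI : Fact (Nat.Prime 5) := ⟨Nat.prime_five⟩
    obtain ⟨g, hg⟩ := exists_prime_orderOf_dvd_card' (G := G) 5 h5
    have ho : orderOf g.1 = 5 := by rw [← hg, Subgroup.orderOf_coe]
    have hcyc : g.1.IsCycle := isCycle_of_prime_order' (by rw [ho]; exact Nat.prime_five) (by rw [ho]; simp)
    have hsup : g.1.support.card = 5 := by rw [← hcyc.orderOf, ho]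
    have h2 := hprim.is_two_pretransitive (s := (g.1.support : Set (Fin 8))ᶜ) (n := 2)
      (by
        have := Set.ncard_add_ncard_compl (g.1.support : Set (Fin 8))
        rw [Set.ncard_coe_finset, hsup, Nat.card_fin] at this
        omega) (by simp) (isPretransitive_of_isCycle_mem hcyc g.2)
    have hnc : Set.ncard ({0, 1} : Set (Fin 8)) = 2 := Set.ncard_pair (by decide)
    have h3 := h2.index_of_fixingSubgroup_mul hnc
    rw [Nat.card_fin, show Nat.factorial 8 = 40320 from rfl, show Nat.factorial (8 - 2) = 720 from rfl] at h3
    have h4 := (fixingSubgroup G ({0, 1} : Set (Fin 8))).index_dvd_card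
    exact (by omega : 7 ∣ (fixingSubgroup G ({0, 1} : Set (Fin 8))).index).trans h4
  · by_contra h7
    apply hs
    apply solv_of_card _ 7
    have hd : Nat.card G ∣ 1152 * 35 := by
      have := G.card_subgroup_dvd_card
      rwa [Nat.card_perm, Nat.card_fin, show Nat.factorial 8 = 1152 * 35 from rfl] at this
    have hd' : Nat.card G ∣ 1152 := by
      refine Nat.Coprime.dvd_of_dvd_mul_right ?_ hd
      rw [show 35 = 5 * 7 from rfl]
      exact Nat.Coprime.mul_right
        (((Nat.Prime.coprime_iff_not_dvd Nat.prime_five).2 h5).symm)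
        (((Nat.Prime.coprime_iff_not_dvd (by norm_num)).2 h7).symm)
    have key : ∀ n ∈ List.range 1153, n ∣ 1152 → ¬ 9 ∣ n → n ∣ 2 ^ 7 * 3 := by decide +kernel
    exact key _ (List.mem_range.2 (Nat.lt_succ_of_le (Nat.le_of_dvd (by norm_num) hd'))) hd' h9

set_option linter.all false

/-- base-8 codes of permutations -/
def mkc (f : ℕ → ℕ) : ℕ :=
  f 0 + 8 * (f 1 + 8 * (f 2 + 8 * (f 3 + 8 * (f 4 + 8 * (f 5 + 8 * (f 6 + 8 * f 7))))))
def apc (p i : ℕ) : ℕ := p / 8 ^ i % 8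
def cmc (p q : ℕ) : ℕ := mkc (fun i => apc p (apc q i))
def enc (σ : Equiv.Perm (Fin 8)) : ℕ :=
  mkc (fun i => if h : i < 8 then (σ ⟨i, h⟩).val else 0)

theorem apc_mkc (f : ℕ → ℕ) (hf : ∀ i, f i < 8) (i : ℕ) (hi : i < 8) : apc (mkc f) i = f i := by
  have h0 := hf 0; have h1 := hf 1; have h2 := hf 2; have h3 := hf 3
  have h4 := hf 4; have h5 := hf 5; have h6 := hf 6; have h7 := hf 7
  unfold apc mkc
  interval_cases i <;> norm_num <;> omega

theorem apc_enc (σ : Equiv.Perm (Fin 8)) (i : Fin 8) : apc (enc σ) i.val = (σ i).val := by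
  unfold enc
  rw [apc_mkc _ _ _ i.2]
  · simp
  · intro j; split <;> omega

theorem mkc_congr (f g : ℕ → ℕ) (h : ∀ i < 8, f i = g i) : mkc f = mkc g := by
  unfold mkc
  rw [h 0, h 1, h 2, h 3, h 4, h 5, h 6, h 7] <;> norm_num

theorem enc_mul (σ τ : Equiv.Perm (Fin 8)) : enc (σ * τ) = cmc (enc σ) (enc τ) := by
  conv_lhs => unfold enc
  unfold cmc
  apply mkc_congr
  intro i hi
  have h1 := apc_enc τ ⟨i, hi⟩
  have h2 := apc_enc σ (τ ⟨i, hi⟩)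
  simp only at h1
  rw [h1, h2]; simp [hi]

theorem enc_inj (σ τ : Equiv.Perm (Fin 8)) (h : enc σ = enc τ) : σ = τ := by
  ext i
  rw [← apc_enc, h, apc_enc]

def movc (p : ℕ) : ℕ :=
  (if apc p 0 = 0 then 0 else 1) + (if apc p 1 = 1 then 0 else 1) + (if apc p 2 = 2 then 0 else 1) +
  (if apc p 3 = 3 then 0 else 1) + (if apc p 4 = 4 then 0 else 1) + (if apc p 5 = 5 then 0 else 1) +
  (if apc p 6 = 6 then 0 else 1) + (if apc p 7 = 7 then 0 else 1)

theorem movc_enc (σ : Equiv.Perm (Fin 8)) : movc (enc σ) = σ.support.card := by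
  have h : σ.support.card = ∑ i : Fin 8, if apc (enc σ) i.val = i.val then 0 else 1 := by
    have : σ.support = Finset.univ.filter (fun i => ¬ (apc (enc σ) i.val = i.val)) := by
      ext i
      rw [Equiv.Perm.mem_support, Finset.mem_filter, apc_enc]
      simp [Fin.ext_iff]
    rw [this, Finset.card_filter]
    apply Finset.sum_congr rfl
    intro i _
    split <;> simp_all
  rw [h, Fin.sum_univ_eight]
  rfl

/-- some small power is a three-cycle -/
def goodc (w : ℕ) : Bool :=
  Nat.beq (movc w) 3 || Nat.beq (movc (cmc w w)) 3 || Nat.beq (movc (cmc (cmc w w) (cmc w w))) 3 ||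
    Nat.beq (movc (cmc w (cmc (cmc w w) (cmc w w)))) 3

theorem goodc_sound (G : Subgroup (Equiv.Perm (Fin 8))) (σ : Equiv.Perm (Fin 8)) (hσ : σ ∈ G)
    (h : goodc (enc σ) = true) : ∃ g ∈ G, g.IsThreeCycle := by
  unfold goodc at h
  simp only [← enc_mul, movc_enc, Bool.or_eq_true, Nat.beq_eq, card_support_eq_three_iff] at h
  have h2 := G.mul_mem hσ hσ
  have h4 := G.mul_mem h2 h2
  have h5 := G.mul_mem hσ h4
  rcases h with ((h | h) | h) | h
  exacts [⟨_, hσ, h⟩, ⟨_, h2, h⟩, ⟨_, h4, h⟩, ⟨_, h5, h⟩]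

/-- evaluation of words; letter 0 is c, 1 is x, 2 is y -/
def wev : List ℕ → ℕ → ℕ → ℕ → ℕ
  | [], _, _, _ => enc 1
  | 0 :: l, c, x, y => cmc c (wev l c x y)
  | 1 :: l, c, x, y => cmc x (wev l c x y)
  | _ :: l, c, x, y => cmc y (wev l c x y)

theorem wev_sound (G : Subgroup (Equiv.Perm (Fin 8))) (l : List ℕ) (c x y : Equiv.Perm (Fin 8))
    (hc : c ∈ G) (hx : x ∈ G) (hy : y ∈ G) : ∃ g ∈ G, enc g = wev l (enc c) (enc x) (enc y) := by
  induction l with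
  | nil => exact ⟨1, G.one_mem, rfl⟩
  | cons a l ih =>
    obtain ⟨g, hg, he⟩ := ih
    match a with
    | 0 => exact ⟨c * g, G.mul_mem hc hg, by rw [enc_mul, he]; rfl⟩
    | 1 => exact ⟨x * g, G.mul_mem hx hg, by rw [enc_mul, he]; rfl⟩
    | n + 2 => exact ⟨y * g, G.mul_mem hy hg, by rw [enc_mul, he]; rfl⟩

theorem mem_of_word (G : Subgroup (Equiv.Perm (Fin 8))) (l : List ℕ) (c x y z : Equiv.Perm (Fin 8))
    (hc : c ∈ G) (hx : x ∈ G) (hy : y ∈ G) (h : wev l (enc c) (enc x) (enc y) = enc z) : z ∈ G := by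
  obtain ⟨g, hg, he⟩ := wev_sound G l c x y hc hx hy
  rw [h] at he
  rwa [← enc_inj _ _ he]

/-- enumeration of all codes with 0 ↦ 1, 1 ↦ 0 -/
def rl : List ℕ := [2, 3, 4, 5, 6, 7]
def allsw (P : ℕ → Bool) : Bool :=
  rl.all fun a => rl.all fun b => Nat.beq a b || rl.all fun c => Nat.beq a c || (Nat.beq b c ||
  rl.all fun d => Nat.beq a d || (Nat.beq b d || (Nat.beq c d ||
  rl.all fun e => Nat.beq a e || (Nat.beq b e || (Nat.beq c e || (Nat.beq d e ||
  rl.all fun f => Nat.beq a f || (Nat.beq b f || (Nat.beq c f || (Nat.beq d f || (Nat.beq e f ||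
  P (1 + 8 * (0 + 8 * (a + 8 * (b + 8 * (c + 8 * (d + 8 * (e + 8 * f)))))))))))))))))

theorem allsw_sound (P : ℕ → Bool) (h : allsw P = true) (σ : Equiv.Perm (Fin 8)) (h0 : σ 0 = 1)
    (h1 : σ 1 = 0) : P (enc σ) = true := by
  unfold allsw at h
  simp only [List.all_eq_true, Bool.or_eq_true, Nat.beq_eq] at h
  have hmem : ∀ i : Fin 8, i ≠ 0 → i ≠ 1 → (σ i).val ∈ rl := by
    intro i hi0 hi1
    have a0 : σ i ≠ 1 := fun e => hi0 (σ.injective (e.trans h0.symm))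
    have a1 : σ i ≠ 0 := fun e => hi1 (σ.injective (e.trans h1.symm))
    generalize σ i = j at a0 a1
    revert j; decide
  have hne : ∀ i j : Fin 8, i ≠ j → (σ i).val ≠ (σ j).val := by
    intro i j hij e
    exact hij (σ.injective (Fin.ext e))
  have H := h (σ 2).val (hmem 2 (by decide) (by decide)) (σ 3).val (hmem 3 (by decide) (by decide))
  have H := H.resolve_left (hne _ _ (by decide)) (σ 4).val (hmem 4 (by decide) (by decide))
  have H := (H.resolve_left (hne _ _ (by decide))).resolve_left (hne _ _ (by decide)) (σ 5).val (hmem 5 (by decide) (by decide))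
  have H := ((H.resolve_left (hne _ _ (by decide))).resolve_left (hne _ _ (by decide))).resolve_left (hne _ _ (by decide)) (σ 6).val (hmem 6 (by decide) (by decide))
  have H := (((H.resolve_left (hne _ _ (by decide))).resolve_left (hne _ _ (by decide))).resolve_left (hne _ _ (by decide))).resolve_left (hne _ _ (by decide)) (σ 7).val (hmem 7 (by decide) (by decide))
  have H := ((((H.resolve_left (hne _ _ (by decide))).resolve_left (hne _ _ (by decide))).resolve_left (hne _ _ (by decide))).resolve_left (hne _ _ (by decide))).resolve_left (hne _ _ (by decide))
  have e : enc σ = 1 + 8 * (0 + 8 * ((σ 2).val + 8 * ((σ 3).val + 8 * ((σ 4).val + 8 * ((σ 5).val + 8 * ((σ 6).val + 8 * (σ 7).val)))))) := by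
    have : enc σ = (σ 0).val + 8 * ((σ 1).val + 8 * ((σ 2).val + 8 * ((σ 3).val + 8 * ((σ 4).val + 8 * ((σ 5).val + 8 * ((σ 6).val + 8 * (σ 7).val)))))) := rfl
    rw [this, h0, h1]; rfl
  rw [e]; exact H

set_option linter.all false
set_option maxRecDepth 100000

def LG : List ℕ := [14570689, 5208385, 9780673]
def L0 : List ℕ := [9925825, 14498113, 5135809]
def L1 : List ℕ := [14599809, 16406145, 9954945, 11761281, 16434369, 11789505, 14527233, 16333569, 5237505, 7043841, 16361793, 7072065, 9809793, 11616129, 5164929, 6971265, 11644353, 6999489]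
def L2 : List ℕ := [16205441, 16431233, 15624833, 15850625, 9169601, 10312897, 10137281, 8058113, 8219393, 7068929, 7810817, 13530433, 13354817, 13741889, 11662721, 12404609, 11254145, 11415425, 5949377, 5716417, 5368769]
def L3 : List ℕ := [7532161, 12297985, 15321985]
def cpc (i : ℕ) : ℕ := match i with
  | 0 => 16434824
  | 1 => 12369168
  | 2 => 3501792
  | 3 => 4619160
  | 4 => 9032688
  | 5 => 7542136
  | _ => 13609064
def sel1 : List (ℕ × ℕ) := [(1, 3), (2, 6), (4, 5), (1, 2), (1, 4), (2, 4), (3, 5), (3, 6), (5, 6)]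
def sel2 : List (ℕ × ℕ) := [(1, 1), (1, 2), (1, 4), (5, 1), (1, 3), (5, 4), (2, 1), (1, 0), (0, 0), (1, 5), (5, 2), (0, 1)]
def chk1 (x : ℕ) : Bool := sel1.any fun w => goodc (cmc (cmc (cpc w.1) x) (cmc (cpc w.2) x))
def chk2 (x y : ℕ) : Bool := sel2.any fun w => goodc (cmc (cmc (cpc w.1) x) (cmc (cpc w.2) y))

theorem cpc_eq : ∀ i : ℕ, ∃ n : ℕ, cpc i = enc (gc ^ n) := by
  intro i
  match i with
  | 0 => exact ⟨0, by decide +kernel⟩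
  | 1 => exact ⟨1, by decide +kernel⟩
  | 2 => exact ⟨2, by decide +kernel⟩
  | 3 => exact ⟨3, by decide +kernel⟩
  | 4 => exact ⟨4, by decide +kernel⟩
  | 5 => exact ⟨5, by decide +kernel⟩
  | n + 6 => exact ⟨6, by
      have : cpc (n + 6) = cpc 6 := rfl
      rw [this]; decide +kernel⟩

theorem chk2_sound (G : Subgroup (Equiv.Perm (Fin 8))) (hc : gc ∈ G) (x y : Equiv.Perm (Fin 8))
    (hx : x ∈ G) (hy : y ∈ G) (h : chk2 (enc x) (enc y) = true) : ∃ g ∈ G, g.IsThreeCycle := by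
  unfold chk2 at h
  rw [List.any_eq_true] at h
  obtain ⟨w, -, hw⟩ := h
  obtain ⟨n, hn⟩ := cpc_eq w.1
  obtain ⟨m, hm⟩ := cpc_eq w.2
  rw [hn, hm, ← enc_mul, ← enc_mul, ← enc_mul] at hw
  exact goodc_sound G _ (G.mul_mem (G.mul_mem (G.pow_mem hc _) hx) (G.mul_mem (G.pow_mem hc _) hy)) hw

theorem chk1_sound (G : Subgroup (Equiv.Perm (Fin 8))) (hc : gc ∈ G) (x : Equiv.Perm (Fin 8))
    (hx : x ∈ G) (h : chk1 (enc x) = true) : ∃ g ∈ G, g.IsThreeCycle := by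
  unfold chk1 at h
  rw [List.any_eq_true] at h
  obtain ⟨w, -, hw⟩ := h
  obtain ⟨n, hn⟩ := cpc_eq w.1
  obtain ⟨m, hm⟩ := cpc_eq w.2
  rw [hn, hm, ← enc_mul, ← enc_mul, ← enc_mul] at hw
  exact goodc_sound G _ (G.mul_mem (G.mul_mem (G.pow_mem hc _) hx) (G.mul_mem (G.pow_mem hc _) hx)) hw

def inl (l : List ℕ) (x : ℕ) : Bool := l.any (fun y => Nat.beq x y)

theorem inl_iff (l : List ℕ) (x : ℕ) : inl l x = true ↔ x ∈ l := by
  simp [inl, List.any_eq_true]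

theorem big1 : allsw (fun x => inl L0 x || (inl LG x || (inl L1 x || (inl L2 x || (inl L3 x || chk1 x))))) = true := by
  decide +kernel

theorem pairs12 : ((LG ++ L1).all fun x => (L2 ++ L3).all fun y => chk2 x y) = true := by
  decide +kernel

theorem pairs23 : (L2.all fun x => L3.all fun y => chk2 x y) = true := by
  decide +kernel

set_option linter.all false
set_option maxRecDepth 100000

def gs : Equiv.Perm (Fin 8) where
  toFun := ![1, 0, 3, 2, 7, 6, 5, 4]
  invFun := ![1, 0, 3, 2, 7, 6, 5, 4]
  left_inv := by decide
  right_inv := by decide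

theorem gs_mem_gH : gs ∈ gH := by
  have h1 : gp1 ∈ gH := Subgroup.subset_closure (by simp)
  have h2 : gp2 ∈ gH := Subgroup.subset_closure (by simp)
  have : gs = gp2 * gp2 * gp1 * gp1 * gp2 := by decide +kernel
  rw [this]
  exact mul_mem (mul_mem (mul_mem (mul_mem h2 h2) h1) h1) h2

theorem gt0_mem : gt0 ∈ gA1 := Subgroup.subset_closure (by simp)

def WA : List (List ℕ) := [[1], [0, 1, 0, 0, 0, 0, 1, 0], [1, 0, 1, 0, 0, 0, 0, 1, 0, 1], [2], [2, 0, 1, 0, 0, 0, 0, 1, 0, 1], [2, 1, 0, 1, 0, 0, 0, 0, 1, 0], [0, 2, 1, 0, 2, 1, 0, 0, 1], [0, 1, 0, 2, 0, 1, 0, 0, 0], [1, 0, 1, 0, 1, 0, 2, 0, 1], [0, 1, 0, 1, 0, 2, 0], [0, 2, 0, 1, 0, 0, 0, 1, 0, 0, 0], [1, 0, 0, 1, 0, 2, 0, 0, 1, 0, 0, 0], [0, 0, 0, 0, 1, 0, 2, 0, 0], [0, 1, 0, 0, 0, 0, 2, 0], [0, 2, 0, 0, 1, 0, 0], [0, 0,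 0, 0, 2, 1, 0, 0, 0, 1], [0, 0, 1, 0, 0, 2, 0, 0, 0, 0], [0, 0, 2, 0, 1, 0, 1, 0], [1, 0, 0, 0, 0, 2, 1, 0, 0, 0], [1, 0, 2, 1, 0, 0, 0, 0, 0], [1, 0, 0, 0, 2, 1, 0, 0], [0, 1, 0, 0, 0, 1, 0, 0, 0, 2, 0], [1, 0, 0, 2, 0, 1, 0, 1, 0, 1], [2, 1, 0, 0, 2, 0, 1, 0, 1, 0]]
def WH : List (List ℕ) := [[1], [0, 0, 1, 0, 0, 0, 0, 1, 0, 0], [0, 0, 1, 0, 1, 0, 0]]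
def WH0 : List (List ℕ) := [[1], [0, 1, 0, 0, 0, 0, 1, 0], [1, 0, 1, 0, 0, 0, 0, 1, 0, 1]]
def WP : List (List ℕ) := [[0, 1, 0, 0, 0, 0, 1, 0, 1], [0, 1, 0, 0, 0, 0, 0], [0, 0, 0, 0, 1, 0, 0, 0, 1, 0]]
def W1 : List (List ℕ) := [[0, 1, 0, 0, 0, 1, 0, 0, 0, 1, 0, 0], [0, 0, 0, 1, 0, 1, 0, 0, 0, 0, 0, 1, 0], [1, 0, 1, 0, 1, 0, 0, 0, 1, 0, 0, 1, 0, 0, 0], [0, 1, 0, 1, 0, 0, 1, 0, 0, 1], [0, 1, 0, 0, 1, 0, 1, 0, 0, 1, 0, 0], [0, 1, 0, 0, 0, 1, 0, 1, 0], [0, 1, 0, 0, 0, 0, 0, 1, 0, 0, 0, 0], [1, 0, 1, 1, 0, 0, 0, 1, 1, 0, 0], [0, 1, 0, 1, 0, 0, 1, 0, 1, 0], [0, 0, 0, 1, 0, 1, 0, 0, 0, 0, 0, 1, 0, 1, 0, 0], [1, 0, 1, 0, 0, 0, 0, 1, 0, 1, 0, 0, 0, 0], [1, 0, 0, 1, 0,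 1, 0, 1, 0, 0, 1, 0, 0], [0, 1, 0, 0, 1, 0, 0, 1, 0], [1, 0, 0, 0, 1, 0, 1, 0, 0, 0, 1, 0], [0, 0, 0, 0, 0, 1, 0, 1, 0, 0, 0], [1, 0, 1, 1, 0, 0], [0, 0, 0, 0, 1, 1, 0, 0, 1], [1, 0, 0, 0, 1, 1, 0, 0, 0], [1, 0, 1, 1, 1, 0, 1, 0, 1, 1, 1, 0], [1, 1, 1, 0, 1, 1, 0, 0], [0, 1, 1, 1, 0, 0, 1, 0, 1, 1, 0], [1, 1, 1], [0, 0, 0, 0, 1, 1, 0, 0, 0, 0, 1], [1, 0, 1, 1, 0, 0, 0, 1, 1], [0, 0, 1, 0, 0, 0, 1, 0], [0, 1, 1, 0, 1, 0, 0, 0, 1, 0], [1, 0, 0, 1, 0, 1, 0, 0, 1, 0], [0, 0, 0, 1, 0, 0, 0, 0, 1, 0, 1, 0], [0, 0, 1, 0, 1, 1, 1, 0, 0], [1, 0, 1, 1, 0, 0, 0, 1, 1, 0], [0, 0, 0, 0, 1, 1, 0, 1]]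
def WG : List (List ℕ) := [[2], [2, 2, 2]]

def anyw (W : List (List ℕ)) (c x y z : ℕ) : Bool := W.any fun w => Nat.beq (wev w c x y) z

theorem mem_of_words (G : Subgroup (Equiv.Perm (Fin 8))) (W : List (List ℕ)) (c x y z : Equiv.Perm (Fin 8))
    (hc : c ∈ G) (hx : x ∈ G) (hy : y ∈ G) (h : anyw W (enc c) (enc x) (enc y) (enc z) = true) : z ∈ G := by
  unfold anyw at h
  rw [List.any_eq_true] at h
  obtain ⟨w, -, hw⟩ := h
  exact mem_of_word G w c x y z hc hx hy (Nat.eq_of_beq_eq_true hw)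

theorem wA : ((L0 ++ (LG ++ L1)).all fun z => anyw WA (enc gc) (enc gs) (enc gt0) z) = true := by decide +kernel
theorem wH0 : (L0.all fun z => anyw WH0 (enc gc) (enc gs) (enc gs) z) = true := by decide +kernel
theorem wH : (L0.all fun x => anyw WH (enc gc) x x (enc gs)) = true := by decide +kernel
theorem wP1 : anyw WP (enc gc) (enc gs) (enc gs) (enc gp1) = true := by decide +kernel
theorem wP2 : anyw WP (enc gc) (enc gs) (enc gs) (enc gp2) = true := by decide +kernel
theorem wP3 : anyw WP (enc gc) (enc gs) (enc gs) (enc gp3) = true := by decide +kernel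
theorem w1 : (L1.all fun x => anyw W1 (enc gc) x x (enc gs) && anyw W1 (enc gc) x x (enc gt0)) = true := by decide +kernel
theorem wG : (L0.all fun x => LG.all fun y => anyw WG (enc gc) x y (enc gt0)) = true := by decide +kernel

theorem app_inv (g : Equiv.Perm (Fin 8)) (x : Fin 8) : g (g⁻¹ x) = x := by
  rw [← Equiv.Perm.mul_apply, mul_inv_cancel]; rfl

theorem gc_pow_zero : ∀ j : Fin 7, (gc ^ j.val) 0 = 0 := by decide +kernel

theorem gen_le (G H : Subgroup (Equiv.Perm (Fin 8))) (hcG : gc ∈ G) (hc : gc ∈ H)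
    (hne : ∃ x ∈ G, x 0 = 1 ∧ x 1 = 0) (hS : ∀ x ∈ G, x 0 = 1 → x 1 = 0 → x ∈ H) : G ≤ H := by
  obtain ⟨s, hs, hs0, hs1⟩ := hne
  have key : ∀ g ∈ G, g 0 ≠ 0 → g ∈ H := by
    intro g hg h0
    have hb : g⁻¹ 0 ≠ 0 := by
      intro h
      apply h0
      rw [← h, app_inv]; exact h.symm
    obtain ⟨i, hi⟩ := gc_trans (g 0) 1 h0 (by decide)
    obtain ⟨j, hj⟩ := gc_trans 1 (g⁻¹ 0) (by decide) hb
    have hz : (gc ^ j.val) 0 = 0 := gc_pow_zero j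
    have hz' : (gc ^ i.val) 0 = 0 := gc_pow_zero i
    have hx := hS (gc ^ i.val * g * gc ^ j.val)
      (G.mul_mem (G.mul_mem (G.pow_mem hcG _) hg) (G.pow_mem hcG _))
      (by rw [Equiv.Perm.mul_apply, Equiv.Perm.mul_apply, hz, hi])
      (by rw [Equiv.Perm.mul_apply, Equiv.Perm.mul_apply, hj, app_inv, hz'])
    have : g = (gc ^ i.val)⁻¹ * (gc ^ i.val * g * gc ^ j.val) * (gc ^ j.val)⁻¹ := by group
    rw [this]
    exact H.mul_mem (H.mul_mem (H.inv_mem (H.pow_mem hc _)) hx) (H.inv_mem (H.pow_mem hc _))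
  intro g hg
  by_cases h0 : g 0 = 0
  · have h1 := key (s * g) (G.mul_mem hs hg) (by rw [Equiv.Perm.mul_apply, h0, hs0]; decide)
    have h2 := hS s hs hs0 hs1
    have : g = s⁻¹ * (s * g) := by group
    rw [this]
    exact H.mul_mem (H.inv_mem h2) h1
  · exact key g hg h0

theorem ex_swap (G : Subgroup (Equiv.Perm (Fin 8))) (hc : gc ∈ G)
    (htr : ∀ i j : Fin 8, ∃ σ ∈ G, σ i = j) : ∃ x ∈ G, x 0 = 1 ∧ x 1 = 0 := by
  obtain ⟨g, hg, h01⟩ := htr 0 1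
  have hb : g⁻¹ 0 ≠ 0 := by
    intro h
    have : g 0 = 0 := by nth_rw 1 [← h]; rw [app_inv]
    rw [h01] at this; exact absurd this (by decide)
  obtain ⟨j, hj⟩ := gc_trans 1 (g⁻¹ 0) (by decide) hb
  have hz : (gc ^ j.val) 0 = 0 := gc_pow_zero j
  exact ⟨g * gc ^ j.val, G.mul_mem hg (G.pow_mem hc _), by rw [Equiv.Perm.mul_apply, hz, h01],
    by rw [Equiv.Perm.mul_apply, hj, app_inv]⟩

theorem gH_le_of (G : Subgroup (Equiv.Perm (Fin 8))) (hc : gc ∈ G) (hs : gs ∈ G) : gH ≤ G := by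
  unfold gH
  rw [Subgroup.closure_le]
  have h1 := mem_of_words G WP gc gs gs gp1 hc hs hs wP1
  have h2 := mem_of_words G WP gc gs gs gp2 hc hs hs wP2
  have h3 := mem_of_words G WP gc gs gs gp3 hc hs hs wP3
  rintro x (rfl | rfl | rfl) <;> assumption

theorem gA1_le_of (G : Subgroup (Equiv.Perm (Fin 8))) (hc : gc ∈ G) (hs : gs ∈ G) (ht : gt0 ∈ G) : gA1 ≤ G := by
  have h := gH_le_of G hc hs
  unfold gA1
  rw [Subgroup.closure_le]
  have h1 : gp1 ∈ G := h (Subgroup.subset_closure (by simp))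
  have h2 : gp2 ∈ G := h (Subgroup.subset_closure (by simp))
  have h3 : gp3 ∈ G := h (Subgroup.subset_closure (by simp))
  rintro x (rfl | rfl | rfl | rfl) <;> assumption

theorem caseA (G : Subgroup (Equiv.Perm (Fin 8))) (hc : gc ∈ G)
    (htr : ∀ i j : Fin 8, ∃ σ ∈ G, σ i = j)
    (hS : ∀ x ∈ G, x 0 = 1 → x 1 = 0 → enc x ∈ L0 ∨ enc x ∈ LG ∨ enc x ∈ L1) :
    G = gH ∨ G = gA1 ∨ (∀ x ∈ G, x 0 = 1 → x 1 = 0 → enc x ∈ LG) := by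
  have hsw := ex_swap G hc htr
  have wA' := wA
  have wH0' := wH0
  have wH' := wH
  have w1' := w1
  have wG' := wG
  simp only [List.all_eq_true, List.mem_append, Bool.and_eq_true] at wA' wH0' wH' w1' wG'
  have hA : G ≤ gA1 := by
    apply gen_le G gA1 hc (gH_le gc_mem_gH) hsw
    intro x hx h0 h1
    exact mem_of_words gA1 WA gc gs gt0 x (gH_le gc_mem_gH) (gH_le gs_mem_gH) gt0_mem (wA' _ (hS x hx h0 h1))
  have hL0 : ∀ x ∈ G, enc x ∈ L0 → gs ∈ G := fun x hx hl =>
    mem_of_words G WH gc x x gs hc hx hx (wH' _ hl)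
  by_cases hex1 : ∃ x ∈ G, enc x ∈ L1
  · obtain ⟨x, hx, hl⟩ := hex1
    right; left
    exact le_antisymm hA (gA1_le_of G hc (mem_of_words G W1 gc x x gs hc hx hx (w1' _ hl).1)
      (mem_of_words G W1 gc x x gt0 hc hx hx (w1' _ hl).2))
  by_cases hex0 : ∃ x ∈ G, enc x ∈ L0
  · obtain ⟨x, hx, hl⟩ := hex0
    by_cases hexG : ∃ y ∈ G, enc y ∈ LG
    · obtain ⟨y, hy, hly⟩ := hexG
      right; left
      exact le_antisymm hA (gA1_le_of G hc (hL0 x hx hl)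
        (mem_of_words G WG gc x y gt0 hc hx hy (wG' _ hl _ hly)))
    · left
      apply le_antisymm _ (gH_le_of G hc (hL0 x hx hl))
      apply gen_le G gH hc gc_mem_gH hsw
      intro x hx h0 h1
      have : enc x ∈ L0 := by
        rcases hS x hx h0 h1 with h | h | h
        · exact h
        · exact absurd ⟨x, hx, h⟩ hexG
        · exact absurd ⟨x, hx, h⟩ hex1
      exact mem_of_words gH WH0 gc gs gs x gc_mem_gH gs_mem_gH gs_mem_gH (wH0' _ this)
  · right; right
    intro x hx h0 h1
    rcases hS x hx h0 h1 with h | h | h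
    · exact absurd ⟨x, hx, h⟩ hex0
    · exact h
    · exact absurd ⟨x, hx, h⟩ hex1

set_option linter.all false
set_option maxRecDepth 100000

theorem cent_gc (τ : Equiv.Perm (Fin 8)) (h : τ * gc = gc * τ) : ∃ n : ℕ, τ = gc ^ n := by
  have hx : ∀ x, τ (gc x) = gc (τ x) := fun x => congrArg (fun f => f x) h
  have h0 : τ 0 = 0 := by
    have := hx 0
    rw [show gc 0 = 0 by decide] at this
    generalize τ 0 = j at this
    revert j; decide
  have h1 : τ 1 ≠ 0 := by
    intro h; rw [← h0] at h; exact absurd (τ.injective h) (by decide)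
  obtain ⟨n, hn⟩ := gc_trans 1 (τ 1) (by decide) h1
  refine ⟨n.val, ?_⟩
  have hcomm : ∀ k : ℕ, ∀ x, τ ((gc ^ k) x) = (gc ^ k) (τ x) := by
    intro k
    induction k with
    | zero => intro x; rfl
    | succ k ih => intro x; rw [pow_succ, Equiv.Perm.mul_apply, Equiv.Perm.mul_apply, ih, hx]
  apply Equiv.ext
  intro x
  by_cases hx0 : x = 0
  · rw [hx0, h0, gc_pow_zero]
  · obtain ⟨k, hk⟩ := gc_trans 1 x (by decide) hx0
    rw [← hk, hcomm, ← hn, ← Equiv.Perm.mul_apply, ← Equiv.Perm.mul_apply, ← pow_add, ← pow_add, add_comm]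

theorem solv_norm : Group.IsSolvable (Subgroup.normalizer (Subgroup.zpowers gc : Set (Equiv.Perm (Fin 8)))) := by
  have hcomm : ∀ a b : MulAut (Subgroup.zpowers gc), a * b = b * a := by
    intro a b
    apply (IsCyclic.mulAutMulEquiv (Subgroup.zpowers gc)).injective
    rw [map_mul, map_mul, mul_comm]
  haveI : Group.IsSolvable (MulAut (Subgroup.zpowers gc)) := Group.isSolvable_of_comm hcomm
  have hz : ∀ a b : Subgroup.zpowers gc, a * b = b * a := by
    rintro ⟨_, m, rfl⟩ ⟨_, n, rfl⟩
    apply Subtype.ext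
    show gc ^ m * gc ^ n = gc ^ n * gc ^ m
    rw [← zpow_add, ← zpow_add, add_comm]
  haveI : Group.IsSolvable (Subgroup.zpowers gc) := Group.isSolvable_of_comm hz
  refine Group.isSolvable_of_ker_le_range (Subgroup.inclusion Subgroup.le_normalizer) (Subgroup.normalizerMonoidHom (Subgroup.zpowers gc)) ?_
  rw [Subgroup.normalizerMonoidHom_ker]
  rintro ⟨τ, hτ⟩ hz
  rw [Subgroup.mem_subgroupOf, Subgroup.mem_centralizer_iff] at hz
  have h1 := hz gc (Subgroup.mem_zpowers gc)
  obtain ⟨n, hn⟩ := cent_gc τ h1.symm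
  exact ⟨⟨τ, by rw [hn]; exact Subgroup.npow_mem_zpowers _ _⟩, rfl⟩

def linp (σ : Equiv.Perm (Fin 8)) : Equiv.Perm (Fin 8) := tr (σ 0) * σ

theorem xor8 : ∀ a b c : Fin 8, (a ^^^ b ^^^ c) ^^^ c = a ^^^ b := by decide +kernel
theorem xor8' : ∀ a b : Fin 8, a ^^^ b = a ^^^ b ^^^ 0 := by decide +kernel
theorem xor8'' : ∀ a b : Fin 8, (a ^^^ b) ^^^ b = a := by decide +kernel

theorem linp_mul (σ τ : Equiv.Perm (Fin 8)) (hσ : isAff σ) : linp (σ * τ) = linp σ * linp τ := by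
  apply Equiv.ext
  intro x
  show σ (τ x) ^^^ σ (τ 0) = σ (τ x ^^^ τ 0) ^^^ σ 0
  rw [xor8' (τ x) (τ 0), hσ, xor8]

def linHom : gA1 →* Equiv.Perm (Fin 8) where
  toFun σ := linp σ.1
  map_one' := by decide +kernel
  map_mul' σ τ := linp_mul σ.1 τ.1 (gA1_aff σ.1 σ.2)

theorem tr_comm : ∀ s t : Fin 8, tr s * tr t = tr t * tr s := by decide +kernel

def gq2 : Equiv.Perm (Fin 8) := gt0 * gp1
def gq3 : Equiv.Perm (Fin 8) := gt0 * gp1 * gp1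

theorem LG_enc : ∀ n ∈ LG, n = enc gt0 ∨ n = enc gq2 ∨ n = enc gq3 := by decide +kernel

theorem solvLG (G : Subgroup (Equiv.Perm (Fin 8))) (hc : gc ∈ G)
    (htr : ∀ i j : Fin 8, ∃ σ ∈ G, σ i = j)
    (hS : ∀ x ∈ G, x 0 = 1 → x 1 = 0 → enc x ∈ LG) : Group.IsSolvable G := by
  let N := Subgroup.normalizer (Subgroup.zpowers gc : Set (Equiv.Perm (Fin 8)))
  let H := (N.comap linHom).map gA1.subtype
  have hp : gp1 ∈ N := by
    show gp1 ∈ Subgroup.normalizer (Subgroup.zpowers gc : Set (Equiv.Perm (Fin 8)))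
    rw [Subgroup.mem_normalizer_iff_map_conj_eq, MonoidHom.map_zpowers]
    have h1 : ∃ k : Fin 7, gp1 * gc * gp1⁻¹ = gc ^ k.val := by decide +kernel
    have h2 : ∃ k : Fin 7, gc = (gp1 * gc * gp1⁻¹) ^ k.val := by decide +kernel
    obtain ⟨k, hk⟩ := h1
    obtain ⟨l, hl⟩ := h2
    apply le_antisymm
    · rw [Subgroup.zpowers_le]
      show gp1 * gc * gp1⁻¹ ∈ _
      rw [hk]; exact Subgroup.npow_mem_zpowers _ _
    · rw [Subgroup.zpowers_le]
      show gc ∈ Subgroup.zpowers (gp1 * gc * gp1⁻¹)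
      exact ⟨l.val, by simpa using hl.symm⟩
  have hcA : gc ∈ gA1 := gH_le gc_mem_gH
  have hpA : gp1 ∈ gA1 := Subgroup.subset_closure (by simp)
  have hGH : G ≤ H := by
    have hcH : gc ∈ H := ⟨⟨gc, hcA⟩, by
      show linp gc ∈ N
      have : linp gc = gc := by decide +kernel
      rw [this]; exact Subgroup.le_normalizer (Subgroup.mem_zpowers gc), rfl⟩
    have ht : gt0 ∈ H := ⟨⟨gt0, gt0_mem⟩, by
      show linp gt0 ∈ N
      have : linp gt0 = 1 := by decide +kernel
      rw [this]; exact N.one_mem, rfl⟩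
    have hpH : gp1 ∈ H := ⟨⟨gp1, hpA⟩, by
      show linp gp1 ∈ N
      have : linp gp1 = gp1 := by decide +kernel
      rw [this]; exact hp, rfl⟩
    apply gen_le G H hc hcH (ex_swap G hc htr)
    intro x hx h0 h1
    rcases LG_enc _ (hS x hx h0 h1) with h | h | h
    · rw [enc_inj _ _ h]; exact ht
    · rw [enc_inj _ _ h]; exact H.mul_mem ht hpH
    · rw [enc_inj _ _ h]; exact H.mul_mem (H.mul_mem ht hpH) hpH
  have hGA : G ≤ gA1 := fun x hx => by
    obtain ⟨y, -, rfl⟩ := hGH hx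
    exact y.2
  have hGN : ∀ x ∈ G, linp x ∈ N := fun x hx => by
    obtain ⟨y, hy, rfl⟩ := hGH hx
    exact hy
  haveI : Group.IsSolvable N := solv_norm
  let f : G →* N := (linHom.comp (Subgroup.inclusion hGA)).codRestrict N (fun x => hGN x.1 x.2)
  have hker : ∀ x : f.ker, x.1.1 = tr (x.1.1 0) := by
    intro x
    have h1 : linp x.1.1 = 1 := congrArg Subtype.val (MonoidHom.mem_ker.1 x.2)
    apply Equiv.ext
    intro v
    have h2 : x.1.1 v ^^^ x.1.1 0 = v := congrArg (fun g => g v) h1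
    show x.1.1 v = v ^^^ x.1.1 0
    rw [← xor8'' (x.1.1 v) (x.1.1 0), h2]
  haveI : Group.IsSolvable f.ker := by
    apply Group.isSolvable_of_comm
    intro a b
    apply Subtype.ext
    apply Subtype.ext
    show a.1.1 * b.1.1 = b.1.1 * a.1.1
    rw [hker a, hker b, tr_comm]
  exact Group.isSolvable_of_ker_le_range f.ker.subtype f (by rw [Subgroup.range_subtype])

set_option linter.all false
set_option maxRecDepth 100000

def cj (τ : Equiv.Perm (Fin 8)) (G : Subgroup (Equiv.Perm (Fin 8))) : Subgroup (Equiv.Perm (Fin 8)) :=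
  G.comap (MulAut.conj τ).toMonoidHom

theorem mem_cj (τ g : Equiv.Perm (Fin 8)) (G : Subgroup (Equiv.Perm (Fin 8))) :
    g ∈ cj τ G ↔ τ * g * τ⁻¹ ∈ G := Iff.rfl

def cjEquiv (τ : Equiv.Perm (Fin 8)) (G : Subgroup (Equiv.Perm (Fin 8))) : cj τ G ≃* G where
  toFun g := ⟨τ * g.1 * τ⁻¹, g.2⟩
  invFun g := ⟨τ⁻¹ * g.1 * τ, by rw [mem_cj]; convert g.2 using 1; group⟩
  left_inv g := by apply Subtype.ext; simp only; group
  right_inv g := by apply Subtype.ext; simp only; group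
  map_mul' g h := by apply Subtype.ext; simp

theorem cj_trans (τ : Equiv.Perm (Fin 8)) (G : Subgroup (Equiv.Perm (Fin 8)))
    (htr : ∀ i j : Fin 8, ∃ σ ∈ G, σ i = j) : ∀ i j : Fin 8, ∃ σ ∈ cj τ G, σ i = j := by
  intro i j
  obtain ⟨σ, hσ, h⟩ := htr (τ i) (τ j)
  refine ⟨τ⁻¹ * σ * τ, ?_, ?_⟩
  · rw [mem_cj]; convert hσ using 1; group
  · rw [Equiv.Perm.mul_apply, Equiv.Perm.mul_apply, h, ← Equiv.Perm.mul_apply, inv_mul_cancel]; rfl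

theorem cj_solv (τ : Equiv.Perm (Fin 8)) (G : Subgroup (Equiv.Perm (Fin 8)))
    (hs : ¬ Group.IsSolvable G) : ¬ Group.IsSolvable (cj τ G) := by
  intro h
  exact hs (Group.isSolvable_of_surjective (f := (cjEquiv τ G).toMonoidHom) (cjEquiv τ G).surjective)

theorem no3 (G : Subgroup (Equiv.Perm (Fin 8))) (htr : ∀ i j : Fin 8, ∃ σ ∈ G, σ i = j)
    (hs : ¬ Group.IsSolvable G) (hA : ¬ alternatingGroup (Fin 8) ≤ G) : ¬ ∃ g ∈ G, g.IsThreeCycle := by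
  rintro ⟨g, hg, h3⟩
  have htr' : MulAction.IsPretransitive G (Fin 8) := ⟨fun i j => by
    obtain ⟨σ, hσ, h⟩ := htr i j
    exact ⟨⟨σ, hσ⟩, h⟩⟩
  have hprim : MulAction.IsPreprimitive G (Fin 8) := by
    by_contra h; exact hs (solv_of_not_prim G htr' h)
  exact hA (Equiv.Perm.alternatingGroup_le_of_isPreprimitive_of_isThreeCycle_mem hprim h3 hg)

def gnu : Equiv.Perm (Fin 8) where
  toFun := ![0, 1, 3, 4, 5, 6, 7, 2]
  invFun := ![0, 1, 7, 2, 3, 4, 5, 6]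
  left_inv := by decide
  right_inv := by decide

theorem nu_chk : ((L0 ++ L2).all fun n => inl (L0 ++ (LG ++ L1)) (cmc (cmc (enc gnu) n) (enc gnu⁻¹))) = true := by
  decide +kernel

def isConjTo (G H : Subgroup (Equiv.Perm (Fin 8))) : Prop :=
  ∃ τ : Equiv.Perm (Fin 8), ∀ g, g ∈ G ↔ τ * g * τ⁻¹ ∈ H

theorem classify (G : Subgroup (Equiv.Perm (Fin 8))) (hc : gc ∈ G)
    (htr : ∀ i j : Fin 8, ∃ σ ∈ G, σ i = j)
    (hs : ¬ Group.IsSolvable G) (h3 : ¬ ∃ g ∈ G, g.IsThreeCycle) :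
    isConjTo G gH ∨ isConjTo G gA1 ∨ ((∀ x ∈ G, x 0 = 1 → x 1 = 0 → enc x ∈ L0 ∨ enc x ∈ L3) ∧
      ∃ x ∈ G, enc x ∈ L3) := by
  have hall : ∀ x ∈ G, x 0 = 1 → x 1 = 0 →
      enc x ∈ L0 ∨ enc x ∈ LG ∨ enc x ∈ L1 ∨ enc x ∈ L2 ∨ enc x ∈ L3 := by
    intro x hx h0 h1
    have := allsw_sound _ big1 x h0 h1
    simp only [Bool.or_eq_true, inl_iff] at this
    rcases this with h | h | h | h | h | h
    · exact Or.inl h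
    · exact Or.inr (Or.inl h)
    · exact Or.inr (Or.inr (Or.inl h))
    · exact Or.inr (Or.inr (Or.inr (Or.inl h)))
    · exact Or.inr (Or.inr (Or.inr (Or.inr h)))
    · exact absurd (chk1_sound G hc x hx h) h3
  have p12 := pairs12
  have p23 := pairs23
  simp only [List.all_eq_true, List.mem_append] at p12 p23
  have refl1 : ∀ H, G = H → isConjTo G H := by
    rintro H rfl
    exact ⟨1, fun g => by simp⟩
  have doA : (∀ x ∈ G, x 0 = 1 → x 1 = 0 → enc x ∈ L0 ∨ enc x ∈ LG ∨ enc x ∈ L1) →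
      isConjTo G gH ∨ isConjTo G gA1 := by
    intro hS
    rcases caseA G hc htr hS with h | h | h
    · exact Or.inl (refl1 _ h)
    · exact Or.inr (refl1 _ h)
    · exact absurd (solvLG G hc htr h) hs
  by_cases h1 : ∃ x ∈ G, enc x ∈ LG ∨ enc x ∈ L1
  · obtain ⟨x, hx, hl⟩ := h1
    have := doA (by
      intro y hy h0 h1
      rcases hall y hy h0 h1 with h | h | h | h | h
      · exact Or.inl h
      · exact Or.inr (Or.inl h)
      · exact Or.inr (Or.inr h)
      · exact absurd (chk2_sound G hc x y hx hy (p12 _ hl _ (Or.inl h))) h3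
      · exact absurd (chk2_sound G hc x y hx hy (p12 _ hl _ (Or.inr h))) h3)
    rcases this with h | h
    · exact Or.inl h
    · exact Or.inr (Or.inl h)
  by_cases h2 : ∃ x ∈ G, enc x ∈ L2
  · obtain ⟨x, hx, hl⟩ := h2
    have hS : ∀ y ∈ G, y 0 = 1 → y 1 = 0 → enc y ∈ L0 ∨ enc y ∈ L2 := by
      intro y hy h0 h1'
      rcases hall y hy h0 h1' with h | h | h | h | h
      · exact Or.inl h
      · exact absurd ⟨y, hy, Or.inl h⟩ h1
      · exact absurd ⟨y, hy, Or.inr h⟩ h1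
      · exact Or.inr h
      · exact absurd (chk2_sound G hc x y hx hy (p23 _ hl _ h)) h3
    have nc := nu_chk
    simp only [List.all_eq_true, List.mem_append, inl_iff] at nc
    have hc' : gc ∈ cj gnu⁻¹ G := by
      rw [mem_cj]
      have : ∃ k : Fin 7, gnu⁻¹ * gc * gnu⁻¹⁻¹ = gc ^ k.val := by decide +kernel
      obtain ⟨k, hk⟩ := this
      rw [hk]; exact G.pow_mem hc _
    have hback : ∀ g, g ∈ G ↔ gnu * g * gnu⁻¹ ∈ cj gnu⁻¹ G := by
      intro g
      rw [mem_cj]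
      have : gnu⁻¹ * (gnu * g * gnu⁻¹) * gnu⁻¹⁻¹ = g := by group
      rw [this]
    have := caseA (cj gnu⁻¹ G) hc' (cj_trans _ _ htr) (by
      intro y hy h0 h1
      rw [mem_cj] at hy
      have e0 : gnu⁻¹⁻¹ 0 = 0 := by decide
      have e1 : gnu⁻¹⁻¹ 1 = 1 := by decide
      have f0 : gnu⁻¹ 0 = 0 := by decide
      have f1 : gnu⁻¹ 1 = 1 := by decide
      have hh := nc _ (hS _ hy (by rw [Equiv.Perm.mul_apply, Equiv.Perm.mul_apply, e0, h0, f1])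
        (by rw [Equiv.Perm.mul_apply, Equiv.Perm.mul_apply, e1, h1, f0]))
      rw [← enc_mul, ← enc_mul] at hh
      have : gnu * (gnu⁻¹ * y * gnu⁻¹⁻¹) * gnu⁻¹ = y := by group
      rw [this] at hh
      exact hh)
    rcases this with h | h | h
    · left; exact ⟨gnu, fun g => by rw [← h]; exact hback g⟩
    · right; left; exact ⟨gnu, fun g => by rw [← h]; exact hback g⟩
    · exact absurd (solvLG _ hc' (cj_trans _ _ htr) h) (cj_solv _ _ hs)
  by_cases h4 : ∃ x ∈ G, enc x ∈ L3
  · right; right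
    refine ⟨?_, h4⟩
    intro y hy h0 h1'
    rcases hall y hy h0 h1' with h | h | h | h | h
    · exact Or.inl h
    · exact absurd ⟨y, hy, Or.inl h⟩ h1
    · exact absurd ⟨y, hy, Or.inr h⟩ h1
    · exact absurd ⟨y, hy, h⟩ h2
    · exact Or.inr h
  · have := doA (by
      intro y hy h0 h1'
      rcases hall y hy h0 h1' with h | h | h | h | h
      · exact Or.inl h
      · exact Or.inr (Or.inl h)
      · exact Or.inr (Or.inr h)
      · exact absurd ⟨y, hy, h⟩ h2
      · exact absurd ⟨y, hy, h⟩ h4)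
    rcases this with h | h
    · exact Or.inl h
    · exact Or.inr (Or.inl h)

set_option linter.all false
set_option maxRecDepth 100000

instance fact7 : Fact (Nat.Prime 7) := ⟨by norm_num⟩

open Matrix in
abbrev GL27 := Matrix.GeneralLinearGroup (Fin 2) (ZMod 7)

def tb (z : ZMod 7) : Fin 8 := (![1, 2, 4, 3, 6, 7, 5] : Fin 7 → Fin 8) z
def tbi : Fin 8 → ZMod 7 := ![0, 0, 1, 3, 2, 6, 4, 5]

def eP : OnePoint (ZMod 7) ≃ Fin 8 where
  toFun p := p.elim 0 tb
  invFun i := if i = 0 then OnePoint.infty else ((tbi i : ZMod 7) : OnePoint (ZMod 7))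
  left_inv p := by
    have h : ∀ z : ZMod 7, tb z ≠ 0 ∧ tbi (tb z) = z := by decide
    cases p with
    | infty => simp
    | coe z => simp [(h z).1, (h z).2]
  right_inv i := by
    have h : ∀ i : Fin 8, i ≠ 0 → tb (tbi i) = i := by decide
    by_cases hi : i = 0
    · simp [hi]
    · simp [hi, h i hi]

theorem eP_infty : eP OnePoint.infty = 0 := rfl
theorem eP_coe (z : ZMod 7) : eP (z : OnePoint (ZMod 7)) = tb z := rfl

def fP : GL27 →* Equiv.Perm (Fin 8) :=
  eP.permCongrHom.toMonoidHom.comp (MulAction.toPermHom GL27 (OnePoint (ZMod 7)))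

theorem fP_eP (g : GL27) (p : OnePoint (ZMod 7)) : fP g (eP p) = eP (g • p) := by
  simp [fP]

theorem fP_zero (g : GL27) : fP g 0 = eP (g • (OnePoint.infty : OnePoint (ZMod 7))) := by
  rw [← eP_infty, fP_eP]

theorem fP_tb (g : GL27) (z : ZMod 7) : fP g (tb z) = eP (g • (z : OnePoint (ZMod 7))) := by
  rw [← eP_coe, fP_eP]

/-- code of the map `z ↦ k / z` -/
def sk (k : ZMod 7) : ℕ := mkc fun i => match i with
  | 0 => 1
  | 1 => 0
  | i => (tb (k * (tbi (Fin.ofNat 8 i)) ^ 5)).val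

theorem sk_in : ∀ k : ZMod 7, k ≠ 0 → sk k ∈ L0 ∨ sk k ∈ L3 := by decide
theorem in_sk : ∀ n ∈ L0 ++ L3, ∃ k : ZMod 7, k ≠ 0 ∧ sk k = n := by decide

theorem fP_anti (g : GL27) (h0 : g 0 0 = 0) (h1 : g 1 1 = 0) (k : ZMod 7) (hk : g 0 1 = k * g 1 0)
    (hc : g 1 0 ≠ 0) : enc (fP g) = sk k := by
  have a0 : fP g 0 = 1 := by
    rw [fP_zero, OnePoint.smul_infty_eq_ite, if_neg hc, h0, zero_div]; rfl
  have a1 : fP g 1 = 0 := by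
    have := fP_tb g 0
    rw [OnePoint.smul_some_eq_ite, if_pos (by simp [h1])] at this
    exact this
  have inv5 : ∀ z : ZMod 7, z ≠ 0 → z * z ^ 5 = 1 := by decide
  have az : ∀ z : ZMod 7, z ≠ 0 → fP g (tb z) = tb (k * z ^ 5) := by
    intro z hz
    rw [fP_tb, OnePoint.smul_some_eq_ite, if_neg (by rw [h1, add_zero]; exact mul_ne_zero hc hz), eP_coe]
    congr 1
    rw [h0, h1, hk, zero_mul, zero_add, add_zero, div_eq_iff (mul_ne_zero hc hz)]
    linear_combination (- k * g 1 0) * inv5 z hz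
  have tt : ∀ i : Fin 8, i ≠ 0 → i ≠ 1 → tbi i ≠ 0 ∧ tb (tbi i) = i := by decide
  have ai : ∀ i : Fin 8, i ≠ 0 → i ≠ 1 → fP g i = tb (k * (tbi i) ^ 5) := by
    intro i hi0 hi1
    have := az _ (tt i hi0 hi1).1
    rwa [(tt i hi0 hi1).2] at this
  have b2 := ai 2 (by decide) (by decide)
  have b3 := ai 3 (by decide) (by decide)
  have b4 := ai 4 (by decide) (by decide)
  have b5 := ai 5 (by decide) (by decide)
  have b6 := ai 6 (by decide) (by decide)
  have b7 := ai 7 (by decide) (by decide)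
  have c0 : (fP g ⟨0, by omega⟩) = _ := a0
  have c1 : (fP g ⟨1, by omega⟩) = _ := a1
  have c2 : (fP g ⟨2, by omega⟩) = _ := b2
  have c3 : (fP g ⟨3, by omega⟩) = _ := b3
  have c4 : (fP g ⟨4, by omega⟩) = _ := b4
  have c5 : (fP g ⟨5, by omega⟩) = _ := b5
  have c6 : (fP g ⟨6, by omega⟩) = _ := b6
  have c7 : (fP g ⟨7, by omega⟩) = _ := b7
  unfold enc mkc
  beta_reduce
  rw [dif_pos (by omega), dif_pos (by omega), dif_pos (by omega), dif_pos (by omega), dif_pos (by omega),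
    dif_pos (by omega), dif_pos (by omega), dif_pos (by omega), c0, c1, c2, c3, c4, c5, c6, c7]
  rfl

theorem fP_swap (g : GL27) (h0 : fP g 0 = 1) (h1 : fP g 1 = 0) :
    ∃ k : ZMod 7, k ≠ 0 ∧ enc (fP g) = sk k := by
  have e0 : g • (OnePoint.infty : OnePoint (ZMod 7)) = ((0 : ZMod 7) : OnePoint (ZMod 7)) := by
    apply eP.injective; rw [← fP_zero, h0]; rfl
  have e1 : g • (((0 : ZMod 7) : OnePoint (ZMod 7))) = OnePoint.infty := by
    apply eP.injective; rw [← fP_tb]; exact h1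
  rw [OnePoint.smul_infty_eq_ite] at e0
  rw [OnePoint.smul_some_eq_ite] at e1
  have hc : g 1 0 ≠ 0 := by
    intro h; rw [if_pos h] at e0; exact absurd e0 (OnePoint.infty_ne_coe _)
  have hd : g 1 1 = 0 := by
    by_contra h; rw [if_neg (by simpa using h)] at e1; exact absurd e1 (OnePoint.coe_ne_infty _)
  rw [if_neg hc] at e0
  have ha : g 0 0 = 0 := by
    have := OnePoint.coe_injective e0
    rcases div_eq_zero_iff.1 this with h | h
    · exact h
    · exact absurd h hc
  have hdet := g.det_ne_zero
  rw [Matrix.det_fin_two] at hdet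
  have hb : g 0 1 ≠ 0 := by
    intro h; apply hdet; rw [h, ha]; ring
  refine ⟨g 0 1 / g 1 0, div_ne_zero hb hc, fP_anti g ha hd _ ?_ hc⟩
  rw [div_mul_cancel₀ _ hc]

theorem sk_range (k : ZMod 7) (hk : k ≠ 0) : ∃ g : GL27, enc (fP g) = sk k := by
  refine ⟨Matrix.GeneralLinearGroup.mkOfDetNeZero !![0, k; 1, 0] (by simpa [Matrix.det_fin_two] using hk), ?_⟩
  apply fP_anti <;> simp [Matrix.GeneralLinearGroup.mkOfDetNeZero]

theorem gc_range : gc ∈ fP.range := by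
  refine ⟨Matrix.GeneralLinearGroup.mkOfDetNeZero !![1, 1; 0, 1] (by simp [Matrix.det_fin_two]), ?_⟩
  apply Equiv.ext
  intro i
  by_cases hi : i = 0
  · subst hi
    rw [fP_zero, OnePoint.smul_infty_eq_ite, if_pos (by simp [Matrix.GeneralLinearGroup.mkOfDetNeZero])]; rfl
  · have tt : ∀ i : Fin 8, i ≠ 0 → tb (tbi i) = i ∧ gc i = tb (tbi i + 1) := by decide
    rw [(tt i hi).2]
    conv_lhs => rw [← (tt i hi).1]
    rw [fP_tb, OnePoint.smul_some_eq_ite, if_neg (by simp [Matrix.GeneralLinearGroup.mkOfDetNeZero]), eP_coe]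
    congr 1
    simp [Matrix.GeneralLinearGroup.mkOfDetNeZero]

theorem ker_fP : fP.ker = Subgroup.center GL27 := by
  ext g
  rw [Matrix.GeneralLinearGroup.mem_center_iff_val_mem_range_scalar, MonoidHom.mem_ker]
  constructor
  · intro h
    have hp : ∀ p : OnePoint (ZMod 7), g • p = p := by
      intro p
      apply eP.injective; rw [← fP_eP, h]; rfl
    have hc : g 1 0 = 0 := OnePoint.smul_infty_eq_self_iff.1 (hp _)
    have e0 := hp ((0 : ZMod 7) : OnePoint (ZMod 7))
    have e1 := hp ((1 : ZMod 7) : OnePoint (ZMod 7))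
    have hdet := g.det_ne_zero
    rw [Matrix.det_fin_two, hc] at hdet
    have hd : g 1 1 ≠ 0 := by intro h; apply hdet; rw [h]; ring
    rw [OnePoint.smul_some_eq_ite, if_neg (by rw [hc]; simpa using hd)] at e0 e1
    have e0 := OnePoint.coe_injective e0
    have e1 := OnePoint.coe_injective e1
    rw [hc, zero_mul, zero_add, div_eq_iff hd] at e0 e1
    have hb : g 0 1 = 0 := by linear_combination e0
    have ha : g 0 0 = g 1 1 := by linear_combination e1 - e0
    refine ⟨g 1 1, ?_⟩
    ext i j
    fin_cases i <;> fin_cases j <;> simp [hb, hc, ha]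
  · rintro ⟨a, ha⟩
    have h00 : g 0 0 = a := by show g.val 0 0 = a; rw [← ha]; simp
    have h11 : g 1 1 = a := by show g.val 1 1 = a; rw [← ha]; simp
    have h01 : g 0 1 = 0 := by show g.val 0 1 = 0; rw [← ha]; simp
    have h10 : g 1 0 = 0 := by show g.val 1 0 = 0; rw [← ha]; simp
    have hdet := g.det_ne_zero
    rw [Matrix.det_fin_two, h00, h11, h01] at hdet
    have ha0 : a ≠ 0 := by rintro rfl; apply hdet; ring
    apply Equiv.ext
    intro i
    obtain ⟨p, rfl⟩ := eP.surjective i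
    rw [fP_eP, Equiv.Perm.one_apply]
    congr 1
    cases p with
    | infty => exact OnePoint.smul_infty_eq_self_iff.2 h10
    | coe z =>
      rw [OnePoint.smul_some_eq_ite, if_neg (by rw [h10, h11]; simpa using ha0), h00, h11, h01, h10]
      congr 1
      rw [zero_mul, zero_add, add_zero, mul_comm, mul_div_assoc, div_self ha0, mul_one]

def WL : List (List ℕ) := [[0, 0, 1, 0, 0, 0, 1, 0, 0], [0, 1, 0, 0, 0, 0, 0, 0, 1, 0], [0, 0, 0, 1, 0, 0, 1, 0, 0, 0], [1], [0, 1, 0, 0, 1, 0, 0, 1, 0], [1, 0, 1, 0, 0, 1, 0, 0, 1, 0, 1], [1, 0, 1, 0, 0, 0, 0, 0, 1, 0, 1], [0, 1, 0, 0, 0, 0, 0, 1, 0], [0, 1, 0, 1, 0, 0, 1, 0, 1, 0], [0, 1, 0, 1, 0, 0, 0, 0, 1, 0, 0], [0, 1, 0, 0, 0, 0, 1, 0, 0, 1, 0, 0], [0, 0, 1, 0, 0, 0, 0, 0, 1, 0, 0], [0, 1, 0, 0, 0, 1, 0], [0, 0, 0, 1, 0, 1, 0, 0, 0], [0, 1,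 0, 1, 0, 0, 1, 0, 0, 0, 0], [0, 0, 1, 0, 1, 0, 1, 0, 0]]

theorem wL : (L3.all fun u => (L0 ++ L3).all fun z => anyw WL (enc gc) u u z) = true := by decide +kernel

theorem pgl_case (G : Subgroup (Equiv.Perm (Fin 8))) (hc : gc ∈ G)
    (htr : ∀ i j : Fin 8, ∃ σ ∈ G, σ i = j)
    (hS : ∀ x ∈ G, x 0 = 1 → x 1 = 0 → enc x ∈ L0 ∨ enc x ∈ L3) (hu : ∃ x ∈ G, enc x ∈ L3) :
    Nonempty (G ≃* PGL27) := by
  have hw := wL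
  simp only [List.all_eq_true] at hw
  obtain ⟨u, hu, hl⟩ := hu
  have h1 : G ≤ fP.range := by
    refine gen_le G _ hc gc_range (ex_swap G hc htr) ?_
    intro x hx h0 h1
    obtain ⟨k, hk, he⟩ := in_sk _ (List.mem_append.2 (hS x hx h0 h1))
    obtain ⟨g, hg⟩ := sk_range k hk
    exact ⟨g, enc_inj _ _ (hg.trans he)⟩
  have h2 : fP.range ≤ G := by
    refine gen_le _ G gc_range hc ?_ ?_
    · obtain ⟨x, hx, h⟩ := ex_swap G hc htr
      exact ⟨x, h1 hx, h⟩
    · rintro x ⟨g, rfl⟩ h0 h1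
      obtain ⟨k, hk, he⟩ := fP_swap g h0 h1
      apply mem_of_words G WL gc u u _ hc hu hu
      rw [he]
      exact hw _ hl _ (List.mem_append.2 (sk_in k hk))
  have hG : G = fP.range := le_antisymm h1 h2
  exact ⟨((QuotientGroup.quotientMulEquivOfEq ker_fP).symm.trans
    ((QuotientGroup.quotientKerEquivRange fP).trans (MulEquiv.subgroupCongr hG.symm))).symm⟩

set_option linter.all false
set_option maxRecDepth 100000

theorem not_alt_le (G : Subgroup (Equiv.Perm (Fin 8))) (hA8 : G ≠ alternatingGroup (Fin 8)) (hS8 : G ≠ ⊤) :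
    ¬ alternatingGroup (Fin 8) ≤ G := by
  intro h
  have h2 : (alternatingGroup (Fin 8)).index = 2 := alternatingGroup.index_eq_two
  have h3 := Subgroup.relIndex_mul_index h
  rw [h2] at h3
  have hd : G.index ∣ 2 := ⟨_, by rw [mul_comm]; exact h3.symm⟩
  rcases (Nat.dvd_prime Nat.prime_two).1 hd with h1 | h1
  · exact hS8 (Subgroup.index_eq_one.1 h1)
  · rw [h1] at h3
    have : (alternatingGroup (Fin 8)).relIndex G = 1 := by omega
    exact hA8 (le_antisymm (Subgroup.relIndex_eq_one.1 this) h)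

theorem ex_gc (G : Subgroup (Equiv.Perm (Fin 8))) (h7 : 7 ∣ Nat.card G) :
    ∃ τ : Equiv.Perm (Fin 8), gc ∈ cj τ G := by
  haveI : Fact (Nat.Prime 7) := ⟨by norm_num⟩
  obtain ⟨x, hx⟩ := exists_prime_orderOf_dvd_card' 7 h7
  have hx' : orderOf (x : Equiv.Perm (Fin 8)) = 7 := by rw [Subgroup.orderOf_coe, hx]
  have hct : ∀ σ : Equiv.Perm (Fin 8), orderOf σ = 7 → σ.cycleType = {7} := by
    intro σ hσ
    have hp : Nat.Prime (orderOf σ) := by rw [hσ]; norm_num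
    have hcyc := Equiv.Perm.isCycle_of_prime_order' hp (by rw [hσ]; simp)
    rw [hcyc.cycleType, ← hcyc.orderOf, hσ]
    
  have hgc : orderOf gc = 7 := orderOf_eq_prime (by decide +kernel) (by decide +kernel)
  have hconj := (Equiv.Perm.isConj_iff_cycleType_eq (σ := gc) (τ := x)).2 (by rw [hct _ hx', hct _ hgc])
  obtain ⟨τ, hτ⟩ := isConj_iff.1 hconj
  exact ⟨τ, by rw [mem_cj, hτ]; exact x.2⟩

theorem ratExt_of_isConjTo (K : Type) [Field K] (G H : Subgroup (Equiv.Perm (Fin 8))) (τ : Equiv.Perm (Fin 8))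
    (h : isConjTo (cj τ G) H) (hr : IsRatExt K ↥(fixedSub K (Fin 8) H)) : IsRatExt K ↥(fixedSub K (Fin 8) G) := by
  obtain ⟨ρ, hρ⟩ := h
  refine ratExt_conj K H G (ρ * τ⁻¹) ?_ hr
  intro g
  have := hρ (τ⁻¹ * g * τ)
  rw [mem_cj] at this
  have e1 : τ * (τ⁻¹ * g * τ) * τ⁻¹ = g := by group
  have e2 : ρ * τ⁻¹ * g * (ρ * τ⁻¹)⁻¹ = ρ * (τ⁻¹ * g * τ) * ρ⁻¹ := by group
  rw [e1] at this
  rw [e2]; exact this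

/-- **Rationality for unsolvable transitive subgroups of `S₈`.** Let `K` be a field containing
`ℚ(√−7)` (i.e. `K` has characteristic zero and `−7` is a square in `K`), and let `G` be an
unsolvable transitive subgroup of `S₈` (acting on `{0,…,7}`) with `G ≠ A₈`, `G ≠ S₈` and `G`
not isomorphic to `PGL(2,7)`. Then `K(x₁,…,x₈)^G` is `K`-rational. -/
theorem rationality_unsolvable_transitive (K : Type) [Field K] [CharZero K]
    (hsqrt : ∃ r : K, r ^ 2 = -7)
    (G : Subgroup (Equiv.Perm (Fin 8)))
    (hunsolv : ¬ IsSolvable G)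
    (htrans : ∀ i j : Fin 8, ∃ σ ∈ G, σ i = j)
    (hA8 : G ≠ alternatingGroup (Fin 8))
    (hS8 : G ≠ ⊤)
    (hPGL : ¬ Nonempty (G ≃* PGL27)) :
    IsRatExt K ↥(fixedSub K (Fin 8) G) := by
  obtain ⟨r, hr⟩ := hsqrt
  have hα : ((1 + r) / 2) ^ 2 = (1 + r) / 2 - 2 := by
    field_simp
    linear_combination hr
  have hA := not_alt_le G hA8 hS8
  have htr' : MulAction.IsPretransitive G (Fin 8) := ⟨fun i j => by
    obtain ⟨σ, hσ, h⟩ := htrans i j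
    exact ⟨⟨σ, hσ⟩, h⟩⟩
  obtain ⟨τ, hτ⟩ := ex_gc G (seven_dvd G hunsolv htr' hA)
  have h3 : ¬ ∃ g ∈ cj τ G, g.IsThreeCycle := by
    rintro ⟨g, hg, h⟩
    refine no3 G htrans hunsolv hA ⟨τ * g * τ⁻¹, hg, ?_⟩
    rw [Equiv.Perm.IsThreeCycle, Equiv.Perm.cycleType_conj]
    exact h
  rcases classify (cj τ G) hτ (cj_trans τ G htrans) (cj_solv τ G hunsolv) h3 with h | h | ⟨h, h'⟩
  · exact ratExt_of_isConjTo K G gH τ h (rat_gH K _ hα)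
  · exact ratExt_of_isConjTo K G gA1 τ h (rat_gA1 K _ hα)
  · obtain ⟨e⟩ := pgl_case (cj τ G) hτ (cj_trans τ G htrans) h h'
    exact absurd ⟨(cjEquiv τ G).symm.trans e⟩ hPGL
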